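/- Let γ* = ((2 − 2^{(n−1)/n})^{3/2} / (122·n⁷))². For any convex bodies K and C in ℝⁿ, with σ = σ(K,C), |½(K+C)| ≥ √(|K|·|C|)·[1 + (σ−1)²/(32·n·σ²) + (n·γ*/σ^{1/n})·A(K,C)²]. -/

import Mathlib

open MeasureTheory Pointwise

noncomputable section

/-- The homothetic distance `A(K,C)`: with `α = |K|^(−1/n)` and `β = |C|^(−1/n)`,
`A(K,C) = inf{|αK Δ (x+βC)| : x ∈ ℝⁿ}`. -/
def homDist {n : ℕ} (K C : Set (EuclideanSpace ℝ (Fin n))) : ℝ :=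
  sInf {r : ℝ | ∃ x : EuclideanSpace ℝ (Fin n),
    r = (volume (symmDiff (((volume K).toReal ^ (-(1:ℝ)/(n:ℝ))) • K)
          ({x} + ((volume C).toReal ^ (-(1:ℝ)/(n:ℝ))) • C))).toReal}

/-- `σ(K,C) = max{|C|/|K|, |K|/|C|}`. -/
def volRatio {n : ℕ} (K C : Set (EuclideanSpace ℝ (Fin n))) : ℝ :=
  max ((volume C).toReal / (volume K).toReal) ((volume K).toReal / (volume C).toReal)

/-!
For bodies of equal volume, a Brenier map `∇f` from `K` to `C` yields the proximal map
`S = (id + ∇f)⁻¹`, which splits points of `K + C` into a part `S z` in `K` and a part `z - S z` in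
`C`, and whose derivative is symmetric with eigenvalues in `[0, 1]`. The arithmetic-geometric mean
inequality for these eigenvalues gives `|K + C| ≥ 2ⁿ |K|`, with a deficit that controls the
Dirichlet energy of the difference `G z = S z - (z - S z)` of the two parts. A Poincaré inequality
on the convex set `K + C`, the second-order expansion of a functional Brunn–Minkowski inequality,
then makes `G` nearly constant in the mean, so that after a translation the two parts of most
points nearly agree. In isotropic position a trace inequality along rays converts this into a bound
on the volume of `K Δ (x + C)`.

For bodies of volumes `aⁿ ≥ bⁿ`, rescaled to `K` and `C` of unit volume, the identity
`aK + bC = (a - b)K + b(K + C)` and the Brunn–Minkowski inequality reduce to the case of equal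
volumes, and elementary inequalities in `a / b` produce the term in `σ`.
-/

/-! ### Subgradients and proximal maps -/

section Proximal

open Filter Set Topology

variable {E : Type*} [NormedAddCommGroup E] [InnerProductSpace ℝ E] {f : E → ℝ}

/-- `y` is a subgradient of `f` at `x`: the affine function of slope `y` touching `f` at `x` lies
below `f`. -/
def HasSubgradientAt (f : E → ℝ) (y x : E) : Prop :=
  ∀ x', f x + inner ℝ y (x' - x) ≤ f x'

theorem HasSubgradientAt.inner_sub_nonneg {x y x' y' : E} (h : HasSubgradientAt f y x)
    (h' : HasSubgradientAt f y' x') : 0 ≤ inner ℝ (y - y') (x - x') := by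
  have hx' : f x - inner ℝ y (x - x') ≤ f x' := by
    have := h x'
    rwa [← neg_sub x x', inner_neg_right, ← sub_eq_add_neg] at this
  rw [inner_sub_left]
  linarith [h' x]

theorem HasSubgradientAt.eq_gradient [CompleteSpace E] {x y : E} (h : HasSubgradientAt f y x)
    (hf : DifferentiableAt ℝ f x) : y = gradient f x := by
  have hmin : IsLocalMin (fun x' ↦ f x' - inner ℝ y x') x := by
    refine Eventually.of_forall fun x' ↦ ?_
    have := h x'
    rw [inner_sub_right] at this
    linarith
  have hderiv : HasFDerivAt (fun x' ↦ f x' - inner ℝ y x') (fderiv ℝ f x - innerSL ℝ y) x :=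
    hf.hasFDerivAt.sub (innerSL ℝ y).hasFDerivAt
  refine ext_inner_right ℝ fun v ↦ ?_
  have hv := DFunLike.congr_fun (hmin.hasFDerivAt_eq_zero hderiv) v
  simp only [sub_apply, innerSL_apply_apply, zero_apply] at hv
  rw [gradient, InnerProductSpace.toDual_symm_apply]
  linarith

/-- `S` is the proximal map `(id + ∂f)⁻¹` of `f`. -/
def IsProximalMap (f : E → ℝ) (S : E → E) : Prop :=
  ∀ z, HasSubgradientAt f (z - S z) (S z)

theorem exists_forall_add_norm_sub_sq_le [FiniteDimensional ℝ E] {L : NNReal}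
    (hf : LipschitzWith L f) (z : E) :
    ∃ x, ∀ x', f x + ‖x - z‖ ^ 2 / 2 ≤ f x' + ‖x' - z‖ ^ 2 / 2 := by
  have hcont : Continuous fun x ↦ f x + ‖x - z‖ ^ 2 / 2 := by
    have := hf.continuous
    fun_prop
  refine hcont.exists_forall_le' z ?_
  filter_upwards [(isCompact_closedBall z (2 * (L : ℝ))).compl_mem_cocompact] with y hy
  have hfar : 2 * (L : ℝ) < ‖y - z‖ := by simpa [dist_eq_norm] using hy
  have hdrop : f z - f y ≤ L * ‖y - z‖ := by
    rw [← dist_eq_norm, dist_comm]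
    exact (le_abs_self _).trans (hf.dist_le_mul z y)
  simp only [sub_self, norm_zero]
  nlinarith [norm_nonneg (y - z)]

theorem norm_add_smul_sub_sub_sq (x x' z : E) (t : ℝ) :
    ‖x + t • (x' - x) - z‖ ^ 2 =
      ‖x - z‖ ^ 2 - 2 * (t * inner ℝ (z - x) (x' - x)) + t ^ 2 * ‖x' - x‖ ^ 2 := by
  rw [add_sub_right_comm, norm_add_sq_real, inner_smul_right, norm_smul, ← neg_sub z x,
    inner_neg_left, norm_neg, mul_pow, Real.norm_eq_abs, sq_abs]
  ring

theorem hasSubgradientAt_sub_of_forall_add_norm_sub_sq_le (hf : ConvexOn ℝ univ f) {x z : E}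
    (hx : ∀ x', f x + ‖x - z‖ ^ 2 / 2 ≤ f x' + ‖x' - z‖ ^ 2 / 2) :
    HasSubgradientAt f (z - x) x := by
  intro x'
  set gap := f x' - f x - inner ℝ (z - x) (x' - x)
  have hsegment : ∀ t ∈ Ioc (0 : ℝ) 1, 0 ≤ gap + t * (‖x' - x‖ ^ 2 / 2) := by
    rintro t ⟨ht, ht1⟩
    have hmin := hx (x + t • (x' - x))
    have hconv := hf.2 (mem_univ x) (mem_univ x') (sub_nonneg.2 ht1) ht.le (by ring)
    rw [show (1 - t) • x + t • x' = x + t • (x' - x) by module] at hconv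
    rw [norm_add_smul_sub_sub_sq] at hmin
    simp only [smul_eq_mul] at hconv
    refine nonneg_of_mul_nonneg_right (a := t) ?_ ht
    nlinarith
  have hlim : Tendsto (fun t : ℝ ↦ gap + t * (‖x' - x‖ ^ 2 / 2)) (𝓝[>] 0) (𝓝 gap) := by
    exact (Continuous.tendsto' (by fun_prop) 0 gap (by simp)).mono_left nhdsWithin_le_nhds
  have := ge_of_tendsto hlim
    (by filter_upwards [Ioc_mem_nhdsGT zero_lt_one] with t ht using hsegment t ht)
  linarith

theorem exists_isProximalMap [FiniteDimensional ℝ E] {L : NNReal} (hconv : ConvexOn ℝ univ f)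
    (hlip : LipschitzWith L f) : ∃ S, IsProximalMap f S := by
  choose S hS using exists_forall_add_norm_sub_sq_le hlip
  exact ⟨S, fun z ↦ hasSubgradientAt_sub_of_forall_add_norm_sub_sq_le hconv (hS z)⟩

/-- The value `min_x (f x + ‖x - z‖² / 2)` of the Moreau envelope of `f` at `z`, written through a
proximal map `S`. -/
def moreauEnvelope (f : E → ℝ) (S : E → E) (z : E) : ℝ :=
  f (S z) + ‖S z - z‖ ^ 2 / 2

namespace IsProximalMap

variable {S : E → E}

theorem norm_sub_sq_le_inner (hS : IsProximalMap f S) (z z' : E) :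
    ‖S z - S z'‖ ^ 2 ≤ inner ℝ (z - z') (S z - S z') := by
  have hmono := (hS z).inner_sub_nonneg (hS z')
  rw [sub_sub_sub_comm, inner_sub_left, real_inner_self_eq_norm_sq] at hmono
  linarith

theorem apply_add (hS : IsProximalMap f S) {x y : E} (h : HasSubgradientAt f y x) :
    S (x + y) = x := by
  have hmono := (hS (x + y)).inner_sub_nonneg h
  rw [show x + y - S (x + y) - y = -(S (x + y) - x) by abel, inner_neg_left,
    real_inner_self_eq_norm_sq] at hmono
  have hzero : ‖S (x + y) - x‖ ^ 2 = 0 := by nlinarith [sq_nonneg ‖S (x + y) - x‖]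
  exact sub_eq_zero.1 (norm_eq_zero.1 (pow_eq_zero_iff two_ne_zero |>.1 hzero))

theorem norm_sub_le (hS : IsProximalMap f S) (z z' : E) : ‖S z - S z'‖ ≤ ‖z - z'‖ := by
  have hfirm := hS.norm_sub_sq_le_inner z z'
  have hcs := real_inner_le_norm (z - z') (S z - S z')
  by_contra! hlt
  nlinarith [norm_nonneg (S z - S z'), norm_nonneg (z - z')]

theorem lipschitzWith (hS : IsProximalMap f S) : LipschitzWith 1 S :=
  LipschitzWith.of_dist_le_mul fun z z' ↦ by
    simpa [dist_eq_norm] using hS.norm_sub_le z z'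

theorem moreauEnvelope_le (hS : IsProximalMap f S) (z z' : E) :
    moreauEnvelope f S z' ≤
      moreauEnvelope f S z + inner ℝ (z - S z) (z' - z) + ‖z' - z‖ ^ 2 / 2 := by
  have hsub := hS z' (S z)
  have expand_at_Sz' : ‖S z' - z'‖ ^ 2 - 2 * inner ℝ (z' - S z') (S z - S z') +
      ‖S z - S z'‖ ^ 2 = ‖S z - z'‖ ^ 2 := by
    rw [← norm_sub_rev z' (S z'), ← norm_sub_sq_real, norm_sub_rev]
    congr 2
    abel
  have expand_at_z : ‖S z - z'‖ ^ 2 =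
      ‖S z - z‖ ^ 2 + 2 * inner ℝ (z - S z) (z' - z) + ‖z' - z‖ ^ 2 := by
    rw [norm_sub_rev (S z) z, ← norm_add_sq_real, norm_sub_rev]
    congr 2
    abel
  unfold moreauEnvelope
  nlinarith [sq_nonneg ‖S z - S z'‖]

theorem abs_moreauEnvelope_sub_le (hS : IsProximalMap f S) (z z' : E) :
    |moreauEnvelope f S z' - moreauEnvelope f S z - inner ℝ (z - S z) (z' - z)| ≤
      ‖z' - z‖ ^ 2 := by
  have hupper := hS.moreauEnvelope_le z z'
  have hlower := hS.moreauEnvelope_le z' z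
  rw [← neg_sub z' z, inner_neg_right, norm_neg] at hlower
  have hshift : inner ℝ (z' - S z') (z' - z) =
      inner ℝ (z - S z) (z' - z) + ‖z' - z‖ ^ 2 - inner ℝ (S z' - S z) (z' - z) := by
    rw [← real_inner_self_eq_norm_sq, ← inner_add_left, ← inner_sub_left]
    congr 1
    abel
  have hcs : inner ℝ (S z' - S z) (z' - z) ≤ ‖z' - z‖ ^ 2 := by
    rw [sq]
    exact (real_inner_le_norm _ _).trans (by gcongr; exact hS.norm_sub_le z' z)
  rw [abs_le]
  constructor <;> linarith [sq_nonneg ‖z' - z‖]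

theorem hasFDerivAt_moreauEnvelope (hS : IsProximalMap f S) (z : E) :
    HasFDerivAt (moreauEnvelope f S) (innerSL ℝ (z - S z)) z := by
  rw [hasFDerivAt_iff_isLittleO]
  have hO : (fun z' ↦ moreauEnvelope f S z' - moreauEnvelope f S z -
      innerSL ℝ (z - S z) (z' - z)) =O[𝓝 z] fun z' ↦ ‖z' - z‖ ^ 2 := by
    refine Asymptotics.IsBigO.of_bound 1 (Eventually.of_forall fun z' ↦ ?_)
    rw [one_mul, norm_pow, norm_norm, innerSL_apply_apply]
    exact hS.abs_moreauEnvelope_sub_le z z'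
  refine hO.trans_isLittleO ?_
  exact (Asymptotics.isLittleO_norm_pow_id (E' := E) one_lt_two).comp_tendsto
    (Continuous.tendsto' (by fun_prop) z 0 (sub_self z))

-- The derivative of `id - S` is the second derivative of the Moreau envelope.
theorem isSymmetric_of_hasFDerivAt (hS : IsProximalMap f S) {D : E →L[ℝ] E} {z : E}
    (hD : HasFDerivAt S D z) : (D : E →ₗ[ℝ] E).IsSymmetric := by
  intro u v
  have hderiv : HasFDerivAt (fun z ↦ innerSL ℝ (z - S z))
      ((innerSL ℝ).comp (ContinuousLinearMap.id ℝ E - D)) z :=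
    (innerSL ℝ).hasFDerivAt.comp z ((hasFDerivAt_id z).sub hD)
  have hsymm := second_derivative_symmetric_of_eventually (f := moreauEnvelope f S) (x := z)
    (Eventually.of_forall hS.hasFDerivAt_moreauEnvelope) hderiv u v
  simp only [ContinuousLinearMap.comp_apply, sub_apply,
    ContinuousLinearMap.id_apply, innerSL_apply_apply, inner_sub_left] at hsymm
  rw [ContinuousLinearMap.coe_coe]
  linarith [real_inner_comm u v, real_inner_comm u (D v)]

theorem norm_sq_le_inner_of_hasFDerivAt (hS : IsProximalMap f S) {D : E →L[ℝ] E} {z : E}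
    (hD : HasFDerivAt S D z) (u : E) : ‖D u‖ ^ 2 ≤ inner ℝ (D u) u := by
  have hslope := hD.hasLineDerivAt u
  rw [HasLineDerivAt, hasDerivAt_iff_tendsto_slope_zero] at hslope
  simp only [zero_add, zero_smul, add_zero] at hslope
  refine le_of_tendsto_of_tendsto (hslope.norm.pow 2)
    (hslope.inner (𝕜 := ℝ) (tendsto_const_nhds (x := u))) ?_
  filter_upwards [self_mem_nhdsWithin] with t (ht : t ≠ 0)
  have hfirm := hS.norm_sub_sq_le_inner (z + t • u) z
  rw [add_sub_cancel_left, real_inner_smul_left] at hfirm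
  calc ‖t⁻¹ • (S (z + t • u) - S z)‖ ^ 2
      = (t ^ 2)⁻¹ * ‖S (z + t • u) - S z‖ ^ 2 := by
        rw [norm_smul, mul_pow, norm_inv, Real.norm_eq_abs, inv_pow, sq_abs]
    _ ≤ (t ^ 2)⁻¹ * (t * inner ℝ u (S (z + t • u) - S z)) := by gcongr
    _ = inner ℝ (t⁻¹ • (S (z + t • u) - S z)) u := by
        rw [real_inner_smul_left, real_inner_comm]
        field_simp

end IsProximalMap

end Proximal

/-! ### Optimal transport by the gradient of a convex function -/

section ConvexConjugate

open Filter Set Topology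
open scoped BoundedContinuousFunction

theorem isCompact_setOf_lipschitzWith_and_apply_eq_zero {X : Type*} [PseudoMetricSpace X]
    [CompactSpace X] (L : NNReal) (x₀ : X) :
    IsCompact {g : X →ᵇ ℝ | LipschitzWith L g ∧ g x₀ = 0} := by
  have continuous_eval (x : X) : Continuous fun g : X →ᵇ ℝ ↦ g x :=
    (BoundedContinuousFunction.lipschitz_eval_const x).continuous
  refine BoundedContinuousFunction.arzela_ascoli₂
    (Metric.closedBall 0 (L * Metric.diam (univ : Set X))) (isCompact_closedBall _ _) _ ?_ ?_ ?_
  · simp only [lipschitzWith_iff_dist_le_mul, ofPred_and, ofPred_forall]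
    refine IsClosed.inter (isClosed_iInter fun x ↦ isClosed_iInter fun x' ↦ ?_)
      (isClosed_eq (continuous_eval x₀) continuous_const)
    exact isClosed_le ((continuous_eval x).dist (continuous_eval x')) continuous_const
  · rintro g x ⟨hg, hgx₀⟩
    rw [Metric.mem_closedBall, ← hgx₀]
    refine (hg.dist_le_mul x x₀).trans ?_
    gcongr
    exact Metric.dist_le_diam_of_mem isCompact_univ.isBounded (mem_univ x) (mem_univ x₀)
  · exact (LipschitzWith.uniformEquicontinuous _ L fun g ↦ g.2.1).equicontinuous

variable {E : Type*} [NormedAddCommGroup E] [InnerProductSpace ℝ E] {A B : Set E}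

/-- The Legendre transform `x ↦ sup_{y ∈ B} (⟪x, y⟫ - g y)` of a function on `B`. -/
def convexConjugate (g : B →ᵇ ℝ) (x : E) : ℝ :=
  ⨆ y : B, (inner ℝ x (y : E) - g y)

section Compact

variable [CompactSpace B] [Nonempty B]

theorem exists_forall_inner_sub_le (g : B →ᵇ ℝ) (x : E) :
    ∃ y : B, ∀ y' : B, inner ℝ x (y' : E) - g y' ≤ inner ℝ x (y : E) - g y := by
  have hcont : Continuous fun y : B ↦ inner ℝ x (y : E) - g y := by fun_prop
  obtain ⟨y, -, hy⟩ := isCompact_univ.exists_isMaxOn univ_nonempty hcont.continuousOn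
  exact ⟨y, fun y' ↦ hy (mem_univ y')⟩

theorem inner_sub_le_convexConjugate (g : B →ᵇ ℝ) (x : E) (y : B) :
    inner ℝ x (y : E) - g y ≤ convexConjugate g x := by
  obtain ⟨z, hz⟩ := exists_forall_inner_sub_le g x
  exact le_ciSup (f := fun y : B ↦ inner ℝ x (y : E) - g y) ⟨_, forall_mem_range.2 hz⟩ y

theorem exists_convexConjugate_eq (g : B →ᵇ ℝ) (x : E) :
    ∃ y : B, convexConjugate g x = inner ℝ x (y : E) - g y := by
  obtain ⟨y, hy⟩ := exists_forall_inner_sub_le g x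
  exact ⟨y, le_antisymm (ciSup_le hy) (inner_sub_le_convexConjugate g x y)⟩

theorem convexOn_convexConjugate (g : B →ᵇ ℝ) : ConvexOn ℝ univ (convexConjugate g) := by
  refine ⟨convex_univ, fun x _ x' _ a b ha hb hab ↦ ?_⟩
  obtain ⟨y, hy⟩ := exists_convexConjugate_eq g (a • x + b • x')
  calc convexConjugate g (a • x + b • x')
      = a * (inner ℝ x (y : E) - g y) + b * (inner ℝ x' (y : E) - g y) := by
        rw [hy, inner_add_left, real_inner_smul_left, real_inner_smul_left]
        linear_combination g y * hab
    _ ≤ a * convexConjugate g x + b * convexConjugate g x' := by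
        gcongr <;> exact inner_sub_le_convexConjugate ..

theorem exists_forall_lipschitzWith_convexConjugate :
    ∃ L : NNReal, ∀ g : B →ᵇ ℝ, LipschitzWith L (convexConjugate g) := by
  obtain ⟨L, hL⟩ := (isCompact_iff_compactSpace.2 ‹CompactSpace B›).isBounded.exists_norm_le
  refine ⟨L.toNNReal, fun g ↦ LipschitzWith.of_le_add_mul _ fun x x' ↦ ?_⟩
  obtain ⟨y, hy⟩ := exists_convexConjugate_eq g x
  have hle := inner_sub_le_convexConjugate g x' y
  have hcs : inner ℝ (x - x') (y : E) ≤ L.toNNReal * dist x x' := by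
    rw [mul_comm, dist_eq_norm]
    refine (real_inner_le_norm _ _).trans ?_
    gcongr
    exact (hL y y.2).trans (Real.le_coe_toNNReal L)
  rw [inner_sub_left] at hcs
  linarith

theorem continuous_convexConjugate (g : B →ᵇ ℝ) : Continuous (convexConjugate g) :=
  exists_forall_lipschitzWith_convexConjugate.elim fun _ hL ↦ (hL g).continuous

theorem convexConjugate_le_add_dist (g g' : B →ᵇ ℝ) (x : E) :
    convexConjugate g x ≤ convexConjugate g' x + dist g g' := by
  obtain ⟨y, hy⟩ := exists_convexConjugate_eq g x
  have hle := inner_sub_le_convexConjugate g' x y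
  have hdist := BoundedContinuousFunction.dist_coe_le_dist (f := g) (g := g') y
  rw [Real.dist_eq] at hdist
  linarith [(abs_sub_le_iff.1 hdist).2]

theorem dist_convexConjugate_le (g g' : B →ᵇ ℝ) (x : E) :
    dist (convexConjugate g x) (convexConjugate g' x) ≤ dist g g' := by
  have h := convexConjugate_le_add_dist g g' x
  have h' := convexConjugate_le_add_dist g' g x
  rw [dist_comm] at h'
  exact abs_sub_le_iff.2 ⟨by linarith, by linarith⟩

theorem convexConjugate_add_const (g : B →ᵇ ℝ) (c : ℝ) (x : E) :
    convexConjugate (g + BoundedContinuousFunction.const B c) x = convexConjugate g x - c := by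
  apply le_antisymm
  · obtain ⟨y, hy⟩ := exists_convexConjugate_eq (g + BoundedContinuousFunction.const B c) x
    rw [BoundedContinuousFunction.add_apply, BoundedContinuousFunction.const_apply] at hy
    linarith [inner_sub_le_convexConjugate g x y]
  · obtain ⟨y, hy⟩ := exists_convexConjugate_eq g x
    have hle := inner_sub_le_convexConjugate (g + BoundedContinuousFunction.const B c) x y
    rw [BoundedContinuousFunction.add_apply, BoundedContinuousFunction.const_apply] at hle
    linarith

theorem hasSubgradientAt_convexConjugate {g : B →ᵇ ℝ} {x : E} {y : B}
    (h : convexConjugate g x = inner ℝ x (y : E) - g y) :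
    HasSubgradientAt (convexConjugate g) y x := by
  intro x'
  have hle := inner_sub_le_convexConjugate g x' y
  rw [inner_sub_right, real_inner_comm x', real_inner_comm x]
  linarith

theorem tendsto_maximizer_of_convexConjugate_add_smul (g u : B →ᵇ ℝ) (x : E) {y : B} {w : ℝ → B}
    (hy : ∀ z : B, convexConjugate g x = inner ℝ x (z : E) - g z → z = y)
    (hw : ∀ ε, convexConjugate (g + ε • u) x = inner ℝ x (w ε : E) - (g + ε • u) (w ε)) :
    Tendsto w (𝓝 0) (𝓝 y) := by
  set φ : B → ℝ := fun z ↦ inner ℝ x (z : E) - g z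
  have hφ : Continuous φ := by fun_prop
  have hlim : Tendsto (φ ∘ w) (𝓝 0) (𝓝 (convexConjugate g x)) := by
    rw [tendsto_iff_dist_tendsto_zero]
    refine squeeze_zero (fun _ ↦ dist_nonneg) (g := fun ε : ℝ ↦ |ε| * (2 * ‖u‖)) (fun ε ↦ ?_)
      (Continuous.tendsto' (by fun_prop) 0 0 (by simp))
    have hconj := dist_convexConjugate_le (g + ε • u) g x
    rw [dist_eq_norm (g + ε • u), add_sub_cancel_left, norm_smul, hw, Real.norm_eq_abs,
      Real.dist_eq] at hconj
    have hu : |ε * u (w ε)| ≤ |ε| * ‖u‖ := by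
      rw [abs_mul]
      exact mul_le_mul_of_nonneg_left (u.norm_coe_le_norm (w ε)) (abs_nonneg ε)
    have hsplit : φ (w ε) - convexConjugate g x =
        inner ℝ x (w ε : E) - (g + ε • u) (w ε) - convexConjugate g x + ε * u (w ε) := by
      simp only [φ, BoundedContinuousFunction.add_apply, BoundedContinuousFunction.smul_apply,
        smul_eq_mul]
      ring
    rw [Function.comp_apply, Real.dist_eq, hsplit]
    exact (abs_add_le _ _).trans (by linarith)
  refine tendsto_nhds_of_unique_mapClusterPt fun p hp ↦ hy p ?_
  have hcluster : ClusterPt (φ p) (𝓝 (convexConjugate g x)) :=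
    ClusterPt.mono (hp.continuousAt_comp hφ.continuousAt) hlim
  exact (eq_of_nhds_neBot hcluster).symm

-- An envelope theorem: the conjugate moves like its unique maximizer.
theorem hasDerivAt_convexConjugate_add_smul [CompleteSpace E] (g u : B →ᵇ ℝ) {x : E}
    (hx : DifferentiableAt ℝ (convexConjugate g) x) {y : B}
    (hy : (y : E) = gradient (convexConjugate g) x) :
    HasDerivAt (fun ε : ℝ ↦ convexConjugate (g + ε • u) x) (-u y) 0 := by
  have hunique (z : B) (hz : convexConjugate g x = inner ℝ x (z : E) - g z) : z = y :=
    Subtype.ext (hy ▸ (hasSubgradientAt_convexConjugate hz).eq_gradient hx)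
  obtain ⟨z, hz⟩ := exists_convexConjugate_eq g x
  obtain rfl := hunique z hz
  choose w hw using fun ε : ℝ ↦ exists_convexConjugate_eq (g + ε • u) x
  have hwlim := tendsto_maximizer_of_convexConjugate_add_smul g u x hunique hw
  rw [hasDerivAt_iff_isLittleO]
  have hsmall : (fun ε : ℝ ↦ u z - u (w ε)) =o[𝓝 0] fun _ ↦ (1 : ℝ) := by
    rw [Asymptotics.isLittleO_one_iff]
    simpa using (tendsto_const_nhds (x := u z)).sub ((u.continuous.tendsto z).comp hwlim)
  refine (Asymptotics.IsBigO.of_bound 1 (Eventually.of_forall fun ε ↦ ?_)).trans_isLittleO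
    (((Asymptotics.isBigO_refl (fun ε : ℝ ↦ ε) (𝓝 0)).mul_isLittleO hsmall).congr_right (by simp))
  have hlower := inner_sub_le_convexConjugate (g + ε • u) x z
  have hupper := inner_sub_le_convexConjugate g x (w ε)
  have hwε := hw ε
  simp only [BoundedContinuousFunction.add_apply, BoundedContinuousFunction.smul_apply,
    smul_eq_mul] at hlower hwε
  simp only [zero_smul, add_zero, sub_zero, smul_eq_mul, one_mul, Real.norm_eq_abs]
  apply abs_le_abs_of_nonneg <;> linarith

/-- The restriction to `A` of the Legendre transform of a function on `B`. -/
def convexConjugateOn (A : Set E) [CompactSpace A] (g : B →ᵇ ℝ) : A →ᵇ ℝ :=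
  BoundedContinuousFunction.mkOfCompact
    ⟨fun x ↦ convexConjugate g x, (continuous_convexConjugate g).comp continuous_subtype_val⟩

variable [CompactSpace A]

theorem convexConjugateOn_apply (g : B →ᵇ ℝ) (x : A) :
    convexConjugateOn A g x = convexConjugate g x :=
  rfl

theorem lipschitzWith_convexConjugateOn : LipschitzWith 1 (convexConjugateOn A (B := B)) :=
  LipschitzWith.of_dist_le_mul fun g g' ↦ by
    rw [NNReal.coe_one, one_mul, BoundedContinuousFunction.dist_le dist_nonneg]
    exact fun x ↦ dist_convexConjugate_le g g' x

variable [Nonempty A]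

theorem convexConjugateOn_convexConjugateOn_le (g : B →ᵇ ℝ) (y : B) :
    convexConjugateOn B (convexConjugateOn A g) y ≤ g y := by
  obtain ⟨x, hx⟩ := exists_convexConjugate_eq (convexConjugateOn A g) (y : E)
  have hle := inner_sub_le_convexConjugate g (x : E) y
  rw [convexConjugateOn_apply, hx, convexConjugateOn_apply, real_inner_comm]
  linarith

end Compact

end ConvexConjugate

section Brenier

open Filter Set Topology
open scoped BoundedContinuousFunction

theorem continuous_boundedContinuousFunction_integral {X : Type*} [TopologicalSpace X]
    [MeasurableSpace X] [OpensMeasurableSpace X] (μ : Measure X) [IsProbabilityMeasure μ] :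
    Continuous fun g : X →ᵇ ℝ ↦ ∫ x, g x ∂μ := by
  refine LipschitzWith.continuous (K := 1) (LipschitzWith.of_dist_le_mul fun g g' ↦ ?_)
  rw [NNReal.coe_one, one_mul, dist_eq_norm, dist_eq_norm,
    ← integral_sub (g.integrable μ) (g'.integrable μ)]
  exact (g - g').norm_integral_le_norm μ

theorem measurable_gradient {E : Type*} [NormedAddCommGroup E] [InnerProductSpace ℝ E]
    [CompleteSpace E] [MeasurableSpace E] [BorelSpace E] (f : E → ℝ) : Measurable (gradient f) :=
  (LinearIsometryEquiv.continuous _).measurable.comp (measurable_fderiv ℝ f)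

variable {E : Type*} [NormedAddCommGroup E] [InnerProductSpace ℝ E] [MeasurableSpace E]
  [BorelSpace E] {A B : Set E} [CompactSpace A] [CompactSpace B] [Nonempty B]

/-- The dual Kantorovich functional `g ↦ ∫ g* dμ + ∫ g dν` for the cost `-⟪x, y⟫`. -/
def kantorovichDual (μ : Measure A) (ν : Measure B) (g : B →ᵇ ℝ) : ℝ :=
  ∫ x, convexConjugateOn A g x ∂μ + ∫ y, g y ∂ν

variable (μ : Measure A) (ν : Measure B) [IsProbabilityMeasure μ] [IsProbabilityMeasure ν]

theorem continuous_kantorovichDual : Continuous (kantorovichDual μ ν) :=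
  ((continuous_boundedContinuousFunction_integral μ).comp
    lipschitzWith_convexConjugateOn.continuous).add
    (continuous_boundedContinuousFunction_integral ν)

theorem kantorovichDual_add_const (g : B →ᵇ ℝ) (c : ℝ) :
    kantorovichDual μ ν (g + BoundedContinuousFunction.const B c) = kantorovichDual μ ν g := by
  have hconj : ∫ x, convexConjugateOn A (g + BoundedContinuousFunction.const B c) x ∂μ =
      ∫ x, convexConjugateOn A g x ∂μ - c := by
    simp only [convexConjugateOn_apply, convexConjugate_add_const]
    rw [integral_sub (f := fun x : A ↦ convexConjugate g x) ((convexConjugateOn A g).integrable μ)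
      (integrable_const _)]
    simp
  have hν : ∫ y, (g + BoundedContinuousFunction.const B c) y ∂ν = ∫ y, g y ∂ν + c := by
    simp only [BoundedContinuousFunction.add_apply, BoundedContinuousFunction.const_apply]
    rw [integral_add (g.integrable ν) (integrable_const _)]
    simp
  rw [kantorovichDual, hconj, hν, kantorovichDual]
  ring

theorem kantorovichDual_biconjugate_le [Nonempty A] (g : B →ᵇ ℝ) :
    kantorovichDual μ ν (convexConjugateOn B (convexConjugateOn A g)) ≤ kantorovichDual μ ν g :=
  add_le_add
    (integral_mono (BoundedContinuousFunction.integrable μ _)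
      (BoundedContinuousFunction.integrable μ _)
      (convexConjugateOn_convexConjugateOn_le (convexConjugateOn A g)))
    (integral_mono (BoundedContinuousFunction.integrable ν _)
      (BoundedContinuousFunction.integrable ν _) (convexConjugateOn_convexConjugateOn_le g))

-- Biconjugation and subtraction of constants bring any competitor into a fixed compact family.
theorem exists_forall_kantorovichDual_le [Nonempty A] :
    ∃ g : B →ᵇ ℝ, ∀ g', kantorovichDual μ ν g ≤ kantorovichDual μ ν g' := by
  obtain ⟨L, hL⟩ := exists_forall_lipschitzWith_convexConjugate (B := A)
  obtain ⟨y₀⟩ := ‹Nonempty B›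
  set F : Set (B →ᵇ ℝ) := {g | LipschitzWith L g ∧ g y₀ = 0}
  let biconjugate (g : B →ᵇ ℝ) : B →ᵇ ℝ := convexConjugateOn B (convexConjugateOn A g)
  let normalize (g : B →ᵇ ℝ) : B →ᵇ ℝ :=
    biconjugate g + BoundedContinuousFunction.const B (-(biconjugate g y₀))
  have hnormalize (g : B →ᵇ ℝ) : normalize g ∈ F := by
    refine ⟨LipschitzWith.of_dist_le_mul fun y y' ↦ ?_, by simp [normalize]⟩
    simpa [normalize, biconjugate, convexConjugateOn_apply, dist_add_right, Subtype.dist_eq] using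
      (hL (convexConjugateOn A g)).dist_le_mul y y'
  obtain ⟨g, -, hg⟩ :=
    (isCompact_setOf_lipschitzWith_and_apply_eq_zero L y₀).exists_isMinOn
      ⟨normalize 0, hnormalize 0⟩ (continuous_kantorovichDual μ ν).continuousOn
  refine ⟨g, fun g' ↦ (hg (hnormalize g')).trans ?_⟩
  rw [kantorovichDual_add_const]
  exact kantorovichDual_biconjugate_le μ ν g'

variable [FiniteDimensional ℝ E]

theorem ae_differentiableAt_convexConjugate (g : B →ᵇ ℝ) :
    ∀ᵐ x : E, DifferentiableAt ℝ (convexConjugate g) x :=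
  exists_forall_lipschitzWith_convexConjugate.elim fun _ hL ↦ (hL g).ae_differentiableAt

theorem hasDerivAt_kantorovichDual (hμ : μ.map (Subtype.val : A → E) ≪ volume)
    (g : B →ᵇ ℝ) (u : E →ᵇ ℝ) :
    HasDerivAt (fun ε : ℝ ↦ kantorovichDual μ ν (g + ε • u.domRestrict B))
      (-∫ x : A, u (gradient (convexConjugate g) x) ∂μ + ∫ y : B, u y ∂ν) 0 := by
  set v : B →ᵇ ℝ := u.domRestrict B
  have hderiv_conj : HasDerivAt (fun ε : ℝ ↦ ∫ x : A, convexConjugate (g + ε • v) x ∂μ)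
      (∫ x : A, -u (gradient (convexConjugate g) x) ∂μ) 0 := by
    refine (hasDerivAt_integral_of_dominated_loc_of_lip (bound := fun _ ↦ ‖v‖) univ_mem
      (Eventually.of_forall fun ε ↦ ?_) ?_ ?_ (Eventually.of_forall fun x ↦ ?_)
      (integrable_const _) ?_).2
    · exact (convexConjugateOn A (g + ε • v)).continuous.aestronglyMeasurable
    · exact (convexConjugateOn A (g + (0 : ℝ) • v)).integrable μ
    · exact (u.continuous.measurable.comp
        ((measurable_gradient _).comp measurable_subtype_coe)).neg.aestronglyMeasurable
    · refine LipschitzOnWith.of_dist_le_mul fun ε _ ε' _ ↦ ?_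
      refine (dist_convexConjugate_le _ _ _).trans_eq ?_
      have hsub : ε • v - ε' • v = (ε - ε') • v := (sub_smul ε ε' v).symm
      rw [dist_add_left, dist_eq_norm, hsub, norm_smul, Real.coe_nnabs,
        abs_of_nonneg (norm_nonneg v), mul_comm, dist_eq_norm]
    · filter_upwards [ae_of_ae_map measurable_subtype_coe.aemeasurable
        (hμ.ae_le (ae_differentiableAt_convexConjugate g))] with x hx
      obtain ⟨y, hy⟩ := exists_convexConjugate_eq g (x : E)
      have hgrad := (hasSubgradientAt_convexConjugate hy).eq_gradient hx
      simpa [v, ← hgrad] using hasDerivAt_convexConjugate_add_smul g v hx hgrad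
  have hderiv_ν : HasDerivAt (fun ε : ℝ ↦ ∫ y, (g + ε • v) y ∂ν) (∫ y, v y ∂ν) 0 := by
    have haffine (ε : ℝ) : ∫ y, (g + ε • v) y ∂ν = ∫ y, g y ∂ν + ε * ∫ y, v y ∂ν := by
      rw [← integral_const_mul, ← integral_add (g.integrable ν) ((v.integrable ν).const_mul ε)]
      rfl
    rw [funext haffine]
    simpa using ((hasDerivAt_id (0 : ℝ)).mul_const (∫ y, v y ∂ν)).const_add (∫ y, g y ∂ν)
  rw [← integral_neg]
  exact hderiv_conj.add hderiv_ν

theorem map_gradient_convexConjugate_eq (hμ : μ.map (Subtype.val : A → E) ≪ volume)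
    {g : B →ᵇ ℝ} (hg : ∀ g', kantorovichDual μ ν g ≤ kantorovichDual μ ν g') :
    (μ.map Subtype.val).map (gradient (convexConjugate g)) = ν.map Subtype.val := by
  have hmeas := measurable_gradient (convexConjugate g)
  have := Measure.isProbabilityMeasure_map (μ := μ) (f := Subtype.val (p := (· ∈ A)))
    measurable_subtype_coe.aemeasurable
  have := Measure.isProbabilityMeasure_map (μ := μ.map Subtype.val) hmeas.aemeasurable
  have := Measure.isProbabilityMeasure_map (μ := ν) (f := Subtype.val (p := (· ∈ B)))
    measurable_subtype_coe.aemeasurable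
  refine ext_of_forall_integral_eq_of_IsFiniteMeasure fun u ↦ ?_
  rw [integral_map hmeas.aemeasurable u.continuous.aestronglyMeasurable,
    integral_map (f := fun x ↦ u (gradient (convexConjugate g) x))
      measurable_subtype_coe.aemeasurable
      (u.continuous.measurable.comp hmeas).aestronglyMeasurable,
    integral_map measurable_subtype_coe.aemeasurable u.continuous.aestronglyMeasurable]
  have hmin : IsLocalMin (fun ε : ℝ ↦ kantorovichDual μ ν (g + ε • u.domRestrict B)) 0 :=
    Eventually.of_forall fun ε ↦ by simpa using hg (g + ε • u.domRestrict B)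
  linarith [hmin.hasDerivAt_eq_zero (hasDerivAt_kantorovichDual μ ν hμ g u)]

end Brenier

section BrenierMap

open Set

variable {E : Type*} [NormedAddCommGroup E] [InnerProductSpace ℝ E] [FiniteDimensional ℝ E]
  [MeasurableSpace E] [BorelSpace E]

theorem exists_isProbabilityMeasure_map_val_eq {X : Type*} [MeasurableSpace X] {A : Set X}
    (hA : MeasurableSet A) (μ : Measure X) [IsProbabilityMeasure μ] (hμA : μ Aᶜ = 0) :
    ∃ μ' : Measure A, IsProbabilityMeasure μ' ∧ μ'.map Subtype.val = μ := by
  have hmap : (μ.comap (Subtype.val : A → X)).map Subtype.val = μ := by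
    rw [map_comap_subtype_coe hA, Measure.restrict_eq_self_of_ae_mem hμA]
  refine ⟨μ.comap Subtype.val, ⟨?_⟩, hmap⟩
  rw [← preimage_univ, ← Measure.map_apply measurable_subtype_coe .univ, hmap, measure_univ]

theorem exists_convexOn_map_gradient_eq {A B : Set E} (hA : IsCompact A) (hB : IsCompact B)
    (μ ν : Measure E) [IsProbabilityMeasure μ] [IsProbabilityMeasure ν] (hμA : μ Aᶜ = 0)
    (hνB : ν Bᶜ = 0) (hμ : μ ≪ volume) :
    ∃ (f : E → ℝ) (L : NNReal), ConvexOn ℝ univ f ∧ LipschitzWith L f ∧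
      (∀ x, ∃ y ∈ B, HasSubgradientAt f y x) ∧ μ.map (gradient f) = ν := by
  have := isCompact_iff_compactSpace.1 hA
  have := isCompact_iff_compactSpace.1 hB
  obtain ⟨μ', _, hμ'⟩ := exists_isProbabilityMeasure_map_val_eq hA.measurableSet μ hμA
  obtain ⟨ν', _, hν'⟩ := exists_isProbabilityMeasure_map_val_eq hB.measurableSet ν hνB
  have := nonempty_of_isProbabilityMeasure μ'
  have := nonempty_of_isProbabilityMeasure ν'
  obtain ⟨g, hg⟩ := exists_forall_kantorovichDual_le μ' ν'
  obtain ⟨L, hL⟩ := exists_forall_lipschitzWith_convexConjugate (B := B)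
  refine ⟨convexConjugate g, L, convexOn_convexConjugate g, hL g, fun x ↦ ?_, ?_⟩
  · obtain ⟨y, hy⟩ := exists_convexConjugate_eq g x
    exact ⟨y, y.2, hasSubgradientAt_convexConjugate hy⟩
  · have hmap := map_gradient_convexConjugate_eq μ' ν' (hμ' ▸ hμ) hg
    rwa [hμ', hν'] at hmap

end BrenierMap

/-! ### Determinants of operators between `0` and `1` -/

section Determinant

open Set

theorem det_eq_prod_of_apply_eq_smul {R M ι : Type*} [CommRing R] [AddCommGroup M] [Module R M]
    [Fintype ι] (b : Module.Basis ι R M) {T : M →ₗ[R] M} {l : ι → R}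
    (h : ∀ i, T (b i) = l i • b i) : LinearMap.det T = ∏ i, l i := by
  classical
  have hdiag : LinearMap.toMatrix b b T = Matrix.diagonal l := by
    ext i j
    rcases eq_or_ne i j with rfl | hij
    · simp [LinearMap.toMatrix_apply, h]
    · simp [LinearMap.toMatrix_apply, h, hij]
  rw [← LinearMap.det_toMatrix b, hdiag, Matrix.det_diagonal]

variable {E : Type*} [NormedAddCommGroup E] [InnerProductSpace ℝ E]

theorem sum_norm_sq_apply_eq_of_isSymmetric {ι κ : Type*} [Fintype ι] [Fintype κ]
    (b : OrthonormalBasis ι ℝ E) (e : OrthonormalBasis κ ℝ E) {T : E →L[ℝ] E}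
    (hT : T.IsSymmetric) : ∑ j, ‖T (b j)‖ ^ 2 = ∑ i, ‖T (e i)‖ ^ 2 := by
  calc ∑ j, ‖T (b j)‖ ^ 2 = ∑ j, ∑ i, inner ℝ (e i) (T (b j)) ^ 2 :=
        Finset.sum_congr rfl fun j _ ↦ (e.sum_sq_inner_right _).symm
    _ = ∑ i, ∑ j, inner ℝ (T (e i)) (b j) ^ 2 := by
        rw [Finset.sum_comm]
        exact Finset.sum_congr rfl fun i _ ↦ Finset.sum_congr rfl fun j _ ↦ by rw [hT.apply_clm]
    _ = ∑ i, ‖T (e i)‖ ^ 2 := Finset.sum_congr rfl fun i _ ↦ b.sum_sq_inner_left _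

variable [FiniteDimensional ℝ E]

/-- The square of the Hilbert–Schmidt norm of an operator. -/
def hilbertSchmidtSq (T : E →L[ℝ] E) : ℝ :=
  ∑ j, ‖T (stdOrthonormalBasis ℝ E j)‖ ^ 2

theorem hilbertSchmidtSq_nonneg (T : E →L[ℝ] E) : 0 ≤ hilbertSchmidtSq T :=
  Finset.sum_nonneg fun _ _ ↦ sq_nonneg _

theorem hilbertSchmidtSq_le_finrank {T : E →L[ℝ] E} (hT : ‖T‖ ≤ 1) :
    hilbertSchmidtSq T ≤ Module.finrank ℝ E := by
  have hcol (j) : ‖T (stdOrthonormalBasis ℝ E j)‖ ^ 2 ≤ 1 :=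
    pow_le_one₀ (norm_nonneg _) ((T.le_of_opNorm_le hT _).trans_eq (by simp))
  exact (Finset.sum_le_sum fun j _ ↦ hcol j).trans_eq (by simp)

theorem norm_sq_le_hilbertSchmidtSq (T : E →L[ℝ] E) : ‖T‖ ^ 2 ≤ hilbertSchmidtSq T := by
  set b := stdOrthonormalBasis ℝ E
  suffices hnorm : ‖T‖ ≤ √(hilbertSchmidtSq T) from
    (pow_le_pow_left₀ (norm_nonneg _) hnorm 2).trans_eq (Real.sq_sqrt (hilbertSchmidtSq_nonneg T))
  refine T.opNorm_le_bound (Real.sqrt_nonneg _) fun v ↦ ?_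
  have hcauchy : (∑ j, ‖inner ℝ (b j) v‖ * ‖T (b j)‖) ^ 2 ≤ ‖v‖ ^ 2 * hilbertSchmidtSq T := by
    rw [← b.sum_sq_norm_inner_right v]
    exact Finset.sum_mul_sq_le_sq_mul_sq _ _ _
  calc ‖T v‖ = ‖∑ j, inner ℝ (b j) v • T (b j)‖ := by
        conv_lhs => rw [← b.sum_repr' v]
        simp only [map_sum, map_smul]
    _ ≤ ∑ j, ‖inner ℝ (b j) v‖ * ‖T (b j)‖ := by
        simp only [← norm_smul]
        exact norm_sum_le _ _
    _ ≤ √(‖v‖ ^ 2 * hilbertSchmidtSq T) := Real.le_sqrt_of_sq_le hcauchy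
    _ = √(hilbertSchmidtSq T) * ‖v‖ := by
        rw [Real.sqrt_mul (sq_nonneg _), Real.sqrt_sq (norm_nonneg _), mul_comm]

variable {D : E →L[ℝ] E}

theorem exists_det_eq_prod_of_mem_Icc (hD : D ∈ Icc 0 1) :
    ∃ l : Fin (Module.finrank ℝ E) → ℝ, (∀ i, l i ∈ Icc 0 1) ∧ D.det = ∏ i, l i ∧
      (1 - D).det = ∏ i, (1 - l i) ∧
      hilbertSchmidtSq ((2 : ℝ) • D - 1) = ∑ i, (2 * l i - 1) ^ 2 := by
  have hpos : D.IsPositive := (ContinuousLinearMap.nonneg_iff_isPositive D).1 hD.1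
  have hsub : (1 - D).IsPositive := hD.2
  set e := hpos.isSymmetric.eigenvectorBasis rfl
  set l := hpos.isSymmetric.eigenvalues rfl
  have hDe (i) : D (e i) = l i • e i := hpos.isSymmetric.apply_eigenvectorBasis rfl i
  have hsubDe (i) : (1 - D) (e i) = (1 - l i) • e i := by
    rw [sub_apply, hDe, one_apply_eq_self, sub_smul, one_smul]
  refine ⟨l, fun i ↦ ⟨?_, ?_⟩, ?_, ?_, ?_⟩
  · simpa [hDe, inner_smul_left] using hpos.inner_nonneg_left (e i)
  · simpa [hsubDe, inner_smul_left] using hsub.inner_nonneg_left (e i)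
  · exact det_eq_prod_of_apply_eq_smul e.toBasis (by simpa using hDe)
  · exact det_eq_prod_of_apply_eq_smul e.toBasis (by simpa using hsubDe)
  · have hsymm : ((2 : ℝ) • D - 1).IsSymmetric := fun u v ↦ by
      simp [inner_sub_left, inner_sub_right, inner_smul_left, inner_smul_right,
        hpos.isSymmetric.apply_clm]
    rw [hilbertSchmidtSq, sum_norm_sq_apply_eq_of_isSymmetric _ e hsymm]
    refine Finset.sum_congr rfl fun i _ ↦ ?_
    have heig : ((2 : ℝ) • D - 1) (e i) = (2 * l i - 1) • e i := by
      rw [sub_apply, smul_apply, hDe, one_apply_eq_self]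
      module
    rw [heig, norm_smul, e.norm_eq_one, mul_one, Real.norm_eq_abs, sq_abs]

theorem det_mem_Icc (hD : D ∈ Icc 0 1) : D.det ∈ Icc 0 1 := by
  obtain ⟨l, hl, hdet, -⟩ := exists_det_eq_prod_of_mem_Icc hD
  rw [hdet]
  exact ⟨Finset.prod_nonneg fun i _ ↦ (hl i).1,
    Finset.prod_le_one (fun i _ ↦ (hl i).1) fun i _ ↦ (hl i).2⟩

section Scalar

variable {ι : Type*} [Fintype ι] [Nonempty ι] {l : ι → ℝ}

theorem prod_rpow_add_prod_one_sub_rpow_le_one (hl : ∀ i, l i ∈ Icc 0 1) :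
    (∏ i, l i) ^ (Fintype.card ι : ℝ)⁻¹ + (∏ i, (1 - l i)) ^ (Fintype.card ι : ℝ)⁻¹ ≤ 1 := by
  have hamgm {w : ι → ℝ} (hw : ∀ i, 0 ≤ w i) :
      (∏ i, w i) ^ (Fintype.card ι : ℝ)⁻¹ ≤ (Fintype.card ι : ℝ)⁻¹ * ∑ i, w i := by
    rw [← Real.finsetProd_rpow _ _ fun i _ ↦ hw i, Finset.mul_sum]
    exact Real.geom_mean_le_arith_mean_weighted Finset.univ _ w (fun _ _ ↦ by positivity)
      (by simp) fun i _ ↦ hw i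
  calc _ ≤ (Fintype.card ι : ℝ)⁻¹ * ∑ i, l i + (Fintype.card ι : ℝ)⁻¹ * ∑ i, (1 - l i) :=
        add_le_add (hamgm fun i ↦ (hl i).1) (hamgm fun i ↦ sub_nonneg.2 (hl i).2)
    _ = 1 := by
        rw [← mul_add, ← Finset.sum_add_distrib]
        simp

theorem prod_one_sub_le_one_sub_sum_div_card {m : ι → ℝ} (hm : ∀ i, m i ∈ Icc 0 1) :
    ∏ i, (1 - m i) ≤ 1 - (∑ i, m i) / Fintype.card ι := by
  obtain ⟨k, -, hk⟩ := Finset.exists_max_image Finset.univ m Finset.univ_nonempty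
  have hmean : (∑ i, m i) / Fintype.card ι ≤ m k := by
    rw [div_le_iff₀' (by simp [Fintype.card_pos]), ← nsmul_eq_mul]
    exact Finset.sum_le_card_nsmul _ _ _ hk
  have hprod : ∏ i, (1 - m i) ≤ 1 - m k :=
    (Finset.prod_le_prod_of_subset_of_le_one (Finset.subset_univ {k})
      (fun i _ ↦ sub_nonneg.2 (hm i).2) fun i _ _ ↦ sub_le_self 1 (hm i).1).trans_eq (by simp)
  linarith

theorem two_pow_card_mul_prod_le (hl : ∀ i, l i ∈ Icc 0 1) (h : ∏ i, l i ≤ ∏ i, (1 - l i)) :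
    2 ^ Fintype.card ι * ∏ i, l i ≤ 1 - (∑ i, (2 * l i - 1) ^ 2) / (2 * Fintype.card ι) := by
  have hprod : 0 ≤ ∏ i, l i := Finset.prod_nonneg fun i _ ↦ (hl i).1
  have hm (i) : (2 * l i - 1) ^ 2 ∈ Icc (0 : ℝ) 1 :=
    ⟨sq_nonneg _, by nlinarith [(hl i).1, (hl i).2]⟩
  have hbound := prod_one_sub_le_one_sub_sum_div_card hm
  set d : ℝ := (∑ i, (2 * l i - 1) ^ 2) / Fintype.card ι
  have hd : 0 ≤ d := div_nonneg (Finset.sum_nonneg fun i _ ↦ (hm i).1) (by positivity)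
  have hd1 : d ≤ 1 := by
    linarith [Finset.prod_nonneg fun i (_ : i ∈ Finset.univ) ↦ sub_nonneg.2 (hm i).2]
  have hsq : (2 ^ Fintype.card ι * ∏ i, l i) ^ 2 ≤ 1 - d := by
    refine le_trans ?_ hbound
    calc (2 ^ Fintype.card ι * ∏ i, l i) ^ 2
        ≤ 4 ^ Fintype.card ι * ((∏ i, l i) * ∏ i, (1 - l i)) := by
          rw [mul_pow, ← pow_mul, mul_comm _ 2, pow_mul, sq (∏ i, l i)]
          norm_num
          gcongr
      _ = ∏ i, (1 - (2 * l i - 1) ^ 2) := by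
          rw [← Finset.card_univ, ← Finset.prod_const, ← Finset.prod_mul_distrib,
            ← Finset.prod_mul_distrib]
          exact Finset.prod_congr rfl fun i _ ↦ by ring
  rw [mul_comm 2 (Fintype.card ι : ℝ), ← div_div]
  exact le_of_sq_le_sq (hsq.trans (by nlinarith)) (by linarith)

end Scalar

variable [Nontrivial E]

theorem add_mul_det_rpow_le {a b : ℝ} (ha : 0 ≤ a) (hb : 0 ≤ b) (hD : D ∈ Icc 0 1)
    (h : b * D.det ≤ a * (1 - D).det) :
    (a ^ (Module.finrank ℝ E : ℝ)⁻¹ + b ^ (Module.finrank ℝ E : ℝ)⁻¹) *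
      D.det ^ (Module.finrank ℝ E : ℝ)⁻¹ ≤ a ^ (Module.finrank ℝ E : ℝ)⁻¹ := by
  have : Nonempty (Fin (Module.finrank ℝ E)) := Fin.pos_iff_nonempty.1 Module.finrank_pos
  obtain ⟨l, hl, hdet, hdet', -⟩ := exists_det_eq_prod_of_mem_Icc hD
  rw [hdet, hdet'] at h
  rw [hdet]
  have hp : 0 ≤ ∏ i, l i := Finset.prod_nonneg fun i _ ↦ (hl i).1
  have hq : 0 ≤ ∏ i, (1 - l i) := Finset.prod_nonneg fun i _ ↦ sub_nonneg.2 (hl i).2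
  have hamgm := prod_rpow_add_prod_one_sub_rpow_le_one hl
  rw [Fintype.card_fin] at hamgm
  have hroot := Real.rpow_le_rpow (by positivity) h (by positivity : 0 ≤ (Module.finrank ℝ E : ℝ)⁻¹)
  rw [Real.mul_rpow hb hp, Real.mul_rpow ha hq] at hroot
  have := mul_le_mul_of_nonneg_left hamgm
    (Real.rpow_nonneg ha (Module.finrank ℝ E : ℝ)⁻¹)
  linarith

theorem two_pow_finrank_mul_det_le (hD : D ∈ Icc 0 1) (h : D.det ≤ (1 - D).det) :
    2 ^ Module.finrank ℝ E * D.det ≤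
      1 - hilbertSchmidtSq ((2 : ℝ) • D - 1) / (2 * Module.finrank ℝ E) := by
  have : Nonempty (Fin (Module.finrank ℝ E)) := Fin.pos_iff_nonempty.1 Module.finrank_pos
  obtain ⟨l, hl, hdet, hdet', hhs⟩ := exists_det_eq_prod_of_mem_Icc hD
  rw [hdet, hdet'] at h
  simpa only [hdet, hhs, Fintype.card_fin] using two_pow_card_mul_prod_le hl h

end Determinant

/-! ### Splitting a Minkowski sum by transport -/

section TransportSplitting

open Filter Set ProbabilityTheory

variable {E : Type*} [NormedAddCommGroup E] [InnerProductSpace ℝ E] {f : E → ℝ} {S : E → E}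
  {A B : Set E}

theorem one_sub_mem_Icc {D : E →L[ℝ] E} (hD : D ∈ Icc 0 1) : 1 - D ∈ Icc 0 1 := by
  refine ⟨(ContinuousLinearMap.nonneg_iff_isPositive _).2 hD.2, ?_⟩
  rw [ContinuousLinearMap.le_def, sub_sub_cancel]
  exact (ContinuousLinearMap.nonneg_iff_isPositive _).1 hD.1

theorem IsProximalMap.fderiv_mem_Icc (hS : IsProximalMap f S) {z : E}
    (hz : DifferentiableAt ℝ S z) : fderiv ℝ S z ∈ Icc 0 1 := by
  set D := fderiv ℝ S z
  have hsymm : D.IsSymmetric := hS.isSymmetric_of_hasFDerivAt hz.hasFDerivAt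
  have hfirm := hS.norm_sq_le_inner_of_hasFDerivAt hz.hasFDerivAt
  refine ⟨(ContinuousLinearMap.nonneg_iff_isPositive D).2
    ((ContinuousLinearMap.isPositive_iff D).2 ⟨hsymm, fun u ↦ (sq_nonneg _).trans (hfirm u)⟩),
    (ContinuousLinearMap.isPositive_iff (1 - D)).2
    ⟨LinearMap.IsSymmetric.sub (fun _ _ ↦ rfl) hsymm, fun u ↦ ?_⟩⟩
  have hcs := real_inner_le_norm (D u) u
  have hnorm : ‖D u‖ ≤ ‖u‖ := by
    by_contra! hlt
    nlinarith [hfirm u, norm_nonneg u]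
  rw [sub_apply, one_apply_eq_self, inner_sub_left, real_inner_self_eq_norm_sq]
  nlinarith [norm_nonneg u]

/-- The points of `S ⁻¹' A` at which `S` is differentiable and over which `f` is. If `S` is the
proximal map of `f`, it is there the inverse of `x ↦ x + ∇f(x)`. -/
def smoothPreimage (f : E → ℝ) (S : E → E) (A : Set E) : Set E :=
  {z | S z ∈ A ∧ DifferentiableAt ℝ f (S z) ∧ DifferentiableAt ℝ S z}

theorem IsProximalMap.sub_apply_eq_gradient [CompleteSpace E] (hS : IsProximalMap f S) {z : E}
    (hz : z ∈ smoothPreimage f S A) :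
    z - S z = gradient f (S z) :=
  (hS z).eq_gradient hz.2.1

theorem IsProximalMap.injOn_smoothPreimage [CompleteSpace E] (hS : IsProximalMap f S) :
    InjOn S (smoothPreimage f S A) := by
  intro z hz z' hz' h
  have hsub := hS.sub_apply_eq_gradient hz
  rwa [h, ← hS.sub_apply_eq_gradient hz', sub_left_inj] at hsub

variable [FiniteDimensional ℝ E] [MeasurableSpace E] [BorelSpace E]

theorem volume_image_eq_zero_of_lipschitzWith {L : NNReal} (hS : LipschitzWith L S) {N : Set E}
    (hN : volume N = 0) : volume (S '' N) = 0 := by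
  set d : ℝ := ((Module.finrank ℝ E : ℕ) : ℝ)
  have hvol : (volume : Measure E) ≪ Measure.hausdorffMeasure d :=
    Measure.absolutelyContinuous_isAddHaarMeasure _ _
  have hhaus : (Measure.hausdorffMeasure d : Measure E) ≪ volume :=
    Measure.absolutelyContinuous_isAddHaarMeasure _ _
  have himage := hS.hausdorffMeasure_image_le (d := d) (Nat.cast_nonneg _) N
  rw [hhaus hN, mul_zero] at himage
  exact hvol (le_zero_iff.1 himage)

theorem measurableSet_smoothPreimage (hS : Continuous S) (hA : MeasurableSet A) :
    MeasurableSet (smoothPreimage f S A) :=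
  (hS.measurable hA).inter ((hS.measurable (measurableSet_of_differentiableAt ℝ f)).inter
    (measurableSet_of_differentiableAt ℝ S))

namespace IsProximalMap

theorem setLIntegral_abs_det_fderiv_eq (hS : IsProximalMap f S) {V : Set E}
    (hV : MeasurableSet V) (hVA : V ⊆ smoothPreimage f S A) :
    ∫⁻ z in V, ENNReal.ofReal |(fderiv ℝ S z).det| = volume (S '' V) :=
  lintegral_abs_det_fderiv_eq_addHaar_image volume hV
    (fun _ hz ↦ (hVA hz).2.2.hasFDerivAt.hasFDerivWithinAt) (hS.injOn_smoothPreimage.mono hVA)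

theorem volume_image_smoothPreimage (hS : IsProximalMap f S) {L : NNReal}
    (hf : LipschitzWith L f) (hsub : ∀ x, ∃ y, HasSubgradientAt f y x) :
    volume (S '' smoothPreimage f S A) = volume A := by
  refine le_antisymm (measure_mono (image_subset_iff.2 fun z hz ↦ hz.1)) ?_
  have hcover : A ⊆ S '' smoothPreimage f S A ∪
      (S '' {z | ¬DifferentiableAt ℝ S z} ∪ {x | ¬DifferentiableAt ℝ f x}) := by
    intro x hx
    obtain ⟨y, hy⟩ := hsub x
    have hSx := hS.apply_add hy
    by_cases hfx : DifferentiableAt ℝ f x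
    · by_cases hSd : DifferentiableAt ℝ S (x + y)
      · exact .inl ⟨x + y, ⟨by rwa [hSx], by rwa [hSx], hSd⟩, hSx⟩
      · exact .inr (.inl ⟨x + y, hSd, hSx⟩)
    · exact .inr (.inr hfx)
  have hnull : volume (S '' {z | ¬DifferentiableAt ℝ S z} ∪ {x | ¬DifferentiableAt ℝ f x}) = 0 :=
    measure_union_null
      (volume_image_eq_zero_of_lipschitzWith hS.lipschitzWith hS.lipschitzWith.ae_differentiableAt)
      hf.ae_differentiableAt
  exact (measure_mono hcover).trans ((measure_union_le _ _).trans_eq (by rw [hnull, add_zero]))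

theorem volume_mul_volume_image_le (hS : IsProximalMap f S) (hA : IsCompact A) (hB : IsCompact B)
    (hmap : (cond volume A).map (gradient f) = cond volume B) {V : Set E}
    (hVA : V ⊆ smoothPreimage f S A) :
    volume B * volume (S '' V) ≤ volume A * volume ((fun z ↦ z - S z) '' V) := by
  set M := toMeasurable volume ((fun z ↦ z - S z) '' V)
  have hM : MeasurableSet M := measurableSet_toMeasurable _ _
  have hsubset : S '' V ⊆ A ∩ gradient f ⁻¹' M := by
    rintro _ ⟨z, hz, rfl⟩
    refine ⟨(hVA hz).1, ?_⟩
    rw [mem_preimage, ← hS.sub_apply_eq_gradient (hVA hz)]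
    exact subset_toMeasurable _ _ ⟨z, hz, rfl⟩
  have htransport : cond volume A (gradient f ⁻¹' M) = cond volume B M := by
    rw [← hmap, Measure.map_apply (measurable_gradient f) hM]
  calc volume B * volume (S '' V) ≤ volume B * volume (A ∩ gradient f ⁻¹' M) := by gcongr
    _ = volume B * (cond volume A (gradient f ⁻¹' M) * volume A) := by
        rw [cond_mul_eq_inter' hA.measurableSet hA.measure_lt_top.ne]
    _ = volume A * (cond volume B M * volume B) := by rw [htransport]; ring
    _ = volume A * volume (B ∩ M) := by
        rw [cond_mul_eq_inter' hB.measurableSet hB.measure_lt_top.ne]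
    _ ≤ volume A * volume M := by gcongr; exact inter_subset_right
    _ = volume A * volume ((fun z ↦ z - S z) '' V) := by rw [measure_toMeasurable]

theorem ae_volume_mul_abs_det_le (hS : IsProximalMap f S) (hA : IsCompact A) (hB : IsCompact B)
    (hmap : (cond volume A).map (gradient f) = cond volume B) :
    ∀ᵐ z ∂volume.restrict (smoothPreimage f S A),
      volume B * ENNReal.ofReal |(fderiv ℝ S z).det| ≤
        volume A * ENNReal.ofReal |(1 - fderiv ℝ S z).det| := by
  have hW := measurableSet_smoothPreimage (f := f) hS.lipschitzWith.continuous hA.measurableSet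
  have hdet {g : E → E →L[ℝ] E} (hg : Measurable g) :
      Measurable fun z ↦ ENNReal.ofReal |(g z).det| :=
    (ContinuousLinearMap.continuous_det.measurable.comp hg).abs.ennreal_ofReal
  have hDS := hdet (measurable_fderiv ℝ S)
  have hDS' := hdet ((measurable_fderiv ℝ S).const_sub 1)
  refine ae_le_of_forall_setLIntegral_le_of_sigmaFinite (hDS.const_mul _) fun s hs _ ↦ ?_
  rw [Measure.restrict_restrict hs, lintegral_const_mul _ hDS, lintegral_const_mul _ hDS',
    hS.setLIntegral_abs_det_fderiv_eq (hs.inter hW) inter_subset_right]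
  refine (hS.volume_mul_volume_image_le hA hB hmap inter_subset_right).trans ?_
  gcongr
  exact addHaar_image_le_lintegral_abs_det_fderiv volume (hs.inter hW) fun z hz ↦
    ((hasFDerivAt_id z).sub hz.2.2.2.hasFDerivAt).hasFDerivWithinAt

end IsProximalMap

/-- A measurable set `W` is split by the proximal map `S` of some function into `S z ∈ A` and
`z - S z ∈ B`, so that `W ⊆ A + B`. The last two conditions say that `S` maps `W` onto almost all
of `A`, and that the induced map `S z ↦ z - S z` pushes the uniform distribution of `A` to that
of `B`. -/
structure IsTransportSplitting (A B : Set E) (S : E → E) (W : Set E) : Prop where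
  exists_isProximalMap : ∃ f, IsProximalMap f S
  measurableSet : MeasurableSet W
  apply_mem : ∀ z ∈ W, S z ∈ A
  sub_apply_mem : ∀ z ∈ W, z - S z ∈ B
  differentiableAt : ∀ z ∈ W, DifferentiableAt ℝ S z
  setLIntegral_det : ∫⁻ z in W, ENNReal.ofReal (fderiv ℝ S z).det = volume A
  ae_mul_det_le : ∀ᵐ z ∂volume.restrict W,
    volume.real B * (fderiv ℝ S z).det ≤ volume.real A * (1 - fderiv ℝ S z).det

theorem exists_isTransportSplitting (hA : IsCompact A) (hB : IsCompact B) (hA0 : volume A ≠ 0)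
    (hB0 : volume B ≠ 0) : ∃ (S : E → E) (W : Set E), IsTransportSplitting A B S W := by
  have := cond_isProbabilityMeasure_of_finite hA0 hA.measure_lt_top.ne
  have := cond_isProbabilityMeasure_of_finite hB0 hB.measure_lt_top.ne
  obtain ⟨f, L, hconv, hlip, hsub, hmap⟩ := exists_convexOn_map_gradient_eq hA hB
    (cond volume A) (cond volume B) (by simp [cond_apply hA.measurableSet])
    (by simp [cond_apply hB.measurableSet]) cond_absolutelyContinuous
  obtain ⟨S, hS⟩ := exists_isProximalMap hconv hlip
  have hW := measurableSet_smoothPreimage (f := f) hS.lipschitzWith.continuous hA.measurableSet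
  have hdet (z) (hz : z ∈ smoothPreimage f S A) :
      0 ≤ (fderiv ℝ S z).det ∧ 0 ≤ (1 - fderiv ℝ S z).det := by
    have hIcc := hS.fderiv_mem_Icc hz.2.2
    exact ⟨(det_mem_Icc hIcc).1, (det_mem_Icc (one_sub_mem_Icc hIcc)).1⟩
  refine ⟨S, smoothPreimage f S A, ⟨f, hS⟩, hW, fun z hz ↦ hz.1, fun z hz ↦ ?_,
    fun z hz ↦ hz.2.2, ?_, ?_⟩
  · obtain ⟨y, hyB, hy⟩ := hsub (S z)
    rwa [hS.sub_apply_eq_gradient hz, ← hy.eq_gradient hz.2.1]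
  · rw [← hS.volume_image_smoothPreimage hlip fun x ↦ (hsub x).imp fun _ ↦ And.right,
      ← hS.setLIntegral_abs_det_fderiv_eq hW subset_rfl]
    exact setLIntegral_congr_fun hW fun z hz ↦ by rw [abs_of_nonneg (hdet z hz).1]
  · filter_upwards [hS.ae_volume_mul_abs_det_le hA hB hmap, ae_restrict_mem hW] with z hle hz
    rw [abs_of_nonneg (hdet z hz).1, abs_of_nonneg (hdet z hz).2,
      ← ENNReal.ofReal_toReal hA.measure_lt_top.ne, ← ENNReal.ofReal_toReal hB.measure_lt_top.ne,
      ← ENNReal.ofReal_mul ENNReal.toReal_nonneg, ← ENNReal.ofReal_mul ENNReal.toReal_nonneg] at hle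
    exact (ENNReal.ofReal_le_ofReal_iff
      (mul_nonneg ENNReal.toReal_nonneg (hdet z hz).2)).1 hle

end TransportSplitting

/-! ### The Brunn–Minkowski inequality and its deficit -/

section BrunnMinkowski

open Set

section

variable {E : Type*} [NormedAddCommGroup E] [InnerProductSpace ℝ E] {f : E → ℝ} {S : E → E} {z : E}

/-- The difference of the two parts `S z` and `z - S z` into which `S` splits `z`. -/
def splittingDifference (S : E → E) (z : E) : E := S z - (z - S z)

theorem fderiv_splittingDifference (hz : DifferentiableAt ℝ S z) :
    fderiv ℝ (splittingDifference S) z = (2 : ℝ) • fderiv ℝ S z - 1 := by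
  have h := hz.hasFDerivAt.sub ((hasFDerivAt_id z).sub hz.hasFDerivAt)
  refine h.fderiv.trans ?_
  rw [two_smul, ← ContinuousLinearMap.one_def]
  abel

theorem IsProximalMap.lipschitzWith_splittingDifference (hS : IsProximalMap f S) :
    LipschitzWith 1 (splittingDifference S) := by
  refine LipschitzWith.of_dist_le_mul fun z z' ↦ ?_
  rw [dist_eq_norm, dist_eq_norm, NNReal.coe_one, one_mul]
  refine le_of_sq_le_sq ?_ (norm_nonneg _)
  have hsub : splittingDifference S z - splittingDifference S z' =
      (2 : ℝ) • (S z - S z') - (z - z') := by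
    simp only [splittingDifference]
    module
  rw [hsub, norm_sub_sq_real, norm_smul, real_inner_smul_left, real_inner_comm, Real.norm_ofNat]
  have hfirm := hS.norm_sub_sq_le_inner z z'
  nlinarith [hS.norm_sub_sq_le_inner z z']

end

variable {E : Type*} [NormedAddCommGroup E] [InnerProductSpace ℝ E] [FiniteDimensional ℝ E]
  [MeasurableSpace E] [BorelSpace E] {A B W : Set E} {S : E → E}

theorem integrableOn_hilbertSchmidtSq_fderiv {G : E → E} (hG : LipschitzWith 1 G) {U : Set E}
    (hU : volume U ≠ ⊤) : IntegrableOn (fun z ↦ hilbertSchmidtSq (fderiv ℝ G z)) U := by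
  have hmeas : Measurable fun z ↦ hilbertSchmidtSq (fderiv ℝ G z) :=
    Finset.measurable_fun_sum _ fun j _ ↦ (measurable_fderiv_apply_const ℝ G _).norm.pow_const 2
  refine Measure.integrableOn_of_bounded (M := Module.finrank ℝ E) hU hmeas.aestronglyMeasurable
    (.of_forall fun z ↦ ?_)
  rw [Real.norm_of_nonneg (hilbertSchmidtSq_nonneg _)]
  exact hilbertSchmidtSq_le_finrank (norm_fderiv_le_of_lipschitz ℝ hG)

namespace IsTransportSplitting

theorem subset_add (h : IsTransportSplitting A B S W) : W ⊆ A + B := fun z hz ↦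
  ⟨S z, h.apply_mem z hz, z - S z, h.sub_apply_mem z hz, add_sub_cancel _ _⟩

theorem volume_ne_top (h : IsTransportSplitting A B S W) (hA : IsCompact A) (hB : IsCompact B) :
    volume W ≠ ⊤ :=
  measure_ne_top_of_subset h.subset_add (hA.add hB).measure_ne_top

theorem lipschitzWith_splittingDifference (h : IsTransportSplitting A B S W) :
    LipschitzWith 1 (splittingDifference S) :=
  let ⟨_, hS⟩ := h.exists_isProximalMap
  hS.lipschitzWith_splittingDifference

theorem fderiv_mem_Icc (h : IsTransportSplitting A B S W) {z : E} (hz : z ∈ W) :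
    fderiv ℝ S z ∈ Icc 0 1 :=
  let ⟨_, hS⟩ := h.exists_isProximalMap
  hS.fderiv_mem_Icc (h.differentiableAt z hz)

theorem integrableOn_det (h : IsTransportSplitting A B S W) (hA : IsCompact A)
    (hB : IsCompact B) : IntegrableOn (fun z ↦ (fderiv ℝ S z).det) W := by
  refine Measure.integrableOn_of_bounded (M := 1) (h.volume_ne_top hA hB)
    (ContinuousLinearMap.continuous_det.measurable.comp
      (measurable_fderiv ℝ S)).aestronglyMeasurable ?_
  filter_upwards [ae_restrict_mem h.measurableSet] with z hz
  have hdet := det_mem_Icc (h.fderiv_mem_Icc hz)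
  rw [Real.norm_of_nonneg hdet.1]
  exact hdet.2

theorem setIntegral_det (h : IsTransportSplitting A B S W) (hA : IsCompact A)
    (hB : IsCompact B) : ∫ z in W, (fderiv ℝ S z).det = volume.real A := by
  have hnonneg : 0 ≤ᵐ[volume.restrict W] fun z ↦ (fderiv ℝ S z).det := by
    filter_upwards [ae_restrict_mem h.measurableSet] with z hz
    exact (det_mem_Icc (h.fderiv_mem_Icc hz)).1
  rw [integral_eq_lintegral_of_nonneg_ae hnonneg (h.integrableOn_det hA hB).1, h.setLIntegral_det,
    Measure.real]

theorem volume_le_pow_mul_volume [Nontrivial E] (h : IsTransportSplitting A B S W)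
    (hA : IsCompact A) (hB : IsCompact B) (hA0 : volume A ≠ 0) :
    volume.real A ≤ (volume.real A ^ (Module.finrank ℝ E : ℝ)⁻¹ /
      (volume.real A ^ (Module.finrank ℝ E : ℝ)⁻¹ + volume.real B ^ (Module.finrank ℝ E : ℝ)⁻¹)) ^
        Module.finrank ℝ E * volume.real W := by
  set a := volume.real A ^ (Module.finrank ℝ E : ℝ)⁻¹
  set b := volume.real B ^ (Module.finrank ℝ E : ℝ)⁻¹
  have ha : 0 < a := Real.rpow_pos_of_pos (ENNReal.toReal_pos hA0 hA.measure_ne_top) _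
  have hdet : ∀ᵐ z ∂volume.restrict W,
      ‖(fderiv ℝ S z).det‖ ≤ (a / (a + b)) ^ Module.finrank ℝ E := by
    filter_upwards [h.ae_mul_det_le, ae_restrict_mem h.measurableSet] with z hle hz
    have hD := h.fderiv_mem_Icc hz
    have hroot : (fderiv ℝ S z).det ^ (Module.finrank ℝ E : ℝ)⁻¹ ≤ a / (a + b) := by
      rw [le_div_iff₀' (by positivity)]
      exact add_mul_det_rpow_le measureReal_nonneg measureReal_nonneg hD hle
    rw [Real.norm_of_nonneg (det_mem_Icc hD).1]
    rwa [Real.rpow_inv_le_iff_of_pos (det_mem_Icc hD).1 (by positivity)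
      (by exact_mod_cast Module.finrank_pos), Real.rpow_natCast] at hroot
  calc volume.real A = ∫ z in W, (fderiv ℝ S z).det := (h.setIntegral_det hA hB).symm
    _ ≤ _ := (le_abs_self _).trans
      (norm_setIntegral_le_of_norm_le_const_ae (h.volume_ne_top hA hB).lt_top hdet)

theorem two_pow_mul_volume_add_le [Nontrivial E] (h : IsTransportSplitting A B S W)
    (hA : IsCompact A) (hB : IsCompact B) (hA0 : volume A ≠ 0)
    (hAB : volume.real A = volume.real B) :
    2 ^ Module.finrank ℝ E * volume.real A +
      (∫ z in W, hilbertSchmidtSq (fderiv ℝ (splittingDifference S) z)) /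
        (2 * Module.finrank ℝ E) ≤ volume.real W := by
  have hW := h.volume_ne_top hA hB
  have hInt := (integrableOn_hilbertSchmidtSq_fderiv
    h.lipschitzWith_splittingDifference hW).div_const (2 * Module.finrank ℝ E : ℝ)
  have hdet := (h.integrableOn_det hA hB).const_mul (2 ^ Module.finrank ℝ E)
  rw [← h.setIntegral_det hA hB, ← integral_const_mul, ← integral_div, ← integral_add hdet hInt]
  have hle : ∀ᵐ z ∂volume.restrict W, 2 ^ Module.finrank ℝ E * (fderiv ℝ S z).det +
      hilbertSchmidtSq (fderiv ℝ (splittingDifference S) z) / (2 * Module.finrank ℝ E) ≤ 1 := by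
    filter_upwards [h.ae_mul_det_le, ae_restrict_mem h.measurableSet] with z hle hz
    rw [← hAB] at hle
    rw [fderiv_splittingDifference (h.differentiableAt z hz), ← le_sub_iff_add_le]
    exact two_pow_finrank_mul_det_le (h.fderiv_mem_Icc hz)
      (le_of_mul_le_mul_left hle (ENNReal.toReal_pos hA0 hA.measure_ne_top))
  simpa using setIntegral_mono_ae_restrict (hdet.add hInt) (integrableOn_const hW) hle

theorem volume_add_diff_le [Nontrivial E] (h : IsTransportSplitting A B S W)
    (hA : IsCompact A) (hB : IsCompact B) (hA0 : volume A ≠ 0)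
    (hAB : volume.real A = volume.real B) :
    volume.real ((A + B) \ W) ≤ volume.real (A + B) - 2 ^ Module.finrank ℝ E * volume.real A := by
  have hdeficit := h.two_pow_mul_volume_add_le hA hB hA0 hAB
  have hnonneg : 0 ≤ (∫ z in W, hilbertSchmidtSq (fderiv ℝ (splittingDifference S) z)) /
      (2 * Module.finrank ℝ E) :=
    div_nonneg (integral_nonneg fun _ ↦ hilbertSchmidtSq_nonneg _) (by positivity)
  rw [measureReal_sdiff h.subset_add h.measurableSet (hA.add hB).measure_ne_top]
  linarith

theorem setIntegral_hilbertSchmidtSq_le [Nontrivial E] (h : IsTransportSplitting A B S W)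
    (hA : IsCompact A) (hB : IsCompact B) (hA0 : volume A ≠ 0)
    (hAB : volume.real A = volume.real B) :
    ∫ z in A + B, hilbertSchmidtSq (fderiv ℝ (splittingDifference S) z) ≤
      3 * Module.finrank ℝ E *
        (volume.real (A + B) - 2 ^ Module.finrank ℝ E * volume.real A) := by
  set s : E → ℝ := fun z ↦ hilbertSchmidtSq (fderiv ℝ (splittingDifference S) z)
  have hG := h.lipschitzWith_splittingDifference
  have hW := h.volume_ne_top hA hB
  have hdiff : volume ((A + B) \ W) ≠ ⊤ :=
    measure_ne_top_of_subset sdiff_subset (hA.add hB).measure_ne_top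
  have hsplit : ∫ z in A + B, s z = (∫ z in W, s z) + ∫ z in (A + B) \ W, s z := by
    rw [← setIntegral_union disjoint_sdiff_right
      ((hA.add hB).measurableSet.diff h.measurableSet) (integrableOn_hilbertSchmidtSq_fderiv hG hW)
      (integrableOn_hilbertSchmidtSq_fderiv hG hdiff), union_sdiff_cancel h.subset_add]
  have hbound (z : E) : ‖s z‖ ≤ Module.finrank ℝ E := by
    rw [Real.norm_of_nonneg (hilbertSchmidtSq_nonneg _)]
    exact hilbertSchmidtSq_le_finrank (norm_fderiv_le_of_lipschitz ℝ hG)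
  have hout : ∫ z in (A + B) \ W, s z ≤ Module.finrank ℝ E * volume.real ((A + B) \ W) :=
    (le_abs_self _).trans
      (norm_setIntegral_le_of_norm_le_const hdiff.lt_top fun z _ ↦ hbound z)
  have hn : (0 : ℝ) < 2 * Module.finrank ℝ E := by exact_mod_cast mul_pos two_pos Module.finrank_pos
  have hdeficit := h.two_pow_mul_volume_add_le hA hB hA0 hAB
  rw [← le_sub_iff_add_le', div_le_iff₀' hn] at hdeficit
  rw [measureReal_sdiff h.subset_add h.measurableSet (hA.add hB).measure_ne_top] at hout
  have hvol : volume.real W ≤ volume.real (A + B) :=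
    measureReal_mono h.subset_add (hA.add hB).measure_ne_top
  have hnonneg : 0 ≤ ∫ z in W, s z := integral_nonneg fun _ ↦ hilbertSchmidtSq_nonneg _
  nlinarith [hsplit]

end IsTransportSplitting

theorem volume_rpow_add_volume_rpow_le [Nontrivial E] (hA : IsCompact A) (hB : IsCompact B)
    (hA0 : volume A ≠ 0) (hB0 : volume B ≠ 0) :
    volume.real A ^ (Module.finrank ℝ E : ℝ)⁻¹ + volume.real B ^ (Module.finrank ℝ E : ℝ)⁻¹ ≤
      volume.real (A + B) ^ (Module.finrank ℝ E : ℝ)⁻¹ := by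
  obtain ⟨S, W, h⟩ := exists_isTransportSplitting hA hB hA0 hB0
  have hle := h.volume_le_pow_mul_volume hA hB hA0
  have hn : Module.finrank ℝ E ≠ 0 := Module.finrank_pos.ne'
  have hApos : 0 < volume.real A := ENNReal.toReal_pos hA0 hA.measure_ne_top
  have hpow : volume.real A = (volume.real A ^ (Module.finrank ℝ E : ℝ)⁻¹) ^ Module.finrank ℝ E :=
    (Real.rpow_inv_natCast_pow hApos.le hn).symm
  set a := volume.real A ^ (Module.finrank ℝ E : ℝ)⁻¹
  set b := volume.real B ^ (Module.finrank ℝ E : ℝ)⁻¹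
  have ha : 0 < a := by positivity
  have hb : 0 ≤ b := by positivity
  rw [hpow, div_pow, div_mul_eq_mul_div, le_div_iff₀ (by positivity),
    mul_le_mul_iff_right₀ (by positivity)] at hle
  rw [Real.le_rpow_inv_iff_of_pos (by positivity) measureReal_nonneg (by positivity),
    Real.rpow_natCast]
  exact hle.trans (measureReal_mono h.subset_add (hA.add hB).measure_ne_top)

theorem volume_mul_volume_le_sq [Nontrivial E] (hA : IsCompact A) (hB : IsCompact B) :
    volume A * volume B ≤ volume ((2 : ℝ)⁻¹ • (A + B)) ^ 2 := by
  rcases eq_or_ne (volume A) 0 with hA0 | hA0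
  · simp [hA0]
  rcases eq_or_ne (volume B) 0 with hB0 | hB0
  · simp [hB0]
  have hroot := volume_rpow_add_volume_rpow_le hA hB hA0 hB0
  have hn : Module.finrank ℝ E ≠ 0 := Module.finrank_pos.ne'
  have hC := ((hA.add hB).smul (2 : ℝ)⁻¹).measure_ne_top (μ := volume)
  set n := Module.finrank ℝ E
  have hreal : volume.real A * volume.real B ≤ volume.real ((2 : ℝ)⁻¹ • (A + B)) ^ 2 := by
    rw [measureReal_def volume ((2 : ℝ)⁻¹ • _), Measure.addHaar_smul, ENNReal.toReal_mul,
      ← measureReal_def, ENNReal.toReal_ofReal (abs_nonneg _), abs_of_pos (by positivity),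
      ← Real.rpow_inv_natCast_pow (measureReal_nonneg (s := A)) hn,
      ← Real.rpow_inv_natCast_pow (measureReal_nonneg (s := B)) hn,
      ← Real.rpow_inv_natCast_pow (measureReal_nonneg (s := A + B)) hn, ← mul_pow, ← mul_pow,
      ← pow_mul, mul_comm n, pow_mul]
    gcongr
    set a := volume.real A ^ (n : ℝ)⁻¹
    set b := volume.real B ^ (n : ℝ)⁻¹
    have ha : 0 ≤ a := by positivity
    have hb : 0 ≤ b := by positivity
    nlinarith [sq_nonneg (a - b), sq_nonneg (a + b)]
  rw [← ENNReal.ofReal_toReal hA.measure_ne_top, ← ENNReal.ofReal_toReal hB.measure_ne_top,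
    ← ENNReal.ofReal_toReal hC, ← ENNReal.ofReal_mul ENNReal.toReal_nonneg,
    ← ENNReal.ofReal_pow ENNReal.toReal_nonneg]
  exact ENNReal.ofReal_le_ofReal hreal

theorem measure_mul_measure_le_sq {F : Type*} [NormedAddCommGroup F] [NormedSpace ℝ F]
    [FiniteDimensional ℝ F] [Nontrivial F] [MeasurableSpace F] [BorelSpace F] (μ : Measure F)
    [μ.IsAddHaarMeasure] {A B : Set F} (hA : IsCompact A) (hB : IsCompact B) :
    μ A * μ B ≤ μ ((2 : ℝ)⁻¹ • (A + B)) ^ 2 := by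
  let φ : F ≃L[ℝ] EuclideanSpace ℝ (Fin (Module.finrank ℝ F)) := toEuclidean
  have : Nontrivial (EuclideanSpace ℝ (Fin (Module.finrank ℝ F))) := φ.injective.nontrivial
  have : (μ.map φ).IsAddHaarMeasure := φ.isAddHaarMeasure_map μ
  set c : ENNReal := ((Measure.addHaarScalarFactor (μ.map φ) volume : NNReal) : ENNReal)
  have hμ (D : Set F) : μ D = c * volume (φ '' D) := by
    have hmap : μ.map φ (φ '' D) = μ D :=
      (φ.toHomeomorph.measurableEmbedding.map_apply μ _).trans
        (congrArg μ (φ.injective.preimage_image D))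
    rw [← hmap, Measure.isAddLeftInvariant_eq_smul (μ.map φ) volume]
    rfl
  have himage : φ '' ((2 : ℝ)⁻¹ • (A + B)) = (2 : ℝ)⁻¹ • (φ '' A + φ '' B) := by
    rw [image_smul_comm _ _ _ (map_smul φ _), image_add φ]
  rw [hμ A, hμ B, hμ, himage, mul_mul_mul_comm, mul_pow, ← sq]
  gcongr
  exact volume_mul_volume_le_sq (hA.image φ.continuous) (hB.image φ.continuous)

end BrunnMinkowski

/-! ### A Poincaré inequality on convex sets -/

section Poincare

open Filter Set Topology

section SquareHypograph

variable {E : Type*} {Z : Set E} {p q m : E → ℝ}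

/-- The points `(x, s, t)` over `Z` with `0 ≤ s, t ≤ p x`. Its volume is the integral of `p ^ 2`. -/
def squareHypograph (Z : Set E) (p : E → ℝ) : Set (E × ℝ × ℝ) :=
  {a | a.1 ∈ Z ∧ a.2 ∈ Icc 0 (p a.1, p a.1)}

theorem volume_squareHypograph [MeasureSpace E] (hZ : MeasurableSet Z) (hp : Measurable p)
    (hp0 : ∀ x ∈ Z, 0 ≤ p x) :
    volume (squareHypograph Z p) = ∫⁻ x in Z, ENNReal.ofReal (p x ^ 2) := by
  have hmeas : MeasurableSet (squareHypograph Z p) := by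
    unfold squareHypograph
    simp only [mem_Icc]
    measurability
  rw [Measure.volume_eq_prod, Measure.prod_apply hmeas, ← lintegral_indicator hZ]
  refine lintegral_congr fun x ↦ ?_
  by_cases hx : x ∈ Z
  · have hsection : Prod.mk x ⁻¹' squareHypograph Z p = Icc 0 (p x) ×ˢ Icc 0 (p x) := by
      ext a
      simp [squareHypograph, hx, Prod.le_def, and_and_and_comm]
    rw [indicator_of_mem hx, hsection, Measure.volume_eq_prod, Measure.prod_prod, Real.volume_Icc,
      sub_zero, ← ENNReal.ofReal_mul (hp0 x hx), sq]
  · have hsection : Prod.mk x ⁻¹' squareHypograph Z p = ∅ := by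
      ext a
      simp [squareHypograph, hx]
    rw [indicator_of_notMem hx, hsection, measure_empty]

theorem isCompact_squareHypograph [TopologicalSpace E] [T2Space E] (hZ : IsCompact Z)
    (hp : Continuous p) : IsCompact (squareHypograph Z p) := by
  obtain ⟨M, hM⟩ := (hZ.image hp).bddAbove
  have hsubset : squareHypograph Z p ⊆ Z ×ˢ (Icc 0 M ×ˢ Icc 0 M) := by
    rintro ⟨x, s, t⟩ ⟨hx, h0, hp⟩
    have hpx := hM (mem_image_of_mem p hx)
    exact ⟨hx, ⟨h0.1, hp.1.trans hpx⟩, ⟨h0.2, hp.2.trans hpx⟩⟩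
  refine (hZ.prod (isCompact_Icc.prod isCompact_Icc)).of_isClosed_subset ?_ hsubset
  exact (hZ.isClosed.preimage continuous_fst).inter
    ((isClosed_le continuous_const continuous_snd).inter
      (isClosed_le continuous_snd ((hp.comp continuous_fst).prodMk (hp.comp continuous_fst))))

theorem midpoint_squareHypograph_subset [AddCommGroup E] [Module ℝ E] (hZ : Convex ℝ Z)
    (h : ∀ x ∈ Z, ∀ y ∈ Z, (p x + q y) / 2 ≤ m ((2 : ℝ)⁻¹ • (x + y))) :
    (2 : ℝ)⁻¹ • (squareHypograph Z p + squareHypograph Z q) ⊆ squareHypograph Z m := by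
  rintro _ ⟨_, ⟨⟨x, s, t⟩, ⟨hx, h0, hp⟩, ⟨y, s', t'⟩, ⟨hy, h0', hq⟩, rfl⟩, rfl⟩
  have hxy := h x hx y hy
  simp only [Prod.le_def, Prod.fst_zero, Prod.snd_zero] at h0 hp h0' hq
  refine ⟨?_, ⟨?_, ?_⟩, ?_, ?_⟩
  · simp only [smul_add]
    exact hZ hx hy (by norm_num) (by norm_num) (by norm_num)
  all_goals
    simp only [Prod.mk_add_mk, Prod.smul_mk, smul_eq_mul, Prod.fst_zero, Prod.snd_zero]
    linarith

/-- A functional form of Brunn–Minkowski: it is the multiplicative inequality for hypographs. -/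
theorem setLIntegral_sq_mul_setLIntegral_sq_le [NormedAddCommGroup E] [InnerProductSpace ℝ E]
    [FiniteDimensional ℝ E] [MeasurableSpace E] [BorelSpace E] (hZ : IsCompact Z)
    (hZc : Convex ℝ Z) (hp : Continuous p) (hq : Continuous q) (hm : Measurable m)
    (hp0 : ∀ x ∈ Z, 0 ≤ p x) (hq0 : ∀ x ∈ Z, 0 ≤ q x)
    (h : ∀ x ∈ Z, ∀ y ∈ Z, (p x + q y) / 2 ≤ m ((2 : ℝ)⁻¹ • (x + y))) :
    (∫⁻ x in Z, ENNReal.ofReal (p x ^ 2)) * (∫⁻ x in Z, ENNReal.ofReal (q x ^ 2)) ≤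
      (∫⁻ x in Z, ENNReal.ofReal (m x ^ 2)) ^ 2 := by
  have hm0 (x) (hx : x ∈ Z) : 0 ≤ m x := by
    have hxx := h x hx x hx
    rw [← two_smul ℝ x, inv_smul_smul₀ two_ne_zero] at hxx
    linarith [hp0 x hx, hq0 x hx]
  have : (volume : Measure (ℝ × ℝ)).IsAddHaarMeasure := by
    rw [Measure.volume_eq_prod]
    infer_instance
  have : (volume : Measure (E × ℝ × ℝ)).IsAddHaarMeasure := by
    rw [Measure.volume_eq_prod]
    infer_instance
  rw [← volume_squareHypograph hZ.measurableSet hp.measurable hp0,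
    ← volume_squareHypograph hZ.measurableSet hq.measurable hq0,
    ← volume_squareHypograph hZ.measurableSet hm hm0]
  refine (measure_mul_measure_le_sq volume (isCompact_squareHypograph hZ hp)
    (isCompact_squareHypograph hZ hq)).trans ?_
  gcongr
  exact midpoint_squareHypograph_subset hZc h

end SquareHypograph

section

variable {E : Type*} [NormedAddCommGroup E] {R ε : ℝ} {F : E → ℝ} {L : NNReal} {Z : Set E}

/-- The strongly concave weight `1 - ‖x‖ ^ 2 / (2 * R ^ 2)`, between `1 / 2` and `1` on the ball of
radius `R`. -/
def paraboloid (R : ℝ) (x : E) : ℝ := 1 - ‖x‖ ^ 2 / (2 * R ^ 2)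

theorem continuous_paraboloid (R : ℝ) : Continuous (paraboloid R : E → ℝ) := by
  unfold paraboloid
  fun_prop

theorem paraboloid_mem_Icc {x : E} (hx : x ∈ Metric.closedBall 0 R) :
    paraboloid R x ∈ Icc (1 / 2) 1 := by
  have hxR : ‖x‖ ≤ R := mem_closedBall_zero_iff.1 hx
  have hratio : ‖x‖ ^ 2 / (2 * R ^ 2) ≤ 1 / 2 := by
    rw [← div_div, div_right_comm]
    gcongr
    exact div_le_one_of_le₀ (by gcongr) (sq_nonneg R)
  have hnonneg : 0 ≤ ‖x‖ ^ 2 / (2 * R ^ 2) := by positivity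
  unfold paraboloid
  constructor <;> linarith

variable [InnerProductSpace ℝ E]

theorem paraboloid_add_div_two (x y : E) : (paraboloid R x + paraboloid R y) / 2 =
    paraboloid R ((2 : ℝ)⁻¹ • (x + y)) - ‖(2 : ℝ)⁻¹ • (x - y)‖ ^ 2 / (2 * R ^ 2) := by
  have h := parallelogram_law_with_norm ℝ ((2 : ℝ)⁻¹ • (x + y)) ((2 : ℝ)⁻¹ • (x - y))
  have hx : (2 : ℝ)⁻¹ • (x + y) + (2 : ℝ)⁻¹ • (x - y) = x := by module
  have hy : (2 : ℝ)⁻¹ • (x + y) - (2 : ℝ)⁻¹ • (x - y) = y := by module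
  rw [hx, hy] at h
  unfold paraboloid
  linear_combination -h / (4 * R ^ 2)

/-- The symmetric difference quotient of `F` at `x` along `v`, penalized by the quadratic loss of
concavity of the paraboloid weight. -/
def penalizedQuotient (F : E → ℝ) (R ε : ℝ) (x v : E) : ℝ :=
  (F (x + ε • v) - F (x - ε • v)) / (2 * ε) - ‖v‖ ^ 2 / (2 * R ^ 2)

/-- The largest penalized quotient at `x`. As `ε → 0` it tends to the value at the derivative of `F`
of the Legendre transform of `v ↦ ‖v‖ ^ 2 / (2 * R ^ 2)`, that is, to
`R ^ 2 * ‖fderiv ℝ F x‖ ^ 2 / 2`. -/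
def maxPenalizedQuotient (F : E → ℝ) (R ε : ℝ) (x : E) : ℝ := ⨆ v, penalizedQuotient F R ε x v

theorem mul_sub_sq_div_le (hR : 0 < R) (a t : ℝ) :
    a * t - t ^ 2 / (2 * R ^ 2) ≤ R ^ 2 * a ^ 2 / 2 := by
  have hsq : 0 ≤ (t - a * R ^ 2) ^ 2 / (2 * R ^ 2) := by positivity
  have hexpand : (t - a * R ^ 2) ^ 2 / (2 * R ^ 2) =
      t ^ 2 / (2 * R ^ 2) - a * t + R ^ 2 * a ^ 2 / 2 := by
    field_simp
    ring
  linarith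

theorem penalizedQuotient_le (hF : LipschitzWith L F) (hε : 0 < ε) (x v : E) :
    penalizedQuotient F R ε x v ≤ L * ‖v‖ - ‖v‖ ^ 2 / (2 * R ^ 2) := by
  have hdist := hF.dist_le_mul (x + ε • v) (x - ε • v)
  have hsub : x + ε • v - (x - ε • v) = (2 * ε) • v := by module
  rw [Real.dist_eq, dist_eq_norm, hsub, norm_smul, Real.norm_of_nonneg (by positivity)] at hdist
  unfold penalizedQuotient
  gcongr
  rw [div_le_iff₀ (by positivity)]
  linarith [le_abs_self (F (x + ε • v) - F (x - ε • v))]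

theorem penalizedQuotient_le_const (hR : 0 < R) (hF : LipschitzWith L F) (hε : 0 < ε) (x v : E) :
    penalizedQuotient F R ε x v ≤ R ^ 2 * L ^ 2 / 2 :=
  (penalizedQuotient_le hF hε x v).trans (mul_sub_sq_div_le hR _ _)

theorem penalizedQuotient_le_max (hR : 0 < R) (hF : LipschitzWith L F) (hε : 0 < ε) (x v : E) :
    penalizedQuotient F R ε x v ≤ maxPenalizedQuotient F R ε x :=
  le_ciSup ⟨_, forall_mem_range.2 (penalizedQuotient_le_const hR hF hε x)⟩ v

theorem maxPenalizedQuotient_mem_Icc (hR : 0 < R) (hF : LipschitzWith L F) (hε : 0 < ε) (x : E) :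
    maxPenalizedQuotient F R ε x ∈ Icc 0 (R ^ 2 * L ^ 2 / 2) := by
  refine ⟨?_, ciSup_le (penalizedQuotient_le_const hR hF hε x)⟩
  simpa [penalizedQuotient] using penalizedQuotient_le_max hR hF hε x 0

theorem lowerSemicontinuous_maxPenalizedQuotient (hR : 0 < R) (hF : LipschitzWith L F)
    (hε : 0 < ε) : LowerSemicontinuous (maxPenalizedQuotient F R ε) := by
  refine lowerSemicontinuous_ciSup
    (fun x ↦ ⟨_, forall_mem_range.2 (penalizedQuotient_le_const hR hF hε x)⟩)
    fun v ↦ Continuous.lowerSemicontinuous ?_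
  have hcont := hF.continuous
  unfold penalizedQuotient
  fun_prop

theorem half_paraboloid_add_sub_le (hR : 0 < R) (hF : LipschitzWith L F) (hε : 0 < ε) (x y : E) :
    ((paraboloid R x + ε * F x) + (paraboloid R y - ε * F y)) / 2 ≤
      paraboloid R ((2 : ℝ)⁻¹ • (x + y)) +
        ε ^ 2 * maxPenalizedQuotient F R ε ((2 : ℝ)⁻¹ • (x + y)) := by
  have hmax := mul_le_mul_of_nonneg_left (penalizedQuotient_le_max (R := R) hR hF hε
    ((2 : ℝ)⁻¹ • (x + y)) (ε⁻¹ • (2 : ℝ)⁻¹ • (x - y))) (sq_nonneg ε)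
  have hx : (2 : ℝ)⁻¹ • (x + y) + (2 : ℝ)⁻¹ • (x - y) = x := by module
  have hy : (2 : ℝ)⁻¹ • (x + y) - (2 : ℝ)⁻¹ • (x - y) = y := by module
  rw [penalizedQuotient, smul_inv_smul₀ hε.ne', hx, hy, norm_smul, Real.norm_of_nonneg
    (by positivity)] at hmax
  have hrescale : ε ^ 2 * ((F x - F y) / (2 * ε) -
      (ε⁻¹ * ‖(2 : ℝ)⁻¹ • (x - y)‖) ^ 2 / (2 * R ^ 2)) =
      ε * (F x - F y) / 2 - ‖(2 : ℝ)⁻¹ • (x - y)‖ ^ 2 / (2 * R ^ 2) := by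
    field_simp
  linarith [paraboloid_add_div_two (R := R) x y]

theorem paraboloid_add_sq_le (hR : 0 < R) (hF : LipschitzWith L F) (hε : 0 < ε) {x : E}
    (hx : x ∈ Metric.closedBall 0 R) :
    (paraboloid R x + ε ^ 2 * maxPenalizedQuotient F R ε x) ^ 2 ≤ paraboloid R x ^ 2 +
      ε ^ 2 * (2 * maxPenalizedQuotient F R ε x + ε ^ 2 * (R ^ 2 * L ^ 2 / 2) ^ 2) := by
  have hmem := maxPenalizedQuotient_mem_Icc hR hF hε x
  have hweight := (paraboloid_mem_Icc hx).2
  set u := maxPenalizedQuotient F R ε x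
  have hlinear : paraboloid R x * u ≤ u := mul_le_of_le_one_left hmem.1 hweight
  have hsq : u ^ 2 ≤ (R ^ 2 * L ^ 2 / 2) ^ 2 := by
    have := hmem.1
    gcongr
    exact hmem.2
  calc (paraboloid R x + ε ^ 2 * u) ^ 2
      = paraboloid R x ^ 2 + ε ^ 2 * (2 * (paraboloid R x * u) + ε ^ 2 * u ^ 2) := by ring
    _ ≤ _ := by gcongr

theorem eventually_abs_symmetricQuotient_sub_le {x : E} (hx : DifferentiableAt ℝ F x) {c : ℝ}
    (hc : 0 < c) (M : ℝ) : ∀ᶠ ε in 𝓝[>] (0 : ℝ), ∀ v : E, ‖v‖ ≤ M →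
      |(F (x + ε • v) - F (x - ε • v)) / (2 * ε) - fderiv ℝ F x v| ≤ c * ‖v‖ := by
  obtain ⟨ρ, hρ, hlittle⟩ := Metric.eventually_nhds_iff.1
    ((hasFDerivAt_iff_isLittleO_nhds_zero.1 hx.hasFDerivAt).def hc)
  have hsmall : ∀ᶠ ε in 𝓝[>] (0 : ℝ), ε * M < ρ :=
    ((continuous_mul_const M).tendsto' 0 0 (zero_mul M)).eventually_lt_const hρ
      |>.filter_mono nhdsWithin_le_nhds
  filter_upwards [hsmall, self_mem_nhdsWithin] with ε hεM hε v hv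
  replace hε : 0 < ε := hε
  have hnorm : ‖ε • v‖ = ε * ‖v‖ := by rw [norm_smul, Real.norm_of_nonneg hε.le]
  have hdist : ‖ε • v‖ < ρ := by
    rw [hnorm]
    exact (mul_le_mul_of_nonneg_left hv hε.le).trans_lt hεM
  have hplus := hlittle (y := ε • v) (by rwa [dist_zero_right])
  have hminus := hlittle (y := -(ε • v)) (by rwa [dist_zero_right, norm_neg])
  rw [Real.norm_eq_abs, abs_le, hnorm, map_smul, smul_eq_mul] at hplus
  rw [Real.norm_eq_abs, abs_le, norm_neg, hnorm, map_neg, map_smul, smul_eq_mul,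
    ← sub_eq_add_neg] at hminus
  have hscale : (F (x + ε • v) - F (x - ε • v)) / (2 * ε) - fderiv ℝ F x v =
      (F (x + ε • v) - F (x - ε • v) - 2 * ε * fderiv ℝ F x v) / (2 * ε) := by
    field_simp
  rw [hscale, abs_div, abs_of_pos (by positivity : 0 < 2 * ε), div_le_iff₀ (by positivity), abs_le]
  constructor <;> linarith

theorem eventually_maxPenalizedQuotient_lt (hR : 0 < R) (hF : LipschitzWith L F) {x : E}
    (hx : DifferentiableAt ℝ F x) {y : ℝ} (hy : R ^ 2 * ‖fderiv ℝ F x‖ ^ 2 / 2 < y) :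
    ∀ᶠ ε in 𝓝[>] 0, maxPenalizedQuotient F R ε x < y := by
  have hcont : Continuous fun c : ℝ ↦ R ^ 2 * (‖fderiv ℝ F x‖ + c) ^ 2 / 2 := by fun_prop
  obtain ⟨c, hcy, hc⟩ := (((hcont.tendsto' 0 _ (by rw [add_zero])).eventually_lt_const hy
    |>.filter_mono nhdsWithin_le_nhds).and (self_mem_nhdsWithin (s := Ioi 0))).exists
  filter_upwards [eventually_abs_symmetricQuotient_sub_le hx hc (2 * R ^ 2 * L),
    self_mem_nhdsWithin] with ε hquot hε
  refine (ciSup_le fun v ↦ ?_).trans_lt hcy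
  rcases le_total ‖v‖ (2 * R ^ 2 * L) with hv | hv
  · have hderiv := (le_abs_self _).trans ((fderiv ℝ F x).le_opNorm v)
    unfold penalizedQuotient
    linarith [(abs_le.1 (hquot v hv)).2, mul_sub_sq_div_le hR (‖fderiv ℝ F x‖ + c) ‖v‖]
  · have hfar : L * ‖v‖ ≤ ‖v‖ ^ 2 / (2 * R ^ 2) := by
      rw [le_div_iff₀ (by positivity)]
      nlinarith [norm_nonneg v]
    have hnonneg : 0 ≤ R ^ 2 * (‖fderiv ℝ F x‖ + c) ^ 2 / 2 := by positivity
    linarith [penalizedQuotient_le (R := R) hF hε x v]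

theorem eventually_lt_maxPenalizedQuotient [CompleteSpace E] (hR : 0 < R)
    (hF : LipschitzWith L F) {x : E} (hx : DifferentiableAt ℝ F x) {y : ℝ}
    (hy : y < R ^ 2 * ‖fderiv ℝ F x‖ ^ 2 / 2) :
    ∀ᶠ ε in 𝓝[>] 0, y < maxPenalizedQuotient F R ε x := by
  set v := R ^ 2 • gradient F x
  have hgrad : ‖gradient F x‖ = ‖fderiv ℝ F x‖ := (InnerProductSpace.toDual ℝ E).symm.norm_map _
  have hnorm : ‖v‖ = R ^ 2 * ‖fderiv ℝ F x‖ := by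
    rw [norm_smul, hgrad, Real.norm_of_nonneg (sq_nonneg R)]
  have hderiv : fderiv ℝ F x v = R ^ 2 * ‖fderiv ℝ F x‖ ^ 2 := by
    rw [← inner_gradient_left, real_inner_smul_right, real_inner_self_eq_norm_sq, hgrad]
  have hcont : Continuous fun c : ℝ ↦ R ^ 2 * ‖fderiv ℝ F x‖ ^ 2 / 2 - c * ‖v‖ := by fun_prop
  obtain ⟨c, hcy, hc⟩ := (((hcont.tendsto' 0 _ (by ring)).eventually_const_lt hy
    |>.filter_mono nhdsWithin_le_nhds).and (self_mem_nhdsWithin (s := Ioi 0))).exists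
  filter_upwards [eventually_abs_symmetricQuotient_sub_le hx hc ‖v‖, self_mem_nhdsWithin]
    with ε hquot hε
  refine hcy.trans_le (le_trans ?_ (penalizedQuotient_le_max hR hF hε x v))
  have hsq : ‖v‖ ^ 2 / (2 * R ^ 2) = R ^ 2 * ‖fderiv ℝ F x‖ ^ 2 / 2 := by
    rw [hnorm]
    field_simp
  rw [penalizedQuotient, hsq]
  linarith [(abs_le.1 (hquot v le_rfl)).1]

theorem tendsto_maxPenalizedQuotient [CompleteSpace E] (hR : 0 < R) (hF : LipschitzWith L F)
    {x : E} (hx : DifferentiableAt ℝ F x) :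
    Tendsto (fun ε ↦ maxPenalizedQuotient F R ε x) (𝓝[>] 0)
      (𝓝 (R ^ 2 * ‖fderiv ℝ F x‖ ^ 2 / 2)) :=
  tendsto_order.2 ⟨fun _ ↦ eventually_lt_maxPenalizedQuotient hR hF hx,
    fun _ ↦ eventually_maxPenalizedQuotient_lt hR hF hx⟩

end

theorem setIntegral_add_const_mul_sq {X : Type*} [TopologicalSpace X] [T2Space X]
    [MeasurableSpace X] [OpensMeasurableSpace X] {μ : Measure X} [IsFiniteMeasureOnCompacts μ]
    {Z : Set X} (hZ : IsCompact Z) {h F : X → ℝ} (hh : Continuous h) (hF : Continuous F)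
    (horth : ∫ x in Z, h x * F x ∂μ = 0) (t : ℝ) :
    ∫ x in Z, (h x + t * F x) ^ 2 ∂μ = (∫ x in Z, h x ^ 2 ∂μ) + t ^ 2 * ∫ x in Z, F x ^ 2 ∂μ := by
  have hexpand (x : X) :
      (h x + t * F x) ^ 2 = h x ^ 2 + t ^ 2 * F x ^ 2 + 2 * t * (h x * F x) := by ring
  have hInt {g : X → ℝ} (hg : Continuous g) : Integrable g (μ.restrict Z) :=
    hg.continuousOn.integrableOn_compact hZ
  simp only [hexpand]
  rw [integral_add (hInt (by fun_prop)) (hInt (by fun_prop)),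
    integral_add (hInt (by fun_prop)) (hInt (by fun_prop)), integral_const_mul, integral_const_mul,
    horth, mul_zero, add_zero]

variable {E : Type*} [NormedAddCommGroup E] [InnerProductSpace ℝ E] [FiniteDimensional ℝ E]
  [MeasurableSpace E] [BorelSpace E] {R ε : ℝ} {F : E → ℝ} {L : NNReal} {Z : Set E}

theorem integrableOn_maxPenalizedQuotient (hR : 0 < R) (hF : LipschitzWith L F) (hε : 0 < ε)
    (hZ : IsCompact Z) : IntegrableOn (maxPenalizedQuotient F R ε) Z := by
  refine Measure.integrableOn_of_bounded hZ.measure_ne_top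
    (lowerSemicontinuous_maxPenalizedQuotient hR hF hε).measurable.aestronglyMeasurable
    (M := R ^ 2 * L ^ 2 / 2) (.of_forall fun x ↦ ?_)
  have hmem := maxPenalizedQuotient_mem_Icc hR hF hε x
  rw [Real.norm_of_nonneg hmem.1]
  exact hmem.2

theorem setLIntegral_paraboloid_add_sq_le (hR : 0 < R) (hZ : IsCompact Z)
    (hZR : Z ⊆ Metric.closedBall 0 R) (hF : LipschitzWith L F) (hε : 0 < ε) :
    ∫⁻ x in Z, ENNReal.ofReal ((paraboloid R x + ε ^ 2 * maxPenalizedQuotient F R ε x) ^ 2) ≤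
      ENNReal.ofReal ((∫ x in Z, paraboloid R x ^ 2) +
        ε ^ 2 * (2 * (∫ x in Z, maxPenalizedQuotient F R ε x) +
          ε ^ 2 * (R ^ 2 * L ^ 2 / 2) ^ 2 * volume.real Z)) := by
  set u := maxPenalizedQuotient F R ε
  have hh : IntegrableOn (fun x ↦ paraboloid R x ^ 2) Z :=
    ((continuous_paraboloid R).pow 2).continuousOn.integrableOn_compact hZ
  have hu : IntegrableOn (fun x ↦ 2 * u x) Z :=
    (integrableOn_maxPenalizedQuotient hR hF hε hZ).const_mul 2
  have hconst : IntegrableOn (fun _ ↦ ε ^ 2 * (R ^ 2 * L ^ 2 / 2) ^ 2) Z :=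
    integrableOn_const hZ.measure_ne_top
  have hcorrection : IntegrableOn
      (fun x ↦ ε ^ 2 * (2 * u x + ε ^ 2 * (R ^ 2 * L ^ 2 / 2) ^ 2)) Z :=
    (hu.add hconst).const_mul _
  calc ∫⁻ x in Z, ENNReal.ofReal ((paraboloid R x + ε ^ 2 * u x) ^ 2)
      ≤ ∫⁻ x in Z, ENNReal.ofReal (paraboloid R x ^ 2 +
          ε ^ 2 * (2 * u x + ε ^ 2 * (R ^ 2 * L ^ 2 / 2) ^ 2)) :=
        setLIntegral_mono' hZ.measurableSet fun x hx ↦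
          ENNReal.ofReal_le_ofReal (paraboloid_add_sq_le hR hF hε (hZR hx))
    _ = ENNReal.ofReal (∫ x in Z, (paraboloid R x ^ 2 +
          ε ^ 2 * (2 * u x + ε ^ 2 * (R ^ 2 * L ^ 2 / 2) ^ 2))) := by
        refine (ofReal_integral_eq_lintegral_ofReal (hh.add hcorrection)
          (.of_forall fun x ↦ ?_)).symm
        have hux : 0 ≤ u x := (maxPenalizedQuotient_mem_Icc hR hF hε x).1
        exact add_nonneg (sq_nonneg _) (by positivity)
    _ = _ := by
        rw [integral_add hh hcorrection, integral_const_mul, integral_add hu hconst,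
          integral_const_mul, setIntegral_const, smul_eq_mul, mul_comm (volume.real Z)]

theorem setIntegral_sq_le_maxPenalizedQuotient (hR : 0 < R) (hZ : IsCompact Z)
    (hZc : Convex ℝ Z) (hZR : Z ⊆ Metric.closedBall 0 R) (hF : LipschitzWith L F)
    (horth : ∫ x in Z, paraboloid R x * F x = 0) (hε : 0 < ε)
    (hsmall : ∀ x ∈ Z, |ε * F x| ≤ 1 / 2) :
    ∫ x in Z, F x ^ 2 ≤ 2 * (∫ x in Z, maxPenalizedQuotient F R ε x) +
      ε ^ 2 * (R ^ 2 * L ^ 2 / 2) ^ 2 * volume.real Z := by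
  have hh : Continuous (paraboloid R : E → ℝ) := continuous_paraboloid R
  have hFc := hF.continuous
  have hu := lowerSemicontinuous_maxPenalizedQuotient hR hF hε |>.measurable
  have hbm := setLIntegral_sq_mul_setLIntegral_sq_le hZ hZc (p := fun x ↦ paraboloid R x + ε * F x)
    (q := fun x ↦ paraboloid R x - ε * F x)
    (m := fun x ↦ paraboloid R x + ε ^ 2 * maxPenalizedQuotient F R ε x) (by fun_prop)
    (by fun_prop) (hh.measurable.add (hu.const_mul _))
    (fun x hx ↦ by linarith [abs_le.1 (hsmall x hx), (paraboloid_mem_Icc (hZR hx)).1])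
    (fun x hx ↦ by linarith [abs_le.1 (hsmall x hx), (paraboloid_mem_Icc (hZR hx)).1])
    fun x _ y _ ↦ half_paraboloid_add_sub_le hR hF hε x y
  have hplus (t : ℝ) : ∫⁻ x in Z, ENNReal.ofReal ((paraboloid R x + t * F x) ^ 2) =
      ENNReal.ofReal ((∫ x in Z, paraboloid R x ^ 2) + t ^ 2 * ∫ x in Z, F x ^ 2) := by
    rw [← setIntegral_add_const_mul_sq hZ hh hFc horth t]
    exact (ofReal_integral_eq_lintegral_ofReal
      ((by fun_prop : Continuous _).continuousOn.integrableOn_compact hZ)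
      (.of_forall fun x ↦ sq_nonneg _)).symm
  have hminus := hplus (-ε)
  simp only [neg_mul, ← sub_eq_add_neg, neg_sq] at hminus
  rw [hplus, hminus, ← sq] at hbm
  have hroot := (ENNReal.pow_le_pow_left_iff two_ne_zero).1 hbm |>.trans
    (setLIntegral_paraboloid_add_sq_le hR hZ hZR hF hε)
  have hu0 : 0 ≤ ∫ x in Z, maxPenalizedQuotient F R ε x :=
    integral_nonneg fun x ↦ (maxPenalizedQuotient_mem_Icc hR hF hε x).1
  have hh0 : 0 ≤ ∫ x in Z, paraboloid R x ^ 2 := integral_nonneg fun x ↦ sq_nonneg _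
  rw [ENNReal.ofReal_le_ofReal_iff (by positivity)] at hroot
  exact le_of_mul_le_mul_left (by linarith) (sq_pos_of_pos hε)

theorem tendsto_setIntegral_maxPenalizedQuotient (hR : 0 < R) (hF : LipschitzWith L F)
    (hZ : IsCompact Z) :
    Tendsto (fun ε ↦ ∫ x in Z, maxPenalizedQuotient F R ε x) (𝓝[>] 0)
      (𝓝 (∫ x in Z, R ^ 2 * ‖fderiv ℝ F x‖ ^ 2 / 2)) := by
  refine tendsto_integral_filter_of_dominated_convergence (fun _ ↦ R ^ 2 * L ^ 2 / 2) ?_ ?_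
    (integrableOn_const hZ.measure_ne_top) ?_
  · filter_upwards [self_mem_nhdsWithin] with ε hε
    exact (integrableOn_maxPenalizedQuotient hR hF hε hZ).aestronglyMeasurable
  · filter_upwards [self_mem_nhdsWithin] with ε hε
    refine .of_forall fun x ↦ ?_
    have hmem := maxPenalizedQuotient_mem_Icc hR hF hε x
    rw [Real.norm_of_nonneg hmem.1]
    exact hmem.2
  · filter_upwards [ae_restrict_of_ae hF.ae_differentiableAt] with x hx
    exact tendsto_maxPenalizedQuotient hR hF hx

theorem setIntegral_sq_le_mul_setIntegral_norm_fderiv_sq (hR : 0 < R) (hZ : IsCompact Z)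
    (hZc : Convex ℝ Z) (hZR : Z ⊆ Metric.closedBall 0 R) (hF : LipschitzWith L F)
    (horth : ∫ x in Z, paraboloid R x * F x = 0) :
    ∫ x in Z, F x ^ 2 ≤ R ^ 2 * ∫ x in Z, ‖fderiv ℝ F x‖ ^ 2 := by
  obtain ⟨M, hM⟩ := hZ.exists_bound_of_continuousOn hF.continuous.continuousOn
  have hsmall : ∀ᶠ ε in 𝓝[>] (0 : ℝ), ε * M < 1 / 2 :=
    ((continuous_mul_const M).tendsto' 0 0 (zero_mul M)).eventually_lt_const one_half_pos
      |>.filter_mono nhdsWithin_le_nhds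
  have hremainder : Tendsto (fun ε : ℝ ↦ ε ^ 2 * (R ^ 2 * L ^ 2 / 2) ^ 2 * volume.real Z)
      (𝓝[>] 0) (𝓝 0) :=
    (Continuous.tendsto' (by fun_prop) 0 0 (by simp)).mono_left nhdsWithin_le_nhds
  have hlim := ((tendsto_setIntegral_maxPenalizedQuotient hR hF hZ).const_mul 2).add hremainder
  have hvalue : 2 * (∫ x in Z, R ^ 2 * ‖fderiv ℝ F x‖ ^ 2 / 2) + 0 =
      R ^ 2 * ∫ x in Z, ‖fderiv ℝ F x‖ ^ 2 := by
    rw [integral_div, integral_const_mul]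
    ring
  rw [hvalue] at hlim
  refine ge_of_tendsto hlim ?_
  filter_upwards [hsmall, self_mem_nhdsWithin] with ε hεM hε
  refine setIntegral_sq_le_maxPenalizedQuotient hR hZ hZc hZR hF horth hε fun x hx ↦ ?_
  rw [abs_mul, abs_of_pos hε]
  exact (mul_le_mul_of_nonneg_left (hM x hx) hε.le).trans hεM.le

end Poincare

section VectorPoincare

theorem sq_setIntegral_le_mul_setIntegral_sq {X : Type*} [MeasurableSpace X] {μ : Measure X}
    {Z : Set X} (hZ : μ Z ≠ ⊤) {f : X → ℝ} (hf : IntegrableOn f Z μ)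
    (hf2 : IntegrableOn (fun x ↦ f x ^ 2) Z μ) :
    (∫ x in Z, f x ∂μ) ^ 2 ≤ μ.real Z * ∫ x in Z, f x ^ 2 ∂μ := by
  rcases eq_or_ne (μ Z) 0 with hnull | hpos
  · simp [Measure.restrict_eq_zero.2 hnull]
  · have hjensen := even_two.convexOn_pow.map_set_average_le (continuous_pow 2).continuousOn
      isClosed_univ hpos hZ (.of_forall fun _ ↦ Set.mem_univ _) hf hf2
    have hreal : 0 < μ.real Z := ENNReal.toReal_pos hpos hZ
    rw [setAverage_eq, setAverage_eq, smul_eq_mul, smul_eq_mul, mul_pow, inv_pow,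
      inv_mul_le_iff₀ (by positivity)] at hjensen
    calc _ ≤ _ := hjensen
      _ = _ := by field_simp

theorem exists_setIntegral_smul_sub_eq_zero {X V : Type*} [MeasurableSpace X] {μ : Measure X}
    [NormedAddCommGroup V] [NormedSpace ℝ V] [CompleteSpace V] {Z : Set X} {w : X → ℝ} {G : X → V}
    (hw : IntegrableOn w Z μ) (hwG : IntegrableOn (fun x ↦ w x • G x) Z μ)
    (hw0 : ∫ x in Z, w x ∂μ ≠ 0) : ∃ g : V, ∫ x in Z, w x • (G x - g) ∂μ = 0 := by
  refine ⟨(∫ x in Z, w x ∂μ)⁻¹ • ∫ x in Z, w x • G x ∂μ, ?_⟩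
  simp only [smul_sub]
  rw [integral_sub hwG (hw.smul_const _), integral_smul_const, smul_inv_smul₀ hw0, sub_self]

variable {E : Type*} [NormedAddCommGroup E] [InnerProductSpace ℝ E]

theorem lipschitzWith_inner_sub {X : Type*} [PseudoEMetricSpace X] {L : NNReal} {G : X → E}
    (hG : LipschitzWith L G) (e g : E) :
    LipschitzWith (‖e‖₊ * L) fun x ↦ inner ℝ e (G x - g) := by
  have hsub : LipschitzWith L fun x ↦ G x - g := fun x y ↦ by
    rw [edist_sub_right]
    exact hG x y
  have hnorm : ‖innerSL ℝ e‖₊ = ‖e‖₊ := NNReal.eq (innerSL_apply_norm ℝ e)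
  rw [← hnorm]
  exact (innerSL ℝ e).lipschitz.comp hsub

variable [FiniteDimensional ℝ E]

theorem sum_norm_fderiv_inner_sub_sq {G : E → E} {z : E} (hG : DifferentiableAt ℝ G z) (g : E) :
    ∑ j, ‖fderiv ℝ (fun x ↦ inner ℝ (stdOrthonormalBasis ℝ E j) (G x - g)) z‖ ^ 2 =
      hilbertSchmidtSq (fderiv ℝ G z) := by
  have hderiv (e : E) : fderiv ℝ (fun x ↦ inner ℝ e (G x - g)) z =
      (innerSL ℝ e).comp (fderiv ℝ G z) :=
    ((innerSL ℝ e).hasFDerivAt.comp z (hG.hasFDerivAt.sub_const g)).fderiv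
  simp only [hderiv, (stdOrthonormalBasis ℝ E).norm_dual, ContinuousLinearMap.comp_apply,
    innerSL_apply_apply]
  rw [Finset.sum_comm]
  simp only [OrthonormalBasis.sum_sq_inner_right]
  rfl

variable [MeasurableSpace E] [BorelSpace E]

theorem integrableOn_norm_fderiv_sq {V : Type*} [NormedAddCommGroup V] [NormedSpace ℝ V]
    [CompleteSpace V] {U : Set E} {L : NNReal} {F : E → V} (hF : LipschitzWith L F)
    (hU : volume U ≠ ⊤) : IntegrableOn (fun x ↦ ‖fderiv ℝ F x‖ ^ 2) U :=
  Measure.integrableOn_of_bounded hU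
    ((measurable_fderiv ℝ F).norm.pow_const 2).aestronglyMeasurable (M := L ^ 2)
    (.of_forall fun x ↦ by
      rw [norm_pow, norm_norm]
      gcongr
      exact norm_fderiv_le_of_lipschitz ℝ hF)

theorem exists_setIntegral_norm_sub_sq_le {Z : Set E} {R : ℝ} {L : NNReal} {G : E → E} (hR : 0 < R)
    (hZ : IsCompact Z) (hZc : Convex ℝ Z) (hZR : Z ⊆ Metric.closedBall 0 R) (hZ0 : volume Z ≠ 0)
    (hG : LipschitzWith L G) :
    ∃ g : E, ∫ z in Z, ‖G z - g‖ ^ 2 ≤ R ^ 2 * ∫ z in Z, hilbertSchmidtSq (fderiv ℝ G z) := by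
  have hintegrable {f : E → ℝ} (hf : Continuous f) : IntegrableOn f Z :=
    hf.continuousOn.integrableOn_compact hZ
  have hweight := continuous_paraboloid (E := E) R
  have hmass : 0 < ∫ z in Z, paraboloid R z := by
    have hlower := setIntegral_mono_on (integrableOn_const hZ.measure_ne_top)
      (hintegrable hweight) hZ.measurableSet fun z hz ↦ (paraboloid_mem_Icc (hZR hz)).1
    have hvol : 0 < volume.real Z := ENNReal.toReal_pos hZ0 hZ.measure_ne_top
    rw [setIntegral_const, smul_eq_mul] at hlower
    linarith
  obtain ⟨g, hg⟩ := exists_setIntegral_smul_sub_eq_zero (hintegrable hweight)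
    ((hweight.smul hG.continuous).continuousOn.integrableOn_compact hZ) hmass.ne'
  set b := stdOrthonormalBasis ℝ E
  set F : Fin (Module.finrank ℝ E) → E → ℝ := fun j z ↦ inner ℝ (b j) (G z - g)
  have hF (j) : LipschitzWith (‖b j‖₊ * L) (F j) := lipschitzWith_inner_sub hG (b j) g
  have hFsq (j) : IntegrableOn (fun z ↦ F j z ^ 2) Z := hintegrable ((hF j).continuous.pow 2)
  have horth (j) : ∫ z in Z, paraboloid R z * F j z = 0 := by
    simp only [F, ← inner_smul_right]
    have hcont : Continuous fun z ↦ paraboloid R z • (G z - g) :=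
      hweight.smul (hG.continuous.sub continuous_const)
    rw [integral_inner (hcont.continuousOn.integrableOn_compact hZ) (b j), hg, inner_zero_right]
  refine ⟨g, ?_⟩
  calc ∫ z in Z, ‖G z - g‖ ^ 2 = ∑ j, ∫ z in Z, F j z ^ 2 := by
        rw [← integral_finsetSum _ fun j _ ↦ hFsq j]
        simp only [F, b.sum_sq_inner_right]
    _ ≤ ∑ j, R ^ 2 * ∫ z in Z, ‖fderiv ℝ (F j) z‖ ^ 2 := Finset.sum_le_sum fun j _ ↦
        setIntegral_sq_le_mul_setIntegral_norm_fderiv_sq hR hZ hZc hZR (hF j) (horth j)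
    _ = R ^ 2 * ∫ z in Z, ∑ j, ‖fderiv ℝ (F j) z‖ ^ 2 := by
        rw [← Finset.mul_sum, integral_finsetSum _ fun j _ ↦
          integrableOn_norm_fderiv_sq (hF j) hZ.measure_ne_top]
    _ = _ := by
        congr 1
        refine integral_congr_ae ?_
        filter_upwards [ae_restrict_of_ae hG.ae_differentiableAt] with z hz
        exact sum_norm_fderiv_inner_sub_sq hz g

end VectorPoincare

/-! ### A trace inequality along rays -/

section Trace

open Set

section

variable {V W : Type*} [NormedAddCommGroup V] [NormedSpace ℝ V] [NormedAddCommGroup W]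
  [NormedSpace ℝ W]

theorem norm_deriv_mul_pow_le {H : V → W} {ω : V} (hω : ‖ω‖ = 1) {r : ℝ} (hr : 0 < r)
    (hH : DifferentiableAt ℝ H (r • ω)) {e : StrongDual ℝ W} (he : ‖e‖ ≤ 1) {n : ℕ} (hn : n ≠ 0) :
    ‖deriv (fun t : ℝ ↦ e (H (t • ω)) * t ^ n) r‖ ≤
      r ^ (n - 1) * (n * ‖H (r • ω)‖ + ‖r • ω‖ * ‖fderiv ℝ H (r • ω)‖) := by
  have hline : HasDerivAt (fun t : ℝ ↦ t • ω) ω r := by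
    simpa using (hasDerivAt_id r).smul_const ω
  have hcomp : HasDerivAt (fun t : ℝ ↦ e (H (t • ω))) (e (fderiv ℝ H (r • ω) ω)) r :=
    e.hasFDerivAt.comp_hasDerivAt r (hH.hasFDerivAt.comp_hasDerivAt r hline)
  have hderiv : |e (fderiv ℝ H (r • ω) ω)| ≤ ‖fderiv ℝ H (r • ω)‖ := by
    have happly := (fderiv ℝ H (r • ω)).le_opNorm ω
    rw [hω, mul_one] at happly
    exact ((e.le_of_opNorm_le he _).trans_eq (one_mul _)).trans happly
  have hvalue : |e (H (r • ω))| ≤ ‖H (r • ω)‖ := (e.le_of_opNorm_le he _).trans_eq (one_mul _)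
  have hprod : deriv (fun t : ℝ ↦ e (H (t • ω)) * t ^ n) r =
      e (fderiv ℝ H (r • ω) ω) * r ^ n + e (H (r • ω)) * (n * r ^ (n - 1)) :=
    (hcomp.mul (hasDerivAt_pow n r)).deriv
  rw [hprod, norm_smul, hω, mul_one, Real.norm_eq_abs r,
    abs_of_pos hr, Real.norm_eq_abs]
  calc _ ≤ |e (fderiv ℝ H (r • ω) ω)| * r ^ n + |e (H (r • ω))| * (n * r ^ (n - 1)) := by
        refine (abs_add_le _ _).trans_eq ?_
        rw [abs_mul, abs_mul, abs_of_pos (by positivity : 0 < r ^ n),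
          abs_of_nonneg (by positivity : 0 ≤ n * r ^ (n - 1))]
    _ ≤ ‖fderiv ℝ H (r • ω)‖ * r ^ n + ‖H (r • ω)‖ * (n * r ^ (n - 1)) := by gcongr
    _ = _ := by
        rw [← mul_pow_sub_one hn r]
        ring

theorem ofReal_norm_mul_pow_le_setLIntegral {H : V → W} {L : NNReal} (hH : LipschitzWith L H)
    {ω : V} (hω : ‖ω‖ = 1)
    (hdiff : ∀ᵐ r ∂volume.restrict (Ioi (0 : ℝ)), DifferentiableAt ℝ H (r • ω)) {n : ℕ}
    (hn : n ≠ 0) {s : ℝ} (hs : 0 ≤ s) :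
    ENNReal.ofReal (‖H (s • ω)‖ * s ^ n) ≤ ∫⁻ r in Ioc 0 s, ENNReal.ofReal (r ^ (n - 1)) *
      ENNReal.ofReal (n * ‖H (r • ω)‖ + ‖r • ω‖ * ‖fderiv ℝ H (r • ω)‖) := by
  obtain ⟨e, he, heH⟩ := exists_dual_vector'' ℝ (H (s • ω))
  set ψ : ℝ → ℝ := fun r ↦ e (H (r • ω)) * r ^ n
  have hψ : AbsolutelyContinuousOnInterval ψ 0 s :=
    ((e.lipschitz.comp (hH.comp ((ContinuousLinearMap.id ℝ ℝ).smulRight ω).lipschitz)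
      ).lipschitzOnWith.absolutelyContinuousOnInterval).mul
      (ContDiffOn.absolutelyContinuousOnInterval (by fun_prop))
  have hftc : ∫ r in Ioc 0 s, deriv ψ r = ‖H (s • ω)‖ * s ^ n := by
    rw [← intervalIntegral.integral_of_le hs, hψ.integral_deriv_eq_sub]
    simp [ψ, hn, heH]
  rw [← hftc]
  refine (ENNReal.ofReal_le_ofReal (le_abs_self _)).trans ?_
  rw [← Real.norm_eq_abs, ofReal_norm]
  refine (enorm_integral_le_lintegral_enorm _).trans (lintegral_mono_ae ?_)
  filter_upwards [ae_mono (Measure.restrict_mono Ioc_subset_Ioi_self le_rfl) hdiff,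
    ae_restrict_mem measurableSet_Ioc] with r hr hrs
  rw [← ENNReal.ofReal_mul (pow_nonneg hrs.1.le _), ← ofReal_norm]
  exact ENNReal.ofReal_le_ofReal (norm_deriv_mul_pow_le hω hrs.1 hr he hn)

theorem sub_le_mul_of_inv_smul_mem {U : Set V} (hU : StarConvex ℝ 0 U) {ω : V} {r s a : ℝ}
    (hr : 0 < r) (hs : 0 ≤ s) (ha : 0 ≤ a) (hrU : r • ω ∉ U) (hsU : (1 + a)⁻¹ • s • ω ∈ U) :
    s - r ≤ a * s := by
  have hlt : (1 + a)⁻¹ * s < r := by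
    by_contra! hle
    refine hrU ?_
    have hmem := hU.smul_mem hsU (t := r / ((1 + a)⁻¹ * s)) (by positivity)
      (div_le_one_of_le₀ hle (by positivity))
    rwa [smul_smul (1 + a)⁻¹, smul_smul, div_mul_cancel₀ _ (hr.trans_le hle).ne'] at hmem
  rw [inv_mul_lt_iff₀ (by positivity)] at hlt
  rcases le_total s r with hle | hle
  · linarith [mul_nonneg ha hs]
  · linarith [mul_le_mul_of_nonneg_left hle ha]

theorem setLIntegral_pow_le_of_sub_mul_pow_le {S : Set ℝ} (hS : MeasurableSet S)
    (hS0 : S ⊆ Ici 0) (hbdd : BddAbove S) {k : ℕ} {T : ENNReal}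
    (hT : ∀ r ∈ S, ∀ s ∈ S, ENNReal.ofReal ((s - r) * s ^ k) ≤ T) :
    ∫⁻ r in S, ENNReal.ofReal (r ^ k) ≤ T := by
  rcases S.eq_empty_or_nonempty with rfl | hne
  · simp
  have hbelow : BddBelow S := ⟨0, hS0⟩
  have hIcc : S ⊆ Icc (sInf S) (sSup S) := fun s hs ↦ ⟨csInf_le hbelow hs, le_csSup hbdd hs⟩
  have hsup : 0 ≤ sSup S := let ⟨_, hs⟩ := hne; (hS0 hs).trans (hIcc hs).2
  have hclosed : IsClosed {p : ℝ × ℝ | ENNReal.ofReal ((p.2 - p.1) * p.2 ^ k) ≤ T} :=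
    isClosed_le (ENNReal.continuous_ofReal.comp (by fun_prop)) continuous_const
  have hclosure := closure_minimal (s := S ×ˢ S) (fun p hp ↦ hT _ hp.1 _ hp.2) hclosed
  rw [closure_prod_eq] at hclosure
  have hextreme : ENNReal.ofReal ((sSup S - sInf S) * sSup S ^ k) ≤ T :=
    hclosure (mk_mem_prod (csInf_mem_closure hne hbelow) (csSup_mem_closure hne hbdd))
  calc ∫⁻ r in S, ENNReal.ofReal (r ^ k) ≤ ∫⁻ _ in S, ENNReal.ofReal (sSup S ^ k) :=
        setLIntegral_mono' hS fun r hr ↦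
          ENNReal.ofReal_le_ofReal (pow_le_pow_left₀ (hS0 hr) (hIcc hr).2 _)
    _ ≤ ENNReal.ofReal (sSup S ^ k) * ENNReal.ofReal (sSup S - sInf S) := by
        rw [setLIntegral_const, ← Real.volume_Icc]
        gcongr
    _ ≤ T := by rwa [← ENNReal.ofReal_mul (by positivity), mul_comm]

theorem setLIntegral_ray_diff_le [MeasurableSpace V] [BorelSpace V] {Z U A : Set V}
    (hZ : StarConvex ℝ 0 Z) (hZb : Bornology.IsBounded Z) (hU : StarConvex ℝ 0 U)
    (hAU : MeasurableSet (A \ U)) (hAZ : A ⊆ Z) {H : V → W} {L : NNReal} (hH : LipschitzWith L H)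
    {ω : V} (hω : ‖ω‖ = 1)
    (hdiff : ∀ᵐ r ∂volume.restrict (Ioi (0 : ℝ)), DifferentiableAt ℝ H (r • ω)) {n : ℕ}
    (hn : n ≠ 0) {c : ℝ} (hc : 0 ≤ c) (hA : ∀ z ∈ A, (1 + c * ‖H z‖)⁻¹ • z ∈ U) :
    ∫⁻ r in Ioi (0 : ℝ), ENNReal.ofReal (r ^ (n - 1)) * (A \ U).indicator 1 (r • ω) ≤
      ENNReal.ofReal c * ∫⁻ r in Ioi (0 : ℝ), ENNReal.ofReal (r ^ (n - 1)) *
        Z.indicator (fun z ↦ ENNReal.ofReal (n * ‖H z‖ + ‖z‖ * ‖fderiv ℝ H z‖)) (r • ω) := by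
  set T := ∫⁻ r in Ioi (0 : ℝ), ENNReal.ofReal (r ^ (n - 1)) *
    Z.indicator (fun z ↦ ENNReal.ofReal (n * ‖H z‖ + ‖z‖ * ‖fderiv ℝ H z‖)) (r • ω)
  set S : Set ℝ := (fun r ↦ r • ω) ⁻¹' (A \ U) ∩ Ioi 0
  have hmeas : Measurable fun r : ℝ ↦ r • ω := (by fun_prop : Continuous _).measurable
  have hslice : ∫⁻ r in Ioi (0 : ℝ), ENNReal.ofReal (r ^ (n - 1)) *
      (A \ U).indicator 1 (r • ω) = ∫⁻ r in S, ENNReal.ofReal (r ^ (n - 1)) := by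
    rw [← Measure.restrict_restrict (hmeas hAU), ← lintegral_indicator (hmeas hAU)]
    refine lintegral_congr fun r ↦ ?_
    by_cases hr : r • ω ∈ A \ U
    · have hr' : r ∈ (fun r : ℝ ↦ r • ω) ⁻¹' (A \ U) := hr
      rw [indicator_of_mem hr, indicator_of_mem hr', Pi.one_apply, mul_one]
    · have hr' : r ∉ (fun r : ℝ ↦ r • ω) ⁻¹' (A \ U) := hr
      rw [indicator_of_notMem hr, indicator_of_notMem hr', mul_zero]
  have hbdd : BddAbove S := by
    obtain ⟨M, hM⟩ := hZb.exists_norm_le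
    refine ⟨M, fun s hs ↦ ?_⟩
    have hnorm := hM _ (hAZ hs.1.1)
    rwa [norm_smul, hω, mul_one, Real.norm_of_nonneg (mem_Ioi.1 hs.2).le] at hnorm
  have hray (s) (hs : s ∈ S) : ENNReal.ofReal (‖H (s • ω)‖ * s ^ n) ≤ T := by
    refine (ofReal_norm_mul_pow_le_setLIntegral hH hω hdiff hn (mem_Ioi.1 hs.2).le).trans ?_
    refine (setLIntegral_mono' measurableSet_Ioc fun r hr ↦ ?_).trans
      (lintegral_mono_set Ioc_subset_Ioi_self)
    have hmem := hZ.smul_mem (hAZ hs.1.1) (div_nonneg hr.1.le (mem_Ioi.1 hs.2).le)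
      (div_le_one_of_le₀ hr.2 (mem_Ioi.1 hs.2).le)
    rw [smul_smul, div_mul_cancel₀ _ (mem_Ioi.1 hs.2).ne'] at hmem
    rw [indicator_of_mem hmem]
  rw [hslice]
  refine setLIntegral_pow_le_of_sub_mul_pow_le ((hmeas hAU).inter measurableSet_Ioi)
    (fun r hr ↦ (mem_Ioi.1 hr.2).le) hbdd fun r hr s hs ↦ ?_
  have hs0 : 0 < s := hs.2
  have hsub := sub_le_mul_of_inv_smul_mem hU hr.2 hs0.le (by positivity) hr.1.2 (hA _ hs.1.1)
  refine le_trans ?_ (mul_le_mul_right (hray s hs) _)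
  rw [← ENNReal.ofReal_mul hc, ← mul_pow_sub_one hn s]
  refine ENNReal.ofReal_le_ofReal ((mul_le_mul_of_nonneg_right hsub (by positivity)).trans_eq ?_)
  ring

end

section Polar

variable {E : Type*} [NormedAddCommGroup E] [NormedSpace ℝ E] [FiniteDimensional ℝ E]
  [MeasurableSpace E] [BorelSpace E] (μ : Measure E) [μ.IsAddHaarMeasure]

theorem lintegral_eq_lintegral_toSphere [Nontrivial E] {f : E → ENNReal} (hf : Measurable f) :
    ∫⁻ x, f x ∂μ = ∫⁻ ω, (∫⁻ r in Ioi (0 : ℝ),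
      ENNReal.ofReal (r ^ (Module.finrank ℝ E - 1)) * f (r • (ω : E))) ∂μ.toSphere := by
  let g : Metric.sphere (0 : E) 1 × Ioi (0 : ℝ) → ENNReal := fun p ↦ f ((p.2 : ℝ) • (p.1 : E))
  have hg : Measurable g := hf.comp (by fun_prop)
  have hfg (x : ({0}ᶜ : Set E)) : f x = g (homeomorphUnitSphereProd E x) := by
    have hinv := congrArg Subtype.val ((homeomorphUnitSphereProd E).symm_apply_apply x)
    rw [homeomorphUnitSphereProd_symm_apply_coe] at hinv
    exact congrArg f hinv.symm
  calc ∫⁻ x, f x ∂μ = ∫⁻ x : ({0}ᶜ : Set E), f x ∂μ.comap (↑) := by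
        rw [lintegral_subtype_comap (measurableSet_singleton _).compl f, restrict_compl_singleton]
    _ = ∫⁻ p, g p ∂μ.toSphere.prod (Measure.volumeIoiPow (Module.finrank ℝ E - 1)) := by
        rw [← μ.measurePreserving_homeomorphUnitSphereProd.lintegral_comp hg]
        simp only [hfg]
    _ = _ := by
        rw [lintegral_prod _ hg.aemeasurable]
        refine lintegral_congr fun ω ↦ ?_
        have hgω : Measurable fun r ↦ g (ω, r) := hg.comp measurable_prodMk_left
        rw [Measure.volumeIoiPow, lintegral_withDensity_eq_lintegral_mul _ (by fun_prop)
          hgω, ← lintegral_subtype_comap measurableSet_Ioi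
          fun r ↦ ENNReal.ofReal (r ^ (Module.finrank ℝ E - 1)) * f (r • (ω : E))]
        rfl

theorem ae_toSphere_ae_smul {P : E → Prop} (hP : ∀ᵐ x ∂μ, P x) :
    ∀ᵐ ω : Metric.sphere (0 : E) 1 ∂μ.toSphere,
      ∀ᵐ r ∂volume.restrict (Ioi (0 : ℝ)), P (r • (ω : E)) := by
  have hsub : ∀ᵐ x : ({0}ᶜ : Set E) ∂μ.comap (↑), P x := by
    rw [← ae_restrict_iff_subtype (measurableSet_singleton _).compl]
    exact ae_restrict_of_ae hP
  have hprod : ∀ᵐ p : Metric.sphere (0 : E) 1 × Ioi (0 : ℝ)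
      ∂μ.toSphere.prod (Measure.volumeIoiPow (Module.finrank ℝ E - 1)),
      P ((p.2 : ℝ) • (p.1 : E)) := by
    have hmp := μ.measurePreserving_homeomorphUnitSphereProd.symm
      (homeomorphUnitSphereProd E).toMeasurableEquiv
    exact hmp.quasiMeasurePreserving.ae hsub
  filter_upwards [Measure.ae_ae_of_ae_prod hprod] with ω hω
  rw [Measure.volumeIoiPow, ae_withDensity_iff (by fun_prop)] at hω
  rw [ae_restrict_iff_subtype measurableSet_Ioi]
  filter_upwards [hω] with r hr
  exact hr (by simpa using pow_pos r.2 _)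

theorem measure_diff_le_mul_setLIntegral [Nontrivial E] {W : Type*} [NormedAddCommGroup W]
    [NormedSpace ℝ W] [FiniteDimensional ℝ W] {Z U A : Set E} (hZm : MeasurableSet Z)
    (hZ : StarConvex ℝ 0 Z) (hZb : Bornology.IsBounded Z) (hUm : MeasurableSet U)
    (hU : StarConvex ℝ 0 U) (hAm : MeasurableSet A) (hAZ : A ⊆ Z) {H : E → W} {L : NNReal}
    (hH : LipschitzWith L H) {c : ℝ} (hc : 0 ≤ c) (hA : ∀ z ∈ A, (1 + c * ‖H z‖)⁻¹ • z ∈ U) :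
    μ (A \ U) ≤ ENNReal.ofReal c *
      ∫⁻ z in Z, ENNReal.ofReal (Module.finrank ℝ E * ‖H z‖ + ‖z‖ * ‖fderiv ℝ H z‖) ∂μ := by
  have hdensity : Measurable fun z ↦
      ENNReal.ofReal (Module.finrank ℝ E * ‖H z‖ + ‖z‖ * ‖fderiv ℝ H z‖) := by
    have hHm : Measurable fun z ↦ ‖H z‖ := hH.continuous.norm.measurable
    fun_prop
  rw [← lintegral_indicator_one (hAm.diff hUm), ← lintegral_indicator hZm,
    lintegral_eq_lintegral_toSphere μ (measurable_one.indicator (hAm.diff hUm)),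
    lintegral_eq_lintegral_toSphere μ (hdensity.indicator hZm),
    ← lintegral_const_mul' _ _ ENNReal.ofReal_ne_top]
  refine lintegral_mono_ae ?_
  filter_upwards [ae_toSphere_ae_smul μ hH.ae_differentiableAt] with ω hω
  exact setLIntegral_ray_diff_le hZ hZb hU (hAm.diff hUm) hAZ hH (norm_eq_of_mem_sphere ω) hω
    Module.finrank_pos.ne' hc hA

end Polar

end Trace

/-! ### Isotropic position -/

section Isotropic

theorem exists_ne_zero_inner_lt_of_notMem {E : Type*} [NormedAddCommGroup E]
    [InnerProductSpace ℝ E] [CompleteSpace E] {Q : Set E} (hQ : IsClosed Q) (hQc : Convex ℝ Q)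
    (hQn : Q.Nonempty) {v : E} (hv : v ∉ Q) :
    ∃ θ : E, θ ≠ 0 ∧ ∀ a ∈ Q, inner ℝ θ a < inner ℝ θ v := by
  obtain ⟨f, u, hfQ, hfv⟩ := geometric_hahn_banach_closed_point hQc hQ hv
  set θ := (InnerProductSpace.toDual ℝ E).symm f
  have hθ (x : E) : inner ℝ θ x = f x := InnerProductSpace.toDual_symm_apply
  have hlt (a) (ha : a ∈ Q) : inner ℝ θ a < inner ℝ θ v := by
    rw [hθ, hθ]
    exact (hfQ a ha).trans hfv
  refine ⟨θ, fun h0 ↦ ?_, hlt⟩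
  obtain ⟨a, ha⟩ := hQn
  simpa [h0] using hlt a ha

variable {E : Type*} [NormedAddCommGroup E] [InnerProductSpace ℝ E] [FiniteDimensional ℝ E]
  [MeasurableSpace E] [BorelSpace E]

/-- The set `Z` is in isotropic position: its barycentre is the origin and the covariance form of
the uniform distribution on `Z` is the inner product. The moments are left unnormalized. -/
structure IsIsotropic (Z : Set E) : Prop where
  setIntegral_inner (θ : E) : ∫ z in Z, inner ℝ θ z = 0
  setIntegral_inner_sq (θ : E) : ∫ z in Z, inner ℝ θ z ^ 2 = volume.real Z * ‖θ‖ ^ 2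

theorem setIntegral_comp_smul_add_smul_le {Z : Set E} (hZ : IsCompact Z) (hZc : Convex ℝ Z) {x : E}
    (hx : x ∈ Z) {t : ℝ} (ht0 : 0 ≤ t) (ht1 : t < 1) {f : E → ℝ} (hf : Continuous f)
    (hf0 : ∀ z, 0 ≤ f z) :
    ∫ w in Z, f (t • x + (1 - t) • w) ≤ ((1 - t) ^ Module.finrank ℝ E)⁻¹ * ∫ z in Z, f z := by
  have hInt : Integrable (Z.indicator f) :=
    (integrable_indicator_iff hZ.measurableSet).2 (hf.continuousOn.integrableOn_compact hZ)
  have hcomp : Integrable fun w ↦ Z.indicator f (t • x + (1 - t) • w) :=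
    (hInt.comp_add_left (t • x)).comp_smul (sub_pos.2 ht1).ne'
  have hchange : ∫ w, Z.indicator f (t • x + (1 - t) • w) =
      ((1 - t) ^ Module.finrank ℝ E)⁻¹ * ∫ z in Z, f z := by
    rw [Measure.integral_comp_smul volume (fun w ↦ Z.indicator f (t • x + w)),
      integral_add_left_eq_self (Z.indicator f), integral_indicator hZ.measurableSet, smul_eq_mul,
      abs_of_nonneg (inv_nonneg.2 (pow_nonneg (sub_nonneg.2 ht1.le) _))]
  rw [← hchange]
  refine le_trans (setIntegral_mono_on ?_ hcomp.integrableOn hZ.measurableSet fun w hw ↦ ?_)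
    (setIntegral_le_integral hcomp (.of_forall fun w ↦ Set.indicator_nonneg (fun z _ ↦ hf0 z) _))
  · exact (by fun_prop : Continuous _).continuousOn.integrableOn_compact hZ
  · rw [Set.indicator_of_mem (hZc hx hw ht0 (sub_nonneg.2 ht1.le) (by ring))]

namespace IsIsotropic

variable {Z : Set E}

theorem setIntegral_add_mul_inner_sq (hiso : IsIsotropic Z) (hZ : IsCompact Z) (θ : E) (a b : ℝ) :
    ∫ z in Z, (a + b * inner ℝ θ z) ^ 2 = volume.real Z * (a ^ 2 + b ^ 2 * ‖θ‖ ^ 2) := by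
  have hconst : IntegrableOn (fun _ : E ↦ a ^ 2) Z := integrableOn_const hZ.measure_ne_top
  have hlin : IntegrableOn (fun z : E ↦ 2 * a * b * inner ℝ θ z) Z :=
    (by fun_prop : Continuous _).continuousOn.integrableOn_compact hZ
  have hsq : IntegrableOn (fun z : E ↦ b ^ 2 * inner ℝ θ z ^ 2) Z :=
    (by fun_prop : Continuous _).continuousOn.integrableOn_compact hZ
  have hexpand (z : E) : (a + b * inner ℝ θ z) ^ 2 =
      a ^ 2 + 2 * a * b * inner ℝ θ z + b ^ 2 * inner ℝ θ z ^ 2 := by ring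
  simp only [hexpand]
  rw [integral_add (f := fun z ↦ a ^ 2 + 2 * a * b * inner ℝ θ z)
      (hconst.integrable.add hlin) hsq,
    integral_add hconst hlin, setIntegral_const, integral_const_mul, integral_const_mul,
    hiso.setIntegral_inner, hiso.setIntegral_inner_sq, smul_eq_mul]
  ring

-- Contracting `Z` towards `x` with ratio `1 - t`, `t = 1 / (2n)`, at most doubles the second moment
-- in the direction of `x`, while the shift by `t • x` alone contributes `t ^ 2 * ‖x‖ ^ 4`.
theorem subset_closedBall [Nontrivial E] (hiso : IsIsotropic Z) (hZ : IsCompact Z)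
    (hZc : Convex ℝ Z) (hZ0 : volume Z ≠ 0) :
    Z ⊆ Metric.closedBall 0 (3 * Module.finrank ℝ E) := by
  intro x hx
  set n := Module.finrank ℝ E
  have hn : (1 : ℝ) ≤ n := by exact_mod_cast Module.finrank_pos (R := ℝ) (M := E)
  obtain ⟨t, ht⟩ : ∃ t : ℝ, n * t = 1 / 2 := ⟨1 / (2 * n), by field_simp⟩
  have ht0 : 0 < t := by nlinarith
  have ht1 : t ≤ 1 / 2 := by nlinarith
  have hbernoulli : 1 / 2 ≤ (1 - t) ^ n := by
    have := one_add_mul_le_pow (a := -t) (by linarith) n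
    rw [← sub_eq_add_neg] at this
    linarith
  have hcontract := setIntegral_comp_smul_add_smul_le hZ hZc hx ht0.le (by linarith)
    (f := fun z ↦ inner ℝ x z ^ 2) (by fun_prop) fun z ↦ sq_nonneg _
  have hshift (w : E) : inner ℝ x (t • x + (1 - t) • w) =
      t * ‖x‖ ^ 2 + (1 - t) * inner ℝ x w := by
    rw [inner_add_right, real_inner_smul_right, real_inner_smul_right, real_inner_self_eq_norm_sq]
  simp only [hshift] at hcontract
  rw [hiso.setIntegral_add_mul_inner_sq hZ, hiso.setIntegral_inner_sq] at hcontract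
  have hinv : ((1 - t) ^ n)⁻¹ ≤ 2 := inv_le_of_inv_le₀ two_pos (by linarith)
  have hm : 0 < volume.real Z := ENNReal.toReal_pos hZ0 hZ.measure_ne_top
  have hmoment : (t * ‖x‖ ^ 2) ^ 2 + (1 - t) ^ 2 * ‖x‖ ^ 2 ≤ 2 * ‖x‖ ^ 2 := by
    refine le_of_mul_le_mul_left (hcontract.trans ?_) hm
    rw [mul_left_comm]
    gcongr
  rw [mem_closedBall_zero_iff]
  by_contra! hlt
  have htx : 3 / 2 < t * ‖x‖ := by
    calc (3 : ℝ) / 2 = t * (3 * n) := by linarith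
      _ < t * ‖x‖ := by gcongr
  have hx0 : 0 < ‖x‖ ^ 2 := pow_pos (by linarith) 2
  nlinarith [mul_nonneg (sq_nonneg (1 - t)) hx0.le, mul_lt_mul_of_pos_right
    (mul_self_lt_mul_self (by norm_num) htx) hx0]

theorem volume_mul_norm_le_mul_setIntegral_max_inner (hiso : IsIsotropic Z) (hZ : IsCompact Z)
    {R : ℝ} (hZR : Z ⊆ Metric.closedBall 0 R) (θ : E) :
    volume.real Z * ‖θ‖ ≤ 2 * R * ∫ z in Z, max (inner ℝ θ z) 0 := by
  rcases eq_or_ne θ 0 with rfl | hθ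
  · simp
  have hθ : 0 < ‖θ‖ := norm_pos_iff.2 hθ
  have hlin : IntegrableOn (fun z : E ↦ R * ‖θ‖ * inner ℝ θ z) Z :=
    (by fun_prop : Continuous _).continuousOn.integrableOn_compact hZ
  have hsq : IntegrableOn (fun z : E ↦ inner ℝ θ z ^ 2) Z :=
    (by fun_prop : Continuous _).continuousOn.integrableOn_compact hZ
  have hmax : IntegrableOn (fun z : E ↦ 2 * (R * ‖θ‖) * max (inner ℝ θ z) 0) Z :=
    (by fun_prop : Continuous _).continuousOn.integrableOn_compact hZ
  have hpointwise (z) (hz : z ∈ Z) : R * ‖θ‖ * inner ℝ θ z + inner ℝ θ z ^ 2 ≤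
      2 * (R * ‖θ‖) * max (inner ℝ θ z) 0 := by
    have hz : |inner ℝ θ z| ≤ R * ‖θ‖ := by
      rw [mul_comm]
      exact (abs_real_inner_le_norm _ _).trans (by gcongr; simpa using hZR hz)
    obtain ⟨hlower, hupper⟩ := abs_le.1 hz
    rcases le_total 0 (inner ℝ θ z) with h | h
    · rw [max_eq_left h]
      nlinarith
    · rw [max_eq_right h]
      nlinarith
  have hle := setIntegral_mono_on (hlin.add hsq) hmax hZ.measurableSet hpointwise
  simp only [Pi.add_apply] at hle
  rw [integral_add hlin hsq, integral_const_mul, integral_const_mul, hiso.setIntegral_inner,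
    hiso.setIntegral_inner_sq] at hle
  exact le_of_mul_le_mul_right (by linarith) hθ

end IsIsotropic

theorem setIntegral_max_inner_le {Z W Q : Set E} {R : ℝ} (hZ : IsCompact Z)
    (hZR : Z ⊆ Metric.closedBall 0 R) (hW : MeasurableSet W) {H : E → E} (hH : Continuous H)
    (hWQ : ∀ z ∈ W, (2 : ℝ)⁻¹ • (z + H z) ∈ Q) {θ : E} {r : ℝ} (hr : 0 ≤ r)
    (hθ : ∀ a ∈ Q, inner ℝ θ a ≤ ‖θ‖ * r) :
    ∫ z in Z, max (inner ℝ θ z) 0 ≤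
      ‖θ‖ * (2 * r * volume.real Z + (∫ z in Z, ‖H z‖) + R * volume.real (Z \ W)) := by
  have hmax : IntegrableOn (fun z : E ↦ max (inner ℝ θ z) 0) Z :=
    (by fun_prop : Continuous _).continuousOn.integrableOn_compact hZ
  have hconst : IntegrableOn (fun _ : E ↦ 2 * r) Z := integrableOn_const hZ.measure_ne_top
  have hnorm : IntegrableOn (fun z ↦ ‖H z‖) Z := hH.norm.continuousOn.integrableOn_compact hZ
  have hind : IntegrableOn (Wᶜ.indicator fun _ : E ↦ R) Z :=
    (integrableOn_const hZ.measure_ne_top).indicator hW.compl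
  have hpointwise (z) (hz : z ∈ Z) : max (inner ℝ θ z) 0 ≤
      ‖θ‖ * (2 * r + ‖H z‖ + Wᶜ.indicator (fun _ ↦ R) z) := by
    have hzR : ‖z‖ ≤ R := by simpa using hZR hz
    have hR : 0 ≤ R := (norm_nonneg z).trans hzR
    have hind0 : 0 ≤ Wᶜ.indicator (fun _ ↦ R) z := Set.indicator_nonneg (fun _ _ ↦ hR) z
    refine max_le ?_ (by positivity)
    by_cases hzW : z ∈ W
    · have hmem := hθ _ (hWQ z hzW)
      have hH := neg_le_of_abs_le (abs_real_inner_le_norm θ (H z))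
      rw [real_inner_smul_right, inner_add_right] at hmem
      rw [Set.indicator_of_notMem (Set.notMem_compl_iff.2 hzW)]
      linarith
    · rw [Set.indicator_of_mem (Set.mem_compl hzW)]
      refine (real_inner_le_norm θ z).trans (mul_le_mul_of_nonneg_left ?_ (norm_nonneg _))
      linarith [norm_nonneg (H z)]
  refine (setIntegral_mono_on hmax (((hconst.add hnorm).add hind).const_mul ‖θ‖)
    hZ.measurableSet hpointwise).trans_eq ?_
  simp only [Pi.add_apply]
  rw [integral_const_mul, integral_add (f := fun z ↦ 2 * r + ‖H z‖) (hconst.add hnorm) hind,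
    integral_add hconst hnorm, setIntegral_const, setIntegral_indicator hW.compl,
    setIntegral_const, smul_eq_mul, smul_eq_mul, ← Set.sdiff_eq, mul_comm (2 * r), mul_comm R]

theorem IsIsotropic.closedBall_subset {Z W Q : Set E} {R : ℝ} (hiso : IsIsotropic Z)
    (hZ : IsCompact Z) (hR : 0 < R) (hZR : Z ⊆ Metric.closedBall 0 R) (hW : MeasurableSet W)
    (hQ : IsClosed Q) (hQc : Convex ℝ Q) (hQn : Q.Nonempty) {H : E → E} (hH : Continuous H)
    (hWQ : ∀ z ∈ W, (2 : ℝ)⁻¹ • (z + H z) ∈ Q) {r : ℝ}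
    (hlt : 2 * R * (2 * r * volume.real Z + (∫ z in Z, ‖H z‖) + R * volume.real (Z \ W)) <
      volume.real Z) :
    Metric.closedBall 0 r ⊆ Q := by
  intro v hv
  by_contra hvQ
  rw [mem_closedBall_zero_iff] at hv
  obtain ⟨θ, hθ, hsep⟩ := exists_ne_zero_inner_lt_of_notMem hQ hQc hQn hvQ
  have hsupport (a) (ha : a ∈ Q) : inner ℝ θ a ≤ ‖θ‖ * r :=
    (hsep a ha).le.trans ((real_inner_le_norm θ v).trans (by gcongr))
  have hupper := setIntegral_max_inner_le hZ hZR hW hH hWQ ((norm_nonneg v).trans hv) hsupport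
  have hlower := hiso.volume_mul_norm_le_mul_setIntegral_max_inner hZ hZR θ
  have hstrict := mul_lt_mul_of_pos_right hlt (norm_pos_iff.2 hθ)
  have hupper := mul_le_mul_of_nonneg_left hupper (by positivity : 0 ≤ 2 * R)
  linarith

end Isotropic

/-! ### Equal volumes in isotropic position -/

section IsotropicStability

open Module
open scoped symmDiff

theorem inv_one_add_smul_mem_of_add_mem {V : Type*} [NormedAddCommGroup V] [NormedSpace ℝ V]
    {Q : Set V} (hQ : Convex ℝ Q) {r : ℝ} (hr : 0 < r) (hball : Metric.closedBall 0 r ⊆ Q)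
    {x h : V} (hx : x + h ∈ Q) : (1 + ‖h‖ / r)⁻¹ • x ∈ Q := by
  rcases eq_or_ne h 0 with rfl | h0
  · simpa using hx
  set a := ‖h‖ / r with ha
  have ha0 : 0 < a := div_pos (norm_pos_iff.2 h0) hr
  have hopposite : -(a⁻¹ • h) ∈ Q := by
    refine hball (mem_closedBall_zero_iff.2 (le_of_eq ?_))
    rw [norm_neg, norm_smul, Real.norm_of_nonneg (by positivity), ha]
    field_simp
  convert hQ hx hopposite (a := (1 + a)⁻¹) (b := (1 + a)⁻¹ * a) (by positivity) (by positivity)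
    (by field_simp) using 1
  rw [smul_neg, smul_smul, mul_assoc, mul_inv_cancel₀ ha0.ne', mul_one, smul_add,
    add_neg_cancel_right]

variable {E : Type*} [NormedAddCommGroup E] [InnerProductSpace ℝ E] [FiniteDimensional ℝ E]
  [MeasurableSpace E] [BorelSpace E]

theorem integrableOn_norm_fderiv {V : Type*} [NormedAddCommGroup V] [NormedSpace ℝ V]
    [CompleteSpace V] {U : Set E} {L : NNReal} {F : E → V} (hF : LipschitzWith L F)
    (hU : volume U ≠ ⊤) : IntegrableOn (fun x ↦ ‖fderiv ℝ F x‖) U :=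
  Measure.integrableOn_of_bounded hU (measurable_fderiv ℝ F).norm.aestronglyMeasurable (M := L)
    (.of_forall fun x ↦ by
      rw [norm_norm]
      exact norm_fderiv_le_of_lipschitz ℝ hF)

theorem sq_setIntegral_norm_fderiv_le {G : E → E} (hG : LipschitzWith 1 G) {U : Set E}
    (hU : volume U ≠ ⊤) :
    (∫ z in U, ‖fderiv ℝ G z‖) ^ 2 ≤
      volume.real U * ∫ z in U, hilbertSchmidtSq (fderiv ℝ G z) := by
  refine (sq_setIntegral_le_mul_setIntegral_sq hU (integrableOn_norm_fderiv hG hU)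
    (integrableOn_norm_fderiv_sq hG hU)).trans (mul_le_mul_of_nonneg_left ?_ measureReal_nonneg)
  exact integral_mono (integrableOn_norm_fderiv_sq hG hU)
    (integrableOn_hilbertSchmidtSq_fderiv hG hU) fun z ↦ norm_sq_le_hilbertSchmidtSq _

theorem exists_sq_setIntegral_norm_sub_le {Z : Set E} {R : ℝ} {L : NNReal} {G : E → E}
    (hR : 0 < R) (hZ : IsCompact Z) (hZc : Convex ℝ Z) (hZR : Z ⊆ Metric.closedBall 0 R)
    (hZ0 : volume Z ≠ 0) (hG : LipschitzWith L G) :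
    ∃ g : E, (∫ z in Z, ‖G z - g‖) ^ 2 ≤
      volume.real Z * (R ^ 2 * ∫ z in Z, hilbertSchmidtSq (fderiv ℝ G z)) := by
  obtain ⟨g, hg⟩ := exists_setIntegral_norm_sub_sq_le hR hZ hZc hZR hZ0 hG
  have hcont : Continuous fun z ↦ ‖G z - g‖ := (hG.continuous.sub continuous_const).norm
  exact ⟨g, (sq_setIntegral_le_mul_setIntegral_sq hZ.measure_ne_top
    (hcont.continuousOn.integrableOn_compact hZ)
    ((hcont.pow 2).continuousOn.integrableOn_compact hZ)).trans
    (mul_le_mul_of_nonneg_left hg measureReal_nonneg)⟩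

theorem volume_diff_le_mul_add_mul [Nontrivial E] {Z U A : Set E} {R : ℝ} (hZ : IsCompact Z)
    (hZc : StarConvex ℝ 0 Z) (hZR : Z ⊆ Metric.closedBall 0 R) (hUm : MeasurableSet U)
    (hU : StarConvex ℝ 0 U) (hAm : MeasurableSet A) (hAZ : A ⊆ Z) {H : E → E} {L : NNReal}
    (hH : LipschitzWith L H) {c : ℝ} (hc : 0 ≤ c) (hA : ∀ z ∈ A, (1 + c * ‖H z‖)⁻¹ • z ∈ U) :
    volume.real (A \ U) ≤
      c * (finrank ℝ E * (∫ z in Z, ‖H z‖) + R * ∫ z in Z, ‖fderiv ℝ H z‖) := by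
  have hnorm : IntegrableOn (fun z ↦ finrank ℝ E * ‖H z‖) Z :=
    (hH.continuous.norm.const_mul _).continuousOn.integrableOn_compact hZ
  have hfderiv : IntegrableOn (fun z ↦ R * ‖fderiv ℝ H z‖) Z :=
    (integrableOn_norm_fderiv hH hZ.measure_ne_top).const_mul R
  have hdensity : ∫⁻ z in Z, ENNReal.ofReal (finrank ℝ E * ‖H z‖ + ‖z‖ * ‖fderiv ℝ H z‖) ≤
      ∫⁻ z in Z, ENNReal.ofReal (finrank ℝ E * ‖H z‖ + R * ‖fderiv ℝ H z‖) := by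
    refine setLIntegral_mono' hZ.measurableSet fun z hz ↦ ENNReal.ofReal_le_ofReal ?_
    gcongr
    exact mem_closedBall_zero_iff.1 (hZR hz)
  have hnonneg : ∀ᵐ z ∂volume.restrict Z, 0 ≤ finrank ℝ E * ‖H z‖ + R * ‖fderiv ℝ H z‖ := by
    filter_upwards [ae_restrict_mem hZ.measurableSet] with z hz
    have hR : 0 ≤ R := (norm_nonneg z).trans (mem_closedBall_zero_iff.1 (hZR hz))
    positivity
  have htrace := (measure_diff_le_mul_setLIntegral volume hZ.measurableSet hZc hZ.isBounded hUm hU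
    hAm hAZ hH hc hA).trans (mul_le_mul_right hdensity _)
  rw [← ofReal_integral_eq_lintegral_ofReal
    (f := fun z ↦ finrank ℝ E * ‖H z‖ + R * ‖fderiv ℝ H z‖) (hnorm.integrable.add hfderiv)
    hnonneg, ← ENNReal.ofReal_mul hc, integral_add hnorm hfderiv, integral_const_mul,
    integral_const_mul] at htrace
  refine ENNReal.toReal_le_of_le_ofReal (mul_nonneg hc ?_) htrace
  rw [← integral_const_mul, ← integral_const_mul, ← integral_add hnorm hfderiv]
  exact integral_nonneg_of_ae hnonneg

theorem volume_symmDiff_eq_two_mul {P Q : Set E} (hP : IsCompact P) (hQ : IsCompact Q)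
    (hPQ : volume.real P = volume.real Q) :
    volume.real (P ∆ Q) = 2 * (volume.real P - volume.real (P ∩ Q)) := by
  have hP' := measureReal_sdiff_add_inter (μ := volume) (s := P) hQ.measurableSet hP.measure_ne_top
  have hQ' := measureReal_sdiff_add_inter (μ := volume) (s := Q) hP.measurableSet hQ.measure_ne_top
  rw [measureReal_symmDiff_eq hP.measurableSet hQ.measurableSet hP.measure_ne_top
    hQ.measure_ne_top]
  rw [Set.inter_comm] at hQ'
  linarith

theorem volume_smul_of_nonneg {r : ℝ} (hr : 0 ≤ r) (s : Set E) :
    volume.real (r • s) = r ^ finrank ℝ E * volume.real s := by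
  rw [measureReal_def, Measure.addHaar_smul_of_nonneg _ hr, ENNReal.toReal_mul,
    ENNReal.toReal_ofReal (by positivity), measureReal_def]

theorem IsIsotropic.volume_add_sub_le [Nontrivial E] {P Q W : Set E} {R r : ℝ} {L : NNReal}
    {H : E → E} (hiso : IsIsotropic (P + Q)) (hP : IsCompact P) (hPc : Convex ℝ P)
    (hPn : P.Nonempty) (hQ : IsCompact Q) (hQc : Convex ℝ Q) (hQn : Q.Nonempty) (hR : 0 < R)
    (hR' : P + Q ⊆ Metric.closedBall 0 R) (hW : MeasurableSet W)
    (hH : LipschitzWith L H) (hWP : ∀ z ∈ W, (2 : ℝ)⁻¹ • (z + H z) ∈ P)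
    (hWQ : ∀ z ∈ W, (2 : ℝ)⁻¹ • (z - H z) ∈ Q) (hr : 0 < r)
    (hlt : 2 * R * (2 * r * volume.real (P + Q) + (∫ z in P + Q, ‖H z‖) +
      R * volume.real ((P + Q) \ W)) < volume.real (P + Q)) :
    volume.real (P + Q) - 2 ^ finrank ℝ E * volume.real (P ∩ Q) ≤
      volume.real ((P + Q) \ W) + (2 * r)⁻¹ * (finrank ℝ E * (∫ z in P + Q, ‖H z‖) +
        R * ∫ z in P + Q, ‖fderiv ℝ H z‖) := by
  have hPQ := hP.add hQ
  have hWPQ : W ⊆ P + Q := fun z hz ↦ ⟨_, hWP z hz, _, hWQ z hz, by module⟩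
  have hWQ' (z) (hz : z ∈ W) : (2 : ℝ)⁻¹ • (z + -H z) ∈ Q := by
    simpa only [← sub_eq_add_neg] using hWQ z hz
  have hballP := hiso.closedBall_subset hPQ hR hR' hW hP.isClosed hPc hPn hH.continuous hWP hlt
  have hballQ := hiso.closedBall_subset (r := r) hPQ hR hR' hW hQ.isClosed hQc hQn
    (H := fun z ↦ -H z) hH.continuous.neg hWQ' (by simpa only [norm_neg] using hlt)
  have hzero : (0 : E) ∈ Metric.closedBall 0 r := by simpa using hr.le
  set U : Set E := (2 : ℝ) • (P ∩ Q)
  have hUsub : U ⊆ P + Q := by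
    rintro _ ⟨x, ⟨hxP, hxQ⟩, rfl⟩
    exact ⟨x, hxP, x, hxQ, (two_smul ℝ x).symm⟩
  have hU0 : (0 : E) ∈ U := ⟨0, ⟨hballP hzero, hballQ hzero⟩, smul_zero _⟩
  have hUm : MeasurableSet U := (hP.measurableSet.inter hQ.measurableSet).const_smul₀ _
  have hWU (z) (hz : z ∈ W) : (1 + (2 * r)⁻¹ * ‖H z‖)⁻¹ • z ∈ U := by
    have hscale : (2 * r)⁻¹ * ‖H z‖ = ‖(2 : ℝ)⁻¹ • H z‖ / r := by
      rw [norm_smul, norm_inv, Real.norm_ofNat]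
      field_simp
    rw [Set.mem_smul_set_iff_inv_smul_mem₀ two_ne_zero, smul_comm, hscale]
    refine ⟨inv_one_add_smul_mem_of_add_mem hPc hr hballP ?_, ?_⟩
    · simpa only [smul_add] using hWP z hz
    · rw [← norm_neg, ← smul_neg]
      exact inv_one_add_smul_mem_of_add_mem hQc hr hballQ (by simpa only [smul_add] using hWQ' z hz)
  have htrace := volume_diff_le_mul_add_mul hPQ ((hPc.add hQc).starConvex (hUsub hU0)) hR' hUm
    (((hPc.inter hQc).smul 2).starConvex hU0) hW hWPQ hH (by positivity) hWU
  have hsplit : volume.real ((P + Q) \ U) ≤ volume.real ((P + Q) \ W) + volume.real (W \ U) :=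
    (measureReal_mono (sdiff_triangle (P + Q) W U) (measure_ne_top_of_subset (Set.union_subset
      Set.sdiff_subset (Set.sdiff_subset.trans hWPQ)) hPQ.measure_ne_top)).trans
      (measureReal_union_le _ _)
  rw [measureReal_sdiff hUsub hUm hPQ.measure_ne_top, volume_smul_of_nonneg zero_le_two] at hsplit
  linarith

theorem volume_symmDiff_vadd_eq (K C : Set E) (u : E) :
    volume.real (K ∆ ((2 : ℝ) • u +ᵥ C)) = volume.real ((-u +ᵥ K) ∆ (u +ᵥ C)) := by
  rw [measureReal_def, measureReal_def, ← measure_vadd volume u ((-u +ᵥ K) ∆ (u +ᵥ C)),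
    Set.vadd_set_symmDiff, vadd_neg_vadd, vadd_vadd, two_smul]

theorem IsTransportSplitting.two_pow_mul_volume_symmDiff_le [Nontrivial E] {K C W : Set E}
    {S : E → E} (h : IsTransportSplitting K C S W) (hiso : IsIsotropic (K + C)) (hK : IsCompact K)
    (hKc : Convex ℝ K) (hC : IsCompact C) (hCc : Convex ℝ C) (hK0 : volume K ≠ 0)
    (hKC : volume.real K = volume.real C) {R r : ℝ} (hR : 0 < R)
    (hR' : K + C ⊆ Metric.closedBall 0 R) (hr : 0 < r) (g : E)
    (hlt : 2 * R * (2 * r * volume.real (K + C) +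
      (∫ z in K + C, ‖splittingDifference S z - g‖) +
      R * (volume.real (K + C) - 2 ^ finrank ℝ E * volume.real K)) < volume.real (K + C)) :
    2 ^ finrank ℝ E * volume.real (K ∆ (g +ᵥ C)) ≤
      2 * (volume.real (K + C) - 2 ^ finrank ℝ E * volume.real K +
        (2 * r)⁻¹ * (finrank ℝ E * (∫ z in K + C, ‖splittingDifference S z - g‖) +
          R * ∫ z in K + C, ‖fderiv ℝ (splittingDifference S) z‖)) := by
  obtain ⟨u, rfl⟩ : ∃ u : E, g = (2 : ℝ) • u := ⟨(2 : ℝ)⁻¹ • g, by module⟩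
  set G := splittingDifference S
  have hdeficit := h.volume_add_diff_le hK hC hK0 hKC
  have hsum : (-u +ᵥ K) + (u +ᵥ C) = K + C := by
    rw [vadd_add_assoc, add_vadd_comm, neg_vadd_vadd]
  have hKn : K.Nonempty := nonempty_of_measure_ne_zero hK0
  have hCn : C.Nonempty := nonempty_of_measure_ne_zero (μ := volume) fun hC0 ↦
    (ENNReal.toReal_pos hK0 hK.measure_ne_top).ne' (hKC.trans (by simp [measureReal_def, hC0]))
  have hoverlap := IsIsotropic.volume_add_sub_le (P := -u +ᵥ K) (Q := u +ᵥ C) (W := W)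
    (H := fun z ↦ G z - (2 : ℝ) • u) (L := 1) (by rwa [hsum]) (hK.vadd _) (hKc.vadd _)
    (hKn.vadd_set) (hC.vadd _) (hCc.vadd _) (hCn.vadd_set) hR (by rwa [hsum]) h.measurableSet
    (by simpa using h.lipschitzWith_splittingDifference.sub (LipschitzWith.const ((2 : ℝ) • u)))
    (fun z hz ↦ ⟨S z, h.apply_mem z hz, by simp only [G, splittingDifference, vadd_eq_add]; module⟩)
    (fun z hz ↦ ⟨z - S z, h.sub_apply_mem z hz, by
      simp only [G, splittingDifference, vadd_eq_add]; module⟩) hr (by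
      rw [hsum]
      refine lt_of_le_of_lt ?_ hlt
      gcongr)
  simp only [hsum, fderiv_sub_const] at hoverlap
  rw [volume_symmDiff_vadd_eq, volume_symmDiff_eq_two_mul (hK.vadd _) (hC.vadd _)
    (by simpa [measureReal_def] using hKC), measureReal_def volume (-u +ᵥ K), measure_vadd,
    ← measureReal_def]
  have hnonneg : 0 ≤ volume.real ((K + C) \ W) := measureReal_nonneg
  linarith

-- The hypothesis `hlt` of `IsIsotropic.volume_add_sub_le` with `R = 3 * n` and `r = 1 / (24 * n)`.
theorem six_mul_add_lt_of_deficit_lt {n m Δ p : ℝ} (hn : 2 ≤ n) (hm : 0 < m) (hΔ : 0 ≤ Δ)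
    (hsmall : 676 * n ^ 16 * Δ < m) (hp : p ^ 2 ≤ 27 * n ^ 3 * (m * Δ)) :
    2 * (3 * n) * (2 * (24 * n)⁻¹ * m + p + 3 * n * Δ) < m := by
  have hn5 : 15552 * n ^ 5 ≤ 676 * n ^ 16 := by
    calc 15552 * n ^ 5 ≤ 676 * 2 ^ 11 * n ^ 5 := by gcongr; norm_num
      _ ≤ 676 * n ^ 11 * n ^ 5 := by gcongr
      _ = 676 * n ^ 16 := by ring
  have hn2 : 72 * n ^ 2 ≤ 676 * n ^ 16 := by
    calc 72 * n ^ 2 ≤ 676 * 2 ^ 14 * n ^ 2 := by gcongr; norm_num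
      _ ≤ 676 * n ^ 14 * n ^ 2 := by gcongr
      _ = 676 * n ^ 16 := by ring
  have hp' : 24 * n * p < m := by
    refine lt_of_pow_lt_pow_left₀ 2 hm.le ?_
    calc (24 * n * p) ^ 2 = 576 * n ^ 2 * p ^ 2 := by ring
      _ ≤ 576 * n ^ 2 * (27 * n ^ 3 * (m * Δ)) := by gcongr
      _ = 15552 * n ^ 5 * Δ * m := by ring
      _ ≤ 676 * n ^ 16 * Δ * m := by gcongr
      _ < m * m := by gcongr
      _ = m ^ 2 := (sq m).symm
  have hΔ' : 72 * n ^ 2 * Δ < m := lt_of_le_of_lt (by gcongr) hsmall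
  have hexpand : 2 * (3 * n) * (2 * (24 * n)⁻¹ * m + p + 3 * n * Δ) =
      m / 2 + 24 * n * p / 4 + 72 * n ^ 2 * Δ / 4 := by
    field_simp
    ring
  linarith

theorem sq_add_twelve_mul_le {n m w Δ p q : ℝ} (hn : 2 ≤ n) (hΔ : 0 ≤ Δ) (hΔw : Δ ≤ w)
    (hm : m = w + Δ) (hp : p ^ 2 ≤ 27 * n ^ 3 * (m * Δ)) (hq : q ^ 2 ≤ 3 * n * (m * Δ)) :
    (2 * (Δ + (2 * (24 * n)⁻¹)⁻¹ * (n * p + 3 * n * q))) ^ 2 ≤ 2704 * n ^ 16 * w * Δ := by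
  have hw : 0 ≤ w := hΔ.trans hΔw
  have hmw : m * Δ ≤ 2 * (w * Δ) := by rw [hm]; nlinarith
  have hsum : (n * p + 3 * n * q) ^ 2 ≤ 216 * n ^ 5 * (w * Δ) := by
    have hp' : n ^ 2 * p ^ 2 ≤ 27 * n ^ 5 * (m * Δ) :=
      (mul_le_mul_of_nonneg_left hp (sq_nonneg n)).trans_eq (by ring)
    have hq' : n ^ 2 * q ^ 2 ≤ 3 * n ^ 5 * (m * Δ) :=
      calc n ^ 2 * q ^ 2 ≤ n ^ 2 * (3 * n * (m * Δ)) := by gcongr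
        _ = 3 * n ^ 3 * (m * Δ) := by ring
        _ ≤ 3 * n ^ 5 * (m * Δ) := by
            have : 0 ≤ m := by linarith
            gcongr <;> linarith
    have hmono : 108 * n ^ 5 * (m * Δ) ≤ 108 * n ^ 5 * (2 * (w * Δ)) := by gcongr
    linarith [sq_nonneg (n * p - 3 * n * q)]
  have hscale : (2 * (24 * n)⁻¹)⁻¹ = 12 * n := by
    field_simp
    norm_num
  have hn7 : Δ ^ 2 ≤ n ^ 7 * (w * Δ) := by
    have hone : (1 : ℝ) ≤ n ^ 7 := one_le_pow₀ (by linarith)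
    nlinarith [mul_le_mul_of_nonneg_right hΔw hΔ, mul_nonneg hw hΔ]
  rw [hscale]
  calc (2 * (Δ + 12 * n * (n * p + 3 * n * q))) ^ 2 ≤
        8 * Δ ^ 2 + 1152 * n ^ 2 * (n * p + 3 * n * q) ^ 2 := by
        linarith [sq_nonneg (Δ - 12 * n * (n * p + 3 * n * q))]
    _ ≤ 8 * (n ^ 7 * (w * Δ)) + 1152 * n ^ 2 * (216 * n ^ 5 * (w * Δ)) := by gcongr
    _ = 248840 * (n ^ 7 * (w * Δ)) := by ring
    _ ≤ 2704 * 2 ^ 9 * (n ^ 7 * (w * Δ)) := by gcongr; norm_num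
    _ ≤ 2704 * n ^ 9 * (n ^ 7 * (w * Δ)) := by gcongr
    _ = 2704 * n ^ 16 * w * Δ := by ring

theorem IsTransportSplitting.exists_volume_symmDiff_sq_le [Nontrivial E] {K C W : Set E}
    {S : E → E} (h : IsTransportSplitting K C S W) (hn : 2 ≤ finrank ℝ E)
    (hiso : IsIsotropic (K + C)) (hK : IsCompact K) (hKc : Convex ℝ K) (hC : IsCompact C)
    (hCc : Convex ℝ C) (hK0 : volume K ≠ 0) (hKC : volume.real K = volume.real C)
    (hsmall : 676 * finrank ℝ E ^ 16 *
      (volume.real (K + C) - 2 ^ finrank ℝ E * volume.real K) < 2 ^ finrank ℝ E * volume.real K) :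
    ∃ x : E, (2 ^ finrank ℝ E * volume.real (K ∆ (x +ᵥ C))) ^ 2 ≤
      2704 * finrank ℝ E ^ 16 * (2 ^ finrank ℝ E * volume.real K) *
        (volume.real (K + C) - 2 ^ finrank ℝ E * volume.real K) := by
  have hKC' := hK.add hC
  have hG := h.lipschitzWith_splittingDifference
  have henergy := h.setIntegral_hilbertSchmidtSq_le hK hC hK0 hKC
  have hΔ : 0 ≤ volume.real (K + C) - 2 ^ finrank ℝ E * volume.real K :=
    measureReal_nonneg.trans (h.volume_add_diff_le hK hC hK0 hKC)
  have hn' : (2 : ℝ) ≤ finrank ℝ E := by exact_mod_cast hn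
  have hbound := h.two_pow_mul_volume_symmDiff_le hiso hK hKc hC hCc hK0 hKC
    (R := 3 * finrank ℝ E) (r := (24 * finrank ℝ E : ℝ)⁻¹) (by positivity)
  have hm : volume.real (K + C) = 2 ^ finrank ℝ E * volume.real K +
    (volume.real (K + C) - 2 ^ finrank ℝ E * volume.real K) := by ring
  set n : ℝ := (finrank ℝ E : ℝ)
  set w := 2 ^ finrank ℝ E * volume.real K
  set Δ := volume.real (K + C) - w
  have hΔn : Δ ≤ 676 * n ^ 16 * Δ :=
    le_mul_of_one_le_left hΔ (by nlinarith [one_le_pow₀ (n := 16) (one_le_two.trans hn')])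
  have hm0 : 0 < volume.real (K + C) := by linarith
  have hZ0 : volume (K + C) ≠ 0 := fun h0 ↦ hm0.ne' (by simp [measureReal_def, h0])
  have hball : K + C ⊆ Metric.closedBall 0 (3 * n) :=
    hiso.subset_closedBall hKC' (hKc.add hCc) hZ0
  obtain ⟨g, hg⟩ :=
    exists_sq_setIntegral_norm_sub_le (by positivity) hKC' (hKc.add hCc) hball hZ0 hG
  have hp : (∫ z in K + C, ‖splittingDifference S z - g‖) ^ 2 ≤
      27 * n ^ 3 * (volume.real (K + C) * Δ) := by
    refine (hg.trans ?_).trans_eq (b := volume.real (K + C) * ((3 * n) ^ 2 * (3 * n * Δ))) (by ring)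
    gcongr
  have hq : (∫ z in K + C, ‖fderiv ℝ (splittingDifference S) z‖) ^ 2 ≤
      3 * n * (volume.real (K + C) * Δ) := by
    refine ((sq_setIntegral_norm_fderiv_le hG hKC'.measure_ne_top).trans ?_).trans_eq
      (b := volume.real (K + C) * (3 * n * Δ)) (by ring)
    gcongr
  have hlt := six_mul_add_lt_of_deficit_lt hn' hm0 hΔ (by linarith) hp
  refine ⟨g, (pow_le_pow_left₀ (by positivity) (hbound hball (by positivity) g hlt) 2).trans ?_⟩
  exact sq_add_twelve_mul_le hn' hΔ (by linarith) hm hp hq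

theorem IsIsotropic.exists_volume_symmDiff_sq_le {K C : Set E} (hn : 2 ≤ finrank ℝ E)
    (hiso : IsIsotropic (K + C)) (hK : IsCompact K) (hKc : Convex ℝ K) (hC : IsCompact C)
    (hCc : Convex ℝ C) (hK0 : volume K ≠ 0) (hKC : volume.real K = volume.real C) :
    ∃ x : E, (2 ^ finrank ℝ E * volume.real (K ∆ (x +ᵥ C))) ^ 2 ≤
      2704 * finrank ℝ E ^ 16 * (2 ^ finrank ℝ E * volume.real K) *
        (volume.real (K + C) - 2 ^ finrank ℝ E * volume.real K) := by
  have : Nontrivial E := Module.nontrivial_of_finrank_pos (R := ℝ) (by omega)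
  have hV : 0 < volume.real K := ENNReal.toReal_pos hK0 hK.measure_ne_top
  have hC0 : volume C ≠ 0 := fun h0 ↦ hV.ne' (hKC.trans (by simp [measureReal_def, h0]))
  obtain ⟨S, W, h⟩ := exists_isTransportSplitting hK hC hK0 hC0
  rcases lt_or_ge (676 * finrank ℝ E ^ 16 *
    (volume.real (K + C) - 2 ^ finrank ℝ E * volume.real K)) (2 ^ finrank ℝ E * volume.real K)
    with hsmall | hlarge
  · exact h.exists_volume_symmDiff_sq_le hn hiso hK hKc hC hCc hK0 hKC hsmall
  refine ⟨0, ?_⟩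
  set w := 2 ^ finrank ℝ E * volume.real K
  set Δ := volume.real (K + C) - w
  have htrivial : 2 ^ finrank ℝ E * volume.real (K ∆ C) ≤ 2 * w := by
    have hinter : 0 ≤ 2 ^ finrank ℝ E * volume.real (K ∩ C) := by positivity
    rw [volume_symmDiff_eq_two_mul hK hC hKC]
    linarith
  rw [zero_vadd]
  calc (2 ^ finrank ℝ E * volume.real (K ∆ C)) ^ 2 ≤ (2 * w) ^ 2 := by gcongr
    _ = 4 * w * w := by ring
    _ ≤ 4 * w * (676 * finrank ℝ E ^ 16 * Δ) := by gcongr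
    _ = 2704 * finrank ℝ E ^ 16 * w * Δ := by ring

end IsotropicStability

/-! ### Reduction to isotropic position -/

section IsotropicPosition

open Module
open scoped symmDiff

variable {E : Type*} [NormedAddCommGroup E] [InnerProductSpace ℝ E] [FiniteDimensional ℝ E]

theorem exists_isPositive_mul_self_eq {T : E →ₗ[ℝ] E} (hT : T.IsPositive) :
    ∃ B : E →ₗ[ℝ] E, B.IsPositive ∧ B * B = T := by
  set b := hT.isSymmetric.eigenvectorBasis rfl
  set eig := hT.isSymmetric.eigenvalues rfl
  have hTb (i) : T (b i) = eig i • b i := hT.isSymmetric.apply_eigenvectorBasis rfl i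
  have hnonneg : ∀ i, 0 ≤ eig i := hT.nonneg_eigenvalues rfl
  set B : E →ₗ[ℝ] E := ∑ i, √(eig i) • (InnerProductSpace.rankOne ℝ (b i) (b i)).toLinearMap
  have hB (j) : B (b j) = √(eig j) • b j := by
    simp [B, LinearMap.sum_apply, b.inner_eq_ite]
  refine ⟨B, LinearMap.isPositive_sum _ fun i _ ↦ ?_, b.toBasis.ext fun i ↦ ?_⟩
  · exact (InnerProductSpace.isPositive_rankOne_self (b i)).toLinearMap.smul_of_nonneg
      (Real.sqrt_nonneg _)
  · simp [hB, hTb, smul_smul, Real.mul_self_sqrt (hnonneg i)]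

variable [MeasurableSpace E] [BorelSpace E]

theorem setIntegral_inner_sq_pos {Z : Set E} (hZ : IsCompact Z) (hZ0 : volume Z ≠ 0) {θ : E}
    (hθ : θ ≠ 0) : 0 < ∫ z in Z, inner ℝ θ z ^ 2 := by
  have hInt : IntegrableOn (fun z ↦ inner ℝ θ z ^ 2) Z :=
    (by fun_prop : Continuous fun z ↦ inner ℝ θ z ^ 2).continuousOn.integrableOn_compact hZ
  rw [setIntegral_pos_iff_support_of_nonneg_ae (.of_forall fun z ↦ sq_nonneg _) hInt]
  have hplane : volume ((ℝ ∙ θ)ᗮ : Set E) = 0 :=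
    Measure.addHaar_submodule volume _ (by simpa [Submodule.orthogonal_eq_top_iff] using hθ)
  have hsupport : (Function.support fun z ↦ inner ℝ θ z ^ 2) ∩ Z = Z \ ((ℝ ∙ θ)ᗮ : Set E) := by
    ext z
    simp [Submodule.mem_orthogonal_singleton_iff_inner_right, and_comm]
  rw [hsupport, measure_sdiff_null hplane]
  exact pos_iff_ne_zero.2 hZ0

theorem setIntegral_image_continuousLinearEquiv {F : Type*} [NormedAddCommGroup F]
    [NormedSpace ℝ F] (T : E ≃L[ℝ] E) {s : Set E} (hs : MeasurableSet s) (g : E → F) :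
    ∫ z in T '' s, g z = |(T : E →L[ℝ] E).det| • ∫ z in s, g (T z) := by
  rw [integral_image_eq_integral_abs_det_fderiv_smul volume hs
    (fun x _ ↦ T.hasFDerivAt.hasFDerivWithinAt) T.injective.injOn, integral_smul]

theorem volume_image_continuousLinearEquiv (T : E ≃L[ℝ] E) (s : Set E) :
    volume.real (T '' s) = |(T : E →L[ℝ] E).det| * volume.real s := by
  simp [measureReal_def, Measure.addHaar_image_continuousLinearEquiv, ContinuousLinearMap.det]

theorem exists_continuousLinearEquiv_setIntegral_inner_sq {Z : Set E} (hZ : IsCompact Z)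
    (hZ0 : volume Z ≠ 0) :
    ∃ T : E ≃L[ℝ] E, ∀ θ : E, ∫ z in Z, inner ℝ θ (T z) ^ 2 = volume.real Z * ‖θ‖ ^ 2 := by
  have hm : 0 < volume.real Z := ENNReal.toReal_pos hZ0 hZ.measure_ne_top
  have : IsFiniteMeasure (volume.restrict Z) := ⟨by simpa using hZ.measure_lt_top⟩
  obtain ⟨R, hR⟩ := hZ.isBounded.exists_norm_le
  have hmem : MemLp id 2 (volume.restrict Z) := MemLp.of_bound aestronglyMeasurable_id R
    ((ae_restrict_mem hZ.measurableSet).mono fun z hz ↦ hR z hz)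
  obtain ⟨B, hB, hBB⟩ := exists_isPositive_mul_self_eq
    ((ProbabilityTheory.isPositive_covarianceOperator (μ := volume.restrict Z)).smul_of_nonneg
      (inv_nonneg.2 hm.le))
  have hnorm (θ : E) : ∫ z in Z, inner ℝ θ z ^ 2 = volume.real Z * ‖B θ‖ ^ 2 := by
    rw [← real_inner_self_eq_norm_sq, ← hB.isSymmetric, ← Module.End.mul_apply, hBB,
      LinearMap.smul_apply, inner_smul_left, ContinuousLinearMap.coe_coe,
      ProbabilityTheory.covarianceOperator_inner hmem]
    simp [← sq, hm.ne']
  have hinj : Function.Injective B := by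
    refine (injective_iff_map_eq_zero B).2 fun θ hθ ↦ by_contra fun hθ0 ↦ ?_
    exact (setIntegral_inner_sq_pos hZ hZ0 hθ0).ne' (by simp [hnorm, hθ])
  set L := LinearEquiv.ofInjectiveEndo B hinj
  have hL (θ : E) : B (L.symm θ) = θ := L.apply_symm_apply θ
  refine ⟨L.symm.toContinuousLinearEquiv, fun θ ↦ ?_⟩
  have hadjoint (z : E) : inner ℝ θ (L.symm z) = inner ℝ (L.symm θ) z := by
    conv_lhs => rw [← hL θ, hB.isSymmetric, hL]
  simp only [LinearEquiv.coe_toContinuousLinearEquiv', hadjoint, hnorm, hL]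

theorem exists_isIsotropic_image {Z : Set E} (hZ : IsCompact Z) (hZ0 : volume Z ≠ 0) :
    ∃ (T : E ≃L[ℝ] E) (c : E), IsIsotropic (T '' (c +ᵥ Z)) := by
  have hm : 0 < volume.real Z := ENNReal.toReal_pos hZ0 hZ.measure_ne_top
  set c := (volume.real Z)⁻¹ • ∫ z in Z, z
  have hcentred (θ : E) : ∫ z in -c +ᵥ Z, inner ℝ θ z = 0 := by
    have hInt : IntegrableOn (fun z : E ↦ z) Z := continuousOn_id.integrableOn_compact hZ
    have hconst : IntegrableOn (fun _ : E ↦ c) Z := integrableOn_const hZ.measure_ne_top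
    have htranslate : ∫ z in -c +ᵥ Z, inner ℝ θ z = ∫ z in Z, inner ℝ θ (-c +ᵥ z) :=
      (measurePreserving_vadd (-c) volume).setIntegral_image_emb
        (measurableEmbedding_const_vadd _) _ _
    simp only [vadd_eq_add, neg_add_eq_sub] at htranslate
    rw [htranslate, integral_inner (f := fun z ↦ z - c) (hInt.integrable.sub hconst),
      integral_sub hInt hconst, setIntegral_const, smul_inv_smul₀ hm.ne', sub_self,
      inner_zero_right]
  have hcompact : IsCompact (-c +ᵥ Z) := hZ.vadd _
  obtain ⟨T, hT⟩ := exists_continuousLinearEquiv_setIntegral_inner_sq hcompact (by simpa using hZ0)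
  have hadjoint (θ z : E) : inner ℝ θ (T z) = inner ℝ ((T : E →L[ℝ] E).adjoint θ) z :=
    ((T : E →L[ℝ] E).adjoint_inner_left z θ).symm
  refine ⟨T, -c, fun θ ↦ ?_, fun θ ↦ ?_⟩
  · rw [setIntegral_image_continuousLinearEquiv T hcompact.measurableSet]
    simp only [hadjoint, hcentred, smul_zero]
  · rw [setIntegral_image_continuousLinearEquiv T hcompact.measurableSet, hT,
      volume_image_continuousLinearEquiv, smul_eq_mul, mul_assoc]

theorem volume_add_ne_zero {A B : Set E} (hA : volume A ≠ 0) (hB : B.Nonempty) :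
    volume (A + B) ≠ 0 := by
  obtain ⟨b, hb⟩ := hB
  refine fun h0 ↦ hA (measure_mono_null (t := -b +ᵥ (A + B)) ?_ (by rwa [measure_vadd]))
  exact fun a ha ↦ Set.mem_vadd_set.2 ⟨a + b, Set.add_mem_add ha hb, by simp [add_comm]⟩

theorem exists_volume_symmDiff_sq_le {K C : Set E} (hn : 2 ≤ finrank ℝ E) (hK : IsCompact K)
    (hKc : Convex ℝ K) (hC : IsCompact C) (hCc : Convex ℝ C) (hK0 : volume K ≠ 0)
    (hKC : volume.real K = volume.real C) :
    ∃ x : E, (2 ^ finrank ℝ E * volume.real (K ∆ (x +ᵥ C))) ^ 2 ≤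
      2704 * finrank ℝ E ^ 16 * (2 ^ finrank ℝ E * volume.real K) *
        (volume.real (K + C) - 2 ^ finrank ℝ E * volume.real K) := by
  have hCn : C.Nonempty := nonempty_of_measure_ne_zero (μ := volume) fun hC0 ↦
    (ENNReal.toReal_pos hK0 hK.measure_ne_top).ne' (hKC.trans (by simp [measureReal_def, hC0]))
  obtain ⟨T, c, hiso⟩ := exists_isIsotropic_image (hK.add hC) (volume_add_ne_zero hK0 hCn)
  set d := |(T : E →L[ℝ] E).det|
  have hvadd (y : E) (s : Set E) : volume.real (T '' (y +ᵥ s)) = d * volume.real s := by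
    rw [volume_image_continuousLinearEquiv, measureReal_def, measure_vadd, measureReal_def]
  have hdet := T.toLinearEquiv.isUnit_det'.ne_zero
  have hd : 0 < d := abs_pos.2 hdet
  have hsum : T '' (c +ᵥ (K + C)) = T '' (c +ᵥ K) + T '' C := by
    rw [← Set.image_add, vadd_add_assoc]
  obtain ⟨x, hx⟩ := IsIsotropic.exists_volume_symmDiff_sq_le hn (hsum ▸ hiso)
    ((hK.vadd c).image T.continuous) ((hKc.vadd c).linear_image T.toLinearMap)
    (hC.image T.continuous) (hCc.linear_image T.toLinearMap)
    (by simpa [Measure.addHaar_image_continuousLinearEquiv] using ⟨hdet, hK0⟩)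
    (by rw [hvadd, volume_image_continuousLinearEquiv, hKC])
  refine ⟨-c + T.symm x, ?_⟩
  have hsymmDiff : (T '' (c +ᵥ K)) ∆ (x +ᵥ T '' C) =
      T '' (c +ᵥ (K ∆ ((-c + T.symm x) +ᵥ C))) := by
    rw [Set.vadd_set_symmDiff, Set.image_symmDiff T.injective, add_vadd, vadd_neg_vadd]
    simp only [← Set.image_vadd, Set.image_image, vadd_eq_add, map_add, T.apply_symm_apply]
  rw [← hsum, hsymmDiff] at hx
  simp only [hvadd] at hx
  refine le_of_mul_le_mul_left ?_ (pow_pos hd 2)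
  linarith

end IsotropicPosition

/-! ### Numerical inequalities -/

section Numeric

/-- The constant `γ*` of the theorem in dimension `n`. -/
def stabilityConst (n : ℕ) : ℝ :=
  ((2 - (2 : ℝ) ^ (((n : ℝ) - 1) / n)) ^ ((3 : ℝ) / 2) / (122 * (n : ℝ) ^ 7)) ^ 2

theorem two_rpow_sub_one_div_eq {x : ℝ} (hx : x ≠ 0) :
    (2 : ℝ) ^ ((x - 1) / x) = 2 * Real.exp (-(Real.log 2 / x)) := by
  rw [Real.rpow_def_of_pos two_pos, sub_div, div_self hx, mul_sub, mul_one, Real.exp_sub,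
    Real.exp_log two_pos, Real.exp_neg, mul_one_div, div_eq_mul_inv]

theorem two_sub_two_rpow_nonneg {x : ℝ} (hx : 0 < x) : 0 ≤ 2 - (2 : ℝ) ^ ((x - 1) / x) := by
  have hexp : Real.exp (-(Real.log 2 / x)) ≤ 1 :=
    Real.exp_le_one_iff.2 (neg_nonpos.2 (by positivity))
  rw [two_rpow_sub_one_div_eq hx.ne']
  linarith

theorem two_sub_two_rpow_mul_le {x : ℝ} (hx : 0 < x) :
    (2 - (2 : ℝ) ^ ((x - 1) / x)) * x ≤ 2 * Real.log 2 := by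
  have hexp := Real.add_one_le_exp (-(Real.log 2 / x))
  rw [two_rpow_sub_one_div_eq hx.ne', ← le_div_iff₀ hx, mul_div_assoc]
  linarith

theorem stabilityConst_mul_le {n : ℕ} (hn : n ≠ 0) :
    stabilityConst n * (5408 * (n : ℝ) ^ 17) ≤ 1 := by
  have hn0 : (0 : ℝ) < n := by positivity
  rw [stabilityConst]
  set g := 2 - (2 : ℝ) ^ (((n : ℝ) - 1) / n)
  have hg0 : 0 ≤ g := two_sub_two_rpow_nonneg hn0
  have hgn : g * n ≤ 1.4 :=
    (two_sub_two_rpow_mul_le hn0).trans (by linarith [Real.log_two_lt_d9])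
  have hsq : (g ^ ((3 : ℝ) / 2)) ^ 2 = g ^ 3 := by
    rw [← Real.rpow_natCast, ← Real.rpow_mul hg0, ← Real.rpow_natCast]
    norm_num
  calc (g ^ ((3 : ℝ) / 2) / (122 * (n : ℝ) ^ 7)) ^ 2 * (5408 * (n : ℝ) ^ 17)
      = (g * n) ^ 3 * (5408 / 14884) := by
        rw [div_pow, hsq]
        field_simp
        norm_num
    _ ≤ 1.4 ^ 3 * (5408 / 14884) := by gcongr
    _ ≤ 1 := by norm_num

theorem one_add_pow_le_one_add_two_mul {n : ℕ} {y : ℝ} (hy : 0 ≤ y) (hny : n * y ≤ 1 / 2) :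
    (1 + y) ^ n ≤ 1 + 2 * n * y := by
  have hny0 : 0 ≤ n * y := by positivity
  calc (1 + y) ^ n ≤ Real.exp (n * y) := by
        rw [Real.exp_nat_mul]
        gcongr
        linarith [Real.add_one_le_exp y]
    _ ≤ 1 / (1 - n * y) := Real.exp_bound_div_one_sub_of_interval hny0 (by linarith)
    _ ≤ 1 + 2 * n * y := by
        rw [div_le_iff₀ (by linarith)]
        nlinarith

theorem two_mul_one_add_mul_sq_pow_le {n : ℕ} (hn : n ≠ 0) {γ d v : ℝ} (hγ0 : 0 ≤ γ)
    (hγ : γ * (5408 * (n : ℝ) ^ 17) ≤ 1) (hd0 : 0 ≤ d) (hd2 : d ≤ 2)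
    (hdv : (2 ^ n * d) ^ 2 ≤ 2704 * (n : ℝ) ^ 16 * 2 ^ n * (v - 2 ^ n)) :
    (2 * (1 + γ * d ^ 2)) ^ n ≤ v := by
  have hn1 : (1 : ℝ) ≤ n := Nat.one_le_cast.2 (Nat.one_le_iff_ne_zero.2 hn)
  have hv : 0 ≤ v - 2 ^ n :=
    nonneg_of_mul_nonneg_right (le_trans (by positivity) hdv) (by positivity)
  have hnγ : n * (γ * d ^ 2) ≤ 1 / 2 := by
    have hle : γ * (5408 * n) ≤ 1 :=
      le_trans (by gcongr; exact le_self_pow₀ hn1 (by norm_num)) hγ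
    have hd4 : d ^ 2 ≤ 4 := by nlinarith
    calc n * (γ * d ^ 2) ≤ n * (γ * 4) := by gcongr
      _ ≤ 1 / 2 := by linarith
  have hexcess : 2 ^ n * (2 * n * (γ * d ^ 2)) ≤ v - 2 ^ n := by
    have hpos : (0 : ℝ) < 2 ^ n := by positivity
    refine le_of_mul_le_mul_left ?_ hpos
    calc 2 ^ n * (2 ^ n * (2 * n * (γ * d ^ 2))) = 2 * n * γ * (2 ^ n * d) ^ 2 := by ring
      _ ≤ 2 * n * γ * (2704 * (n : ℝ) ^ 16 * 2 ^ n * (v - 2 ^ n)) := by gcongr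
      _ = γ * (5408 * (n : ℝ) ^ 17) * (2 ^ n * (v - 2 ^ n)) := by ring
      _ ≤ 1 * (2 ^ n * (v - 2 ^ n)) := by gcongr
      _ = 2 ^ n * (v - 2 ^ n) := one_mul _
  calc (2 * (1 + γ * d ^ 2)) ^ n = 2 ^ n * (1 + γ * d ^ 2) ^ n := mul_pow ..
    _ ≤ 2 ^ n * (1 + 2 * n * (γ * d ^ 2)) := by
        gcongr
        exact one_add_pow_le_one_add_two_mul (by positivity) hnγ
    _ ≤ v := by linarith

theorem pow_sub_one_sq_div_le {t : ℝ} (ht : 1 ≤ t) (n : ℕ) :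
    ((t ^ 2) ^ n - 1) ^ 2 / (32 * n * ((t ^ 2) ^ n) ^ 2) ≤ n * ((t - 1) ^ 2 / (2 * t)) := by
  rcases n.eq_zero_or_pos with rfl | hn
  · simp
  have : 0 < t := by linarith
  have hinv : 0 < t⁻¹ := by positivity
  have hinv1 : t⁻¹ ^ (2 * n) ≤ 1 := pow_le_one₀ hinv.le (inv_le_one_of_one_le₀ ht)
  have hbernoulli : 1 - t⁻¹ ^ (2 * n) ≤ 2 * n * ((t - 1) / t) := by
    have h := one_add_mul_le_pow (a := t⁻¹ - 1) (by linarith) (2 * n)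
    rw [add_sub_cancel] at h
    have heq : (t - 1) / t = 1 - t⁻¹ := by field_simp
    rw [heq]
    push_cast at h
    linarith
  calc ((t ^ 2) ^ n - 1) ^ 2 / (32 * n * ((t ^ 2) ^ n) ^ 2)
      = (1 - t⁻¹ ^ (2 * n)) ^ 2 / (32 * n) := by
        rw [inv_pow, pow_mul]
        field_simp
    _ ≤ (2 * n * ((t - 1) / t)) ^ 2 / (32 * n) := by
        have := sub_nonneg.2 hinv1
        gcongr
    _ = n * ((t - 1) ^ 2 / (8 * t * t)) := by field_simp; ring
    _ ≤ n * ((t - 1) ^ 2 / (2 * t)) := by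
        gcongr ?_ * (_ / ?_)
        nlinarith

theorem one_add_add_le_half_add_inv_pow {t y : ℝ} (ht : 1 ≤ t) (hy : 0 ≤ y) (n : ℕ) :
    1 + ((t ^ 2) ^ n - 1) ^ 2 / (32 * n * ((t ^ 2) ^ n) ^ 2) + n * y / t ^ 2 ≤
      ((t + t⁻¹) / 2 + y / t) ^ n := by
  have : 0 < t := by linarith
  have hexcess : 0 ≤ (t - 1) ^ 2 / (2 * t) := by positivity
  have hmean : (t + t⁻¹) / 2 = 1 + (t - 1) ^ 2 / (2 * t) := by field_simp; ring
  have hle : n * y / t ^ 2 ≤ n * (y / t) := by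
    rw [mul_div_assoc]
    gcongr
    nlinarith
  calc 1 + ((t ^ 2) ^ n - 1) ^ 2 / (32 * n * ((t ^ 2) ^ n) ^ 2) + n * y / t ^ 2
      ≤ 1 + n * ((t - 1) ^ 2 / (2 * t)) + n * (y / t) := by
        gcongr 1 + ?_ + ?_
        exact pow_sub_one_sq_div_le ht n
    _ ≤ ((t + t⁻¹) / 2) ^ n + n * (y / t) := by
        rw [hmean]
        gcongr
        exact one_add_mul_le_pow (by linarith) n
    _ ≤ ((t + t⁻¹) / 2) ^ n + n * ((t + t⁻¹) / 2) ^ (n - 1) * (y / t) := by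
        gcongr
        exact le_mul_of_one_le_right n.cast_nonneg (one_le_pow₀ (by linarith))
    _ ≤ ((t + t⁻¹) / 2 + y / t) ^ n := by
        have : 0 ≤ y / t := by positivity
        exact pow_add_mul_le_add_pow (by positivity) (by positivity) n

-- Dividing by `√(ab)ⁿ` reduces the inequality to the single variable `t = √(a/b)`.
theorem sqrt_mul_pow_mul_le_half_add_pow {a b y : ℝ} (hb : 0 < b) (hab : b ≤ a) (hy : 0 ≤ y)
    (n : ℕ) :
    √(a ^ n * b ^ n) *
        (1 + (a ^ n / b ^ n - 1) ^ 2 / (32 * n * (a ^ n / b ^ n) ^ 2) + n * y / (a / b)) ≤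
      ((a + b) / 2 + b * y) ^ n := by
  have ha : 0 < a := hb.trans_le hab
  have ht : √(a / b) ^ 2 = a / b := Real.sq_sqrt (by positivity)
  have ht1 : 1 ≤ √(a / b) := Real.one_le_sqrt.2 ((one_le_div hb).2 hab)
  have hgt : √(a * b) * √(a / b) = a := by
    rw [← Real.sqrt_mul (by positivity), show a * b * (a / b) = a ^ 2 by field_simp,
      Real.sqrt_sq ha.le]
  have hgb : √(a * b) / √(a / b) = b := by
    rw [← Real.sqrt_div (by positivity), show a * b / (a / b) = b ^ 2 by field_simp,
      Real.sqrt_sq hb.le]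
  have hsqrt : √((a * b) ^ n) = √(a * b) ^ n := by
    rw [Real.sqrt_eq_iff_mul_self_eq_of_pos (by positivity), ← mul_pow,
      Real.mul_self_sqrt (by positivity)]
  calc √(a ^ n * b ^ n) *
        (1 + (a ^ n / b ^ n - 1) ^ 2 / (32 * n * (a ^ n / b ^ n) ^ 2) + n * y / (a / b))
      ≤ √(a * b) ^ n * ((√(a / b) + (√(a / b))⁻¹) / 2 + y / √(a / b)) ^ n := by
        rw [← mul_pow, hsqrt, ← div_pow]
        gcongr
        simpa only [ht] using one_add_add_le_half_add_inv_pow ht1 hy n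
    _ = ((√(a * b) * √(a / b) + √(a * b) / √(a / b)) / 2 + √(a * b) / √(a / b) * y) ^ n := by
        rw [← mul_pow]
        ring
    _ = ((a + b) / 2 + b * y) ^ n := by rw [hgt, hgb]

end Numeric

/-! ### Bodies of different volume -/

section DifferentVolumes

open Module
open scoped symmDiff

variable {E : Type*} [NormedAddCommGroup E] [InnerProductSpace ℝ E] [FiniteDimensional ℝ E]
  [MeasurableSpace E] [BorelSpace E] {K C : Set E}

theorem exists_preimage_eq_Icc (f : ℝ ≃ₗᵢ[ℝ] E) (hK : IsCompact K) (hKc : Convex ℝ K)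
    (hK0 : volume K ≠ 0) : ∃ p, f ⁻¹' K = Set.Icc p (p + volume.real K) := by
  have hvol : volume.real (f ⁻¹' K) = volume.real K := by
    rw [measureReal_def,
      f.measurePreserving.measure_preimage hK.measurableSet.nullMeasurableSet, measureReal_def]
  have hne : (f ⁻¹' K).Nonempty :=
    (nonempty_of_measure_ne_zero hK0).preimage f.surjective
  have hIcc := eq_Icc_of_connected_compact
    ⟨hne, (hKc.linear_preimage f.toLinearEquiv.toLinearMap).isPreconnected⟩
    (f.toHomeomorph.isClosedEmbedding.isCompact_preimage hK)
  refine ⟨sInf (f ⁻¹' K), hIcc.trans ?_⟩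
  have hlength : volume.real (f ⁻¹' K) = sSup (f ⁻¹' K) - sInf (f ⁻¹' K) :=
    (congrArg volume.real hIcc).trans
      (Real.volume_real_Icc_of_le (Set.nonempty_Icc.1 (hIcc ▸ hne)))
  rw [← hvol, hlength, add_sub_cancel]

theorem exists_eq_vadd_of_finrank_eq_one (hE : finrank ℝ E = 1) (hK : IsCompact K)
    (hKc : Convex ℝ K) (hC : IsCompact C) (hCc : Convex ℝ C) (hK0 : volume K ≠ 0)
    (hKC : volume K = volume C) : ∃ x : E, K = x +ᵥ C := by
  let f : ℝ ≃ₗᵢ[ℝ] E := (OrthonormalBasis.singleton (Fin 1) ℝ).repr.trans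
    ((stdOrthonormalBasis ℝ E).reindex (finCongr hE)).repr.symm
  obtain ⟨p, hp⟩ := exists_preimage_eq_Icc f hK hKc hK0
  obtain ⟨q, hq⟩ := exists_preimage_eq_Icc f hC hCc (hKC ▸ hK0)
  have hpq : Set.Icc p (p + volume.real K) = (p - q) +ᵥ Set.Icc q (q + volume.real C) := by
    rw [← Set.image_vadd, measureReal_def, hKC, ← measureReal_def]
    simp [add_comm]
  refine ⟨f (p - q), ?_⟩
  rw [← Set.image_preimage_eq K f.surjective, hp, hpq, ← hq, ← Set.image_vadd, Set.image_image]
  simp only [vadd_eq_add, map_add]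
  rw [← Set.image_image (f (p - q) + ·), Set.image_preimage_eq C f.surjective]
  rfl

theorem add_pow_finrank_le_volume_add [Nontrivial E] {p q : ℝ} (hK : IsCompact K)
    (hC : IsCompact C) (hp : 0 < p) (hq : 0 < q) (hpK : p ^ finrank ℝ E ≤ volume.real K)
    (hqC : q ^ finrank ℝ E ≤ volume.real C) :
    (p + q) ^ finrank ℝ E ≤ volume.real (K + C) := by
  have hE : finrank ℝ E ≠ 0 := finrank_pos.ne'
  have hle {r : ℝ} {S : Set E} (hr : 0 < r) (hrS : r ^ finrank ℝ E ≤ volume.real S) :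
      volume S ≠ 0 ∧ r ≤ volume.real S ^ (finrank ℝ E : ℝ)⁻¹ := by
    refine ⟨fun h0 ↦ ((pow_pos hr _).trans_le hrS).ne' (by simp [measureReal_def, h0]), ?_⟩
    rw [Real.le_rpow_inv_iff_of_pos hr.le measureReal_nonneg (by positivity)]
    simpa using hrS
  obtain ⟨hK0, hpK⟩ := hle hp hpK
  obtain ⟨hC0, hqC⟩ := hle hq hqC
  have hBM := (add_le_add hpK hqC).trans (volume_rpow_add_volume_rpow_le hK hC hK0 hC0)
  rw [Real.le_rpow_inv_iff_of_pos (by positivity) measureReal_nonneg (by positivity)] at hBM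
  simpa using hBM

theorem exists_two_mul_one_add_pow_le_volume_add [Nontrivial E] {γ : ℝ} (hγ0 : 0 ≤ γ)
    (hγ : γ * (5408 * (finrank ℝ E : ℝ) ^ 17) ≤ 1) (hK : IsCompact K) (hKc : Convex ℝ K)
    (hC : IsCompact C) (hCc : Convex ℝ C) (hK1 : volume K = 1) (hC1 : volume C = 1) :
    ∃ x : E, (2 * (1 + γ * volume.real (K ∆ (x +ᵥ C)) ^ 2)) ^ finrank ℝ E ≤
      volume.real (K + C) := by
  have hK1' : volume.real K = 1 := by simp [measureReal_def, hK1]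
  have hC1' : volume.real C = 1 := by simp [measureReal_def, hC1]
  have hE : 1 ≤ finrank ℝ E := finrank_pos
  rcases hE.eq_or_lt with hE | hE
  · obtain ⟨x, rfl⟩ := exists_eq_vadd_of_finrank_eq_one hE.symm hK hKc hC hCc (by simp [hK1])
      (hK1.trans hC1.symm)
    refine ⟨x, ?_⟩
    have hBM := add_pow_finrank_le_volume_add hK hC one_pos one_pos (by simp [hK1'])
      (by simp [hC1'])
    simpa [one_add_one_eq_two] using hBM
  obtain ⟨x, hx⟩ := exists_volume_symmDiff_sq_le hE hK hKc hC hCc (by simp [hK1])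
    (hK1'.trans hC1'.symm)
  refine ⟨x, ?_⟩
  have hd2 : volume.real (K ∆ (x +ᵥ C)) ≤ 2 := by
    calc volume.real (K ∆ (x +ᵥ C)) ≤ volume.real (K ∪ (x +ᵥ C)) :=
          measureReal_mono symmDiff_le_sup (hK.union (hC.vadd x)).measure_ne_top
      _ ≤ volume.real K + volume.real (x +ᵥ C) := measureReal_union_le _ _
      _ = 2 := by
        rw [hK1', measureReal_def, measure_vadd, hC1]
        norm_num
  refine two_mul_one_add_mul_sq_pow_le finrank_pos.ne' hγ0 hγ measureReal_nonneg hd2 ?_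
  simpa only [hK1', mul_one] using hx

/-- The dilate of `K` of volume one, for compact `K` of positive volume. -/
def unitVolume (K : Set E) : Set E := volume.real K ^ (-(1 : ℝ) / finrank ℝ E) • K

theorem unitVolume_eq_inv_smul (K : Set E) :
    unitVolume K = (volume.real K ^ (finrank ℝ E : ℝ)⁻¹)⁻¹ • K := by
  rw [unitVolume, neg_div, one_div, Real.rpow_neg measureReal_nonneg]

theorem volume_unitVolume [Nontrivial E] (hK : IsCompact K) (hK0 : volume K ≠ 0) :
    volume (unitVolume K) = 1 := by
  have hpos : 0 < volume.real K := ENNReal.toReal_pos hK0 hK.measure_ne_top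
  have hroot := Real.rpow_inv_natCast_pow hpos.le (finrank_pos (R := ℝ) (M := E)).ne'
  rw [unitVolume_eq_inv_smul, Measure.addHaar_smul, abs_of_pos (by positivity), inv_pow, hroot,
    ENNReal.ofReal_inv_of_pos hpos, ofReal_measureReal hK.measure_ne_top]
  exact ENNReal.inv_mul_cancel hK0 hK.measure_ne_top

-- Splitting `aK = (a - b)K + bK` leaves the equal-volume sum `b(K + C)`, to which the bound `s`
-- applies, and a dilate of `K`.
theorem sub_add_mul_pow_le_volume_smul_add_smul [Nontrivial E] {a b s : ℝ} (hK : IsCompact K)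
    (hKc : Convex ℝ K) (hC : IsCompact C) (hK1 : volume K = 1) (hs : 0 < s)
    (hsKC : s ^ finrank ℝ E ≤ volume.real (K + C)) (hb : 0 < b) (hab : b ≤ a) :
    (a - b + b * s) ^ finrank ℝ E ≤ volume.real (a • K + b • C) := by
  have hvol : (b * s) ^ finrank ℝ E ≤ volume.real (b • (K + C)) := by
    rw [volume_smul_of_nonneg hb.le, mul_pow]
    gcongr
  rcases hab.eq_or_lt with rfl | hlt
  · simpa [smul_add] using hvol
  have hsplit : (a - b) • K + b • (K + C) = a • K + b • C := by
    rw [smul_add, ← add_assoc, ← hKc.add_smul (sub_nonneg.2 hab) hb.le, sub_add_cancel]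
  rw [← hsplit]
  refine add_pow_finrank_le_volume_add (hK.smul _) ((hK.add hC).smul _) (sub_pos.2 hlt)
    (by positivity) ?_ hvol
  rw [volume_smul_of_nonneg (sub_nonneg.2 hab), measureReal_def, hK1, ENNReal.toReal_one, mul_one]

theorem sqrt_volume_mul_le_volume_half_smul_add [Nontrivial E] {y : ℝ} (hK : IsCompact K)
    (hKc : Convex ℝ K) (hC : IsCompact C) (hC0 : volume C ≠ 0)
    (hCK : volume.real C ≤ volume.real K) (hy : 0 ≤ y)
    (hyKC : (2 * (1 + y)) ^ finrank ℝ E ≤ volume.real (unitVolume K + unitVolume C)) :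
    √(volume.real K * volume.real C) *
        (1 + (volume.real K / volume.real C - 1) ^ 2 /
            (32 * finrank ℝ E * (volume.real K / volume.real C) ^ 2) +
          finrank ℝ E * y / (volume.real K / volume.real C) ^ ((1 : ℝ) / finrank ℝ E)) ≤
      volume.real ((2 : ℝ)⁻¹ • (K + C)) := by
  have hCpos : 0 < volume.real C := ENNReal.toReal_pos hC0 hC.measure_ne_top
  have hKpos : 0 < volume.real K := hCpos.trans_le hCK
  have hK0 : volume K ≠ 0 := fun h0 ↦ hKpos.ne' (by simp [measureReal_def, h0])
  have hE : finrank ℝ E ≠ 0 := finrank_pos.ne'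
  set n := finrank ℝ E
  set a := volume.real K ^ (n : ℝ)⁻¹
  set b := volume.real C ^ (n : ℝ)⁻¹
  have hb0 : 0 < b := by positivity
  have hab : b ≤ a := Real.rpow_le_rpow hCpos.le hCK (by positivity)
  have hKa : a ^ n = volume.real K := Real.rpow_inv_natCast_pow hKpos.le hE
  have hCb : b ^ n = volume.real C := Real.rpow_inv_natCast_pow hCpos.le hE
  have hdiv : (volume.real K / volume.real C) ^ ((1 : ℝ) / n) = a / b := by
    rw [one_div, Real.div_rpow hKpos.le hCpos.le]
  have hsum : a • unitVolume K + b • unitVolume C = K + C := by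
    rw [unitVolume_eq_inv_smul, unitVolume_eq_inv_smul, smul_inv_smul₀ (hb0.trans_le hab).ne',
      smul_inv_smul₀ hb0.ne']
  have hBM := sub_add_mul_pow_le_volume_smul_add_smul (hK.smul _) (hKc.smul _) (hC.smul _)
    (volume_unitVolume hK hK0) (by positivity) hyKC hb0 hab
  calc _ ≤ ((a + b) / 2 + b * y) ^ n := by
        rw [hdiv, ← hKa, ← hCb]
        exact sqrt_mul_pow_mul_le_half_add_pow hb0 hab hy n
    _ = (2 : ℝ)⁻¹ ^ n * (a - b + b * (2 * (1 + y))) ^ n := by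
        rw [← mul_pow]
        ring
    _ ≤ (2 : ℝ)⁻¹ ^ n * volume.real (K + C) := by
        rw [← hsum]
        gcongr
        exact hBM
    _ = volume.real ((2 : ℝ)⁻¹ • (K + C)) := by
        rw [volume_smul_of_nonneg (by norm_num)]

end DifferentVolumes

/-! ### The stability theorem -/

section HomotheticDistance

open Module
open scoped symmDiff

variable {n : ℕ} (K C : Set (EuclideanSpace ℝ (Fin n)))

theorem homDist_nonneg : 0 ≤ homDist K C := by
  refine Real.sInf_nonneg ?_
  rintro _ ⟨x, rfl⟩
  exact ENNReal.toReal_nonneg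

theorem homDist_le (x : EuclideanSpace ℝ (Fin n)) :
    homDist K C ≤ volume.real (unitVolume K ∆ (x +ᵥ unitVolume C)) := by
  refine csInf_le ⟨0, ?_⟩ ⟨x, ?_⟩
  · rintro _ ⟨x, rfl⟩
    exact ENNReal.toReal_nonneg
  · rw [unitVolume, unitVolume, finrank_euclideanSpace_fin, ← Set.singleton_vadd]
    rfl

variable {K C}

theorem volRatio_eq_div_of_le (hC0 : 0 < volume.real C) (hCK : volume.real C ≤ volume.real K) :
    volRatio K C = volume.real K / volume.real C :=
  max_eq_right (div_le_div₀ measureReal_nonneg hCK hC0 hCK)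

theorem volRatio_comm : volRatio K C = volRatio C K :=
  max_comm _ _

theorem stabilityConst_mul_homDist_sq_le_volume_add (hn : n ≠ 0) (hK : IsCompact K)
    (hKc : Convex ℝ K) (hC : IsCompact C) (hCc : Convex ℝ C) (hK0 : volume K ≠ 0)
    (hC0 : volume C ≠ 0) :
    (2 * (1 + stabilityConst n * homDist K C ^ 2)) ^ n ≤
      volume.real (unitVolume K + unitVolume C) := by
  have : NeZero n := ⟨hn⟩
  have hγ : 0 ≤ stabilityConst n := sq_nonneg _
  obtain ⟨x, hx⟩ := exists_two_mul_one_add_pow_le_volume_add (K := unitVolume K)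
    (C := unitVolume C) hγ
    (by simpa only [finrank_euclideanSpace_fin] using stabilityConst_mul_le hn)
    (hK.smul _) (hKc.smul _) (hC.smul _) (hCc.smul _) (volume_unitVolume hK hK0)
    (volume_unitVolume hC hC0)
  rw [finrank_euclideanSpace_fin] at hx
  refine le_trans ?_ hx
  gcongr
  · exact homDist_nonneg K C
  · exact homDist_le K C x

theorem sqrt_volume_mul_le_of_volume_le (hn : n ≠ 0) {y : ℝ} (hK : IsCompact K)
    (hKc : Convex ℝ K) (hC : IsCompact C) (hC0 : volume C ≠ 0)
    (hCK : volume.real C ≤ volume.real K) (hy : 0 ≤ y)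
    (hyKC : (2 * (1 + y)) ^ n ≤ volume.real (unitVolume K + unitVolume C)) :
    √(volume.real K * volume.real C) *
        (1 + (volRatio K C - 1) ^ 2 / (32 * n * volRatio K C ^ 2) +
          n * y / volRatio K C ^ ((1 : ℝ) / n)) ≤
      volume.real ((2 : ℝ)⁻¹ • (K + C)) := by
  have : NeZero n := ⟨hn⟩
  rw [volRatio_eq_div_of_le (ENNReal.toReal_pos hC0 hC.measure_ne_top) hCK]
  simpa only [finrank_euclideanSpace_fin] using sqrt_volume_mul_le_volume_half_smul_add hK hKc hC
    hC0 hCK hy (by rwa [finrank_euclideanSpace_fin])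

end HomotheticDistance

/-- **Product form of the Figalli–Maggi–Pratelli stability version of the
Brunn–Minkowski inequality.** With `γ* = ((2 − 2^((n−1)/n))^(3/2) / (122·n⁷))²`
and `σ = σ(K,C)`, for any convex bodies `K` and `C` in `ℝⁿ`:
`|½(K+C)| ≥ √(|K|·|C|)·[1 + (σ−1)²/(32·n·σ²) + (n·γ*/σ^(1/n))·A(K,C)²]`. -/
theorem figalli_maggi_pratelli_product {n : ℕ} (hn : 1 ≤ n)
    (K C : Set (EuclideanSpace ℝ (Fin n)))
    (hKcomp : IsCompact K) (hKconv : Convex ℝ K) (hKint : (interior K).Nonempty)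
    (hCcomp : IsCompact C) (hCconv : Convex ℝ C) (hCint : (interior C).Nonempty) :
    Real.sqrt ((volume K).toReal * (volume C).toReal) *
        (1 + (volRatio K C - 1) ^ 2 / (32 * (n:ℝ) * volRatio K C ^ 2) +
          (n:ℝ) * ((2 - (2:ℝ) ^ (((n:ℝ) - 1)/(n:ℝ))) ^ ((3:ℝ)/2) / (122 * (n:ℝ)^7)) ^ 2 /
            (volRatio K C) ^ ((1:ℝ)/(n:ℝ)) * homDist K C ^ 2) ≤
      (volume ((2:ℝ)⁻¹ • (K + C))).toReal := by
  have hn0 : n ≠ 0 := Nat.one_le_iff_ne_zero.1 hn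
  have hK0 := (Measure.measure_pos_of_nonempty_interior volume hKint).ne'
  have hC0 := (Measure.measure_pos_of_nonempty_interior volume hCint).ne'
  change √(volume.real K * volume.real C) *
    (1 + _ + n * stabilityConst n / _ * _) ≤ volume.real ((2 : ℝ)⁻¹ • (K + C))
  have hγA : 0 ≤ stabilityConst n * homDist K C ^ 2 := mul_nonneg (sq_nonneg _) (sq_nonneg _)
  have hsum := stabilityConst_mul_homDist_sq_le_volume_add hn0 hKcomp hKconv hCcomp hCconv hK0 hC0
  rw [div_mul_eq_mul_div, mul_assoc (n : ℝ)]
  rcases le_total (volume.real C) (volume.real K) with hCK | hKC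
  · exact sqrt_volume_mul_le_of_volume_le hn0 hKcomp hKconv hCcomp hC0 hCK hγA hsum
  · rw [volRatio_comm, mul_comm (volume.real K), add_comm K]
    rw [add_comm (unitVolume K)] at hsum
    exact sqrt_volume_mul_le_of_volume_le hn0 hCcomp hCconv hKcomp hK0 hKC hγA hsum
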